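/- arXiv:0907.4216 — 3 statements merged into one kernel-verified Lean document; each statement's English description precedes it below -/
import Mathlib

section
/- Lemma (Meyer-type square function estimate, part (a)): Let 0 < p1,p2,p3 < ∞ with 1/p1+1/p2+1/p3 = 1, let D̃ ⊆ Γ be measurable, and suppose there is a constant C with |Λ_{D̃}(f1,f2,f3)| ≤ C ‖f1‖_{L^{p1}} ‖f2‖_{L^{p2}} ‖f3‖_{L^{p3}} for all Schwartz f1,f2,f3 on ℝ². Let ξ⃗¹,…,ξ⃗^N ∈ ∂D̃ and v⃗¹,…,v⃗^N ∈ Γ be such that each v⃗ⁿ is normal to ∂D̃ at ξ⃗ⁿ in the blow-up sense. Then there is a constant C′ depending only on C and (p1,p2,p3) (not on N nor on the ξ⃗ⁿ, v⃗ⁿ) such that Σ_{n=1}^N |Λ̃_{v⃗ⁿ}(f1ⁿ,f2ⁿ,f3ⁿ)| ≤ C′ ∏_{j=1}^3 ‖(Σ_{n=1}^N |f_jⁿ|²)^{1/2}‖_{L^{p_j}} for all bounded compactly supported measurable functions f_jⁿ (1 ≤ j ≤ 3, 1 ≤ n ≤ N) on ℝ² for which each principal-value limit defining Λ̃_{v⃗ⁿ}(f1ⁿ,f2ⁿ,f3ⁿ)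 exists. -/
open MeasureTheory Filter Topology Set

noncomputable section

abbrev V2 : Type := ℝ × ℝ
abbrev Amb : Type := V2 × V2 × V2

def dot2 (x y : V2) : ℝ := x.1 * y.1 + x.2 * y.2

def dot6 (x y : Amb) : ℝ := dot2 x.1 y.1 + dot2 x.2.1 y.2.1 + dot2 x.2.2 y.2.2

def Gamma : Set Amb := {x | x.1 + x.2.1 + x.2.2 = 0}

def Phi (x : V2 × V2) : Amb := (x.1, x.2, -(x.1 + x.2))

def FT (f : V2 → ℂ) (ξ : V2) : ℂ :=
  ∫ x : V2, Complex.exp (-(2 * Real.pi * dot2 x ξ) * Complex.I) * f x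

def LambdaIntegrand (Dt : Set Amb) (f1 f2 f3 : V2 → ℂ) (ξ : V2 × V2) : ℂ :=
  Set.indicator Dt (fun _ => (1 : ℂ)) (Phi ξ) *
    (FT f1 ξ.1 * (FT f2 ξ.2 * FT f3 (-(ξ.1 + ξ.2))))

def Lambda (Dt : Set Amb) (f1 f2 f3 : V2 → ℂ) : ℂ :=
  ∫ ξ : V2 × V2, LambdaIntegrand Dt f1 f2 f3 ξ

def OfType (Lam : (V2 → ℂ) → (V2 → ℂ) → (V2 → ℂ) → ℂ) (p1 p2 p3 : ℝ) : Prop :=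
  ∃ C : ℝ, ∀ f1 f2 f3 : SchwartzMap V2 ℂ,
    ENNReal.ofReal ‖Lam ⇑f1 ⇑f2 ⇑f3‖ ≤ ENNReal.ofReal C *
      (eLpNorm (⇑f1) (ENNReal.ofReal p1) volume *
        (eLpNorm (⇑f2) (ENNReal.ofReal p2) volume *
          eLpNorm (⇑f3) (ENNReal.ofReal p3) volume))

def bdry (Dt : Set Amb) : Set Amb := Phi '' frontier (Phi ⁻¹' Dt)

def comp3 (x : Amb) : Fin 3 → V2 := ![x.1, x.2.1, x.2.2]

def IsSmoothHypersurface (M : Set (V2 × V2)) : Prop :=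
  ∀ p ∈ M, ∃ (W : Set (V2 × V2)) (g : V2 × V2 → ℝ),
    IsOpen W ∧ p ∈ W ∧ ContDiffOn ℝ (⊤ : ℕ∞) g W ∧
    (∀ x ∈ W, fderiv ℝ g x ≠ 0) ∧ M ∩ W = {x ∈ W | g x = 0}

def SliceCurvature (Dt : Set Amb) (j : Fin 3) : Prop :=
  ∃ U : Set Amb, U ⊆ Gamma ∧ IsOpen (Phi ⁻¹' U) ∧
    IsSmoothHypersurface (Phi ⁻¹' (bdry Dt ∩ U)) ∧
    IsConnected (Phi ⁻¹' (bdry Dt ∩ U)) ∧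
    ∃ (ξ0 : V2) (γ : ℝ → Amb) (t0 ε : ℝ), 0 < ε ∧
      ContDiffOn ℝ 2 γ (Set.Ioo (t0 - ε) (t0 + ε)) ∧
      (∀ t ∈ Set.Ioo (t0 - ε) (t0 + ε), γ t ∈ bdry Dt ∩ U ∧ comp3 (γ t) j = ξ0) ∧
      (∀ t ∈ Set.Ioo (t0 - ε) (t0 + ε), deriv γ t ≠ 0) ∧
      LinearIndependent ℝ ![deriv γ t0, deriv (deriv γ) t0]

def Pv (v : Amb) : Set Amb := {ξ | ξ ∈ Gamma ∧ 0 < dot6 ξ v}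

def blowSet (Dt : Set Amb) (ξ : Amb) (r : ℝ) : Set Amb := (fun y => r • (y - ξ)) '' Dt

def BlowupNormal (Dt : Set Amb) (ξ v : Amb) : Prop :=
  ∀ᵐ x : V2 × V2, Filter.Tendsto
    (fun r : ℝ => Set.indicator (blowSet Dt ξ r) (fun _ => (1 : ℝ)) (Phi x))
    Filter.atTop (𝓝 (Set.indicator (Pv v) (fun _ => (1 : ℝ)) (Phi x)))

def truncPV (v : Amb) (f1 f2 f3 : V2 → ℂ) (δ : ℝ) : ℂ :=
  ∫ t in {t : ℝ | δ < |t| ∧ |t| < δ⁻¹},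
    (∫ x : V2, f1 (x - t • v.1) * (f2 (x - t • v.2.1) * f3 (x - t • v.2.2))) / (t : ℂ)

def HasPV (v : Amb) (f1 f2 f3 : V2 → ℂ) (L : ℂ) : Prop :=
  Filter.Tendsto (truncPV v f1 f2 f3) (𝓝[>] (0 : ℝ)) (𝓝 L)

/-- The character `s ↦ e^{2πis}`. -/
def chr (s : ℝ) : ℂ := Complex.exp ((2 * Real.pi * s : ℝ) * Complex.I)

lemma chr_add (s t : ℝ) : chr (s + t) = chr s * chr t := by
  simp only [chr, ← Complex.exp_add]; congr 1; push_cast; ring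

lemma chr_zero : chr 0 = 1 := by simp [chr]

@[simp] lemma norm_chr (s : ℝ) : ‖chr s‖ = 1 := Complex.norm_exp_ofReal_mul_I _

@[fun_prop] lemma continuous_chr : Continuous chr := by unfold chr; fun_prop

lemma fourierChar_smul_eq_chr_mul (s : ℝ) (z : ℂ) : Real.fourierChar s • z = chr s * z := by
  rw [Circle.smul_def, Real.fourierChar_apply, smul_eq_mul, chr]

@[fun_prop] lemma continuous_dot2 {X : Type*} [TopologicalSpace X] {f g : X → V2}
    (hf : Continuous f) (hg : Continuous g) : Continuous fun x => dot2 (f x) (g x) := by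
  unfold dot2; fun_prop

lemma dot2_neg_right (x y : V2) : dot2 x (-y) = -dot2 x y := by
  simp [dot2]; ring

lemma dot2_sub_right (x y z : V2) : dot2 x (y - z) = dot2 x y - dot2 x z := by
  simp [dot2]; ring

lemma dot2_smul_left (c : ℝ) (x y : V2) : dot2 (c • x) y = c * dot2 x y := by
  simp [dot2]; ring

lemma dot2_smul_right (c : ℝ) (x y : V2) : dot2 x (c • y) = c * dot2 x y := by
  simp [dot2]; ring

lemma dot2_comm (x y : V2) : dot2 x y = dot2 y x := by
  simp [dot2]; ring

lemma FT_eq_integral_chr (f : V2 → ℂ) (ξ : V2) :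
    FT f ξ = ∫ x, chr (-dot2 x ξ) * f x := by
  unfold FT chr
  congr 1; ext x; congr 2; push_cast; ring

lemma integral_comp_equivRealProd {E : Type*} [NormedAddCommGroup E] [NormedSpace ℝ E]
    (f : V2 → E) : ∫ z : ℂ, f (Complex.equivRealProdCLM z) = ∫ x, f x := by
  exact Complex.volume_preserving_equiv_real_prod.integral_comp
    (Complex.measurableEquivRealProd.measurableEmbedding) f

lemma inner_eq_dot2 (z w : ℂ) :
    inner ℝ z w = dot2 (Complex.equivRealProdCLM z) (Complex.equivRealProdCLM w) := by
  rw [Complex.inner]; simp [dot2]; ring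

/-- A Schwartz function on the plane, regarded as a Schwartz function on `ℂ`. -/
def toComplexSchwartz (g : SchwartzMap V2 ℂ) : SchwartzMap ℂ ℂ :=
  SchwartzMap.compCLMOfContinuousLinearEquiv ℂ Complex.equivRealProdCLM g

/-- The Fourier transform `FT` as a map on Schwartz functions. -/
def schwartzFT (g : SchwartzMap V2 ℂ) : SchwartzMap V2 ℂ :=
  SchwartzMap.compCLMOfContinuousLinearEquiv ℂ Complex.equivRealProdCLM.symm
    (FourierTransform.fourier (toComplexSchwartz g))

lemma fourier_toComplexSchwartz (g : SchwartzMap V2 ℂ) (z : ℂ) :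
    FourierTransform.fourier (toComplexSchwartz g) z = FT g (Complex.equivRealProdCLM z) := by
  rw [SchwartzMap.fourier_coe, Real.fourier_eq, FT_eq_integral_chr, ← integral_comp_equivRealProd]
  congr 1; ext w
  rw [fourierChar_smul_eq_chr_mul, inner_eq_dot2]; rfl

lemma schwartzFT_apply (g : SchwartzMap V2 ℂ) (ξ : V2) : schwartzFT g ξ = FT g ξ := by
  have := fourier_toComplexSchwartz g (Complex.equivRealProdCLM.symm ξ)
  rw [ContinuousLinearEquiv.apply_symm_apply] at this
  exact this

lemma FT_integrable (g : SchwartzMap V2 ℂ) : Integrable (FT g) := by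
  have := (schwartzFT g).integrable (μ := volume)
  exact this.congr (Eventually.of_forall (schwartzFT_apply g))

lemma FT_continuous (g : SchwartzMap V2 ℂ) : Continuous (FT g) := by
  have := (schwartzFT g).continuous
  exact (funext (schwartzFT_apply g)) ▸ this

lemma FT_inversion (g : SchwartzMap V2 ℂ) (x : V2) :
    g x = ∫ ξ, chr (dot2 x ξ) * FT g ξ := by
  have h : FourierTransformInv.fourierInv (FourierTransform.fourier (toComplexSchwartz g)) =
    toComplexSchwartz g := FourierTransform.fourierInv_fourier_eq _
  have h2 := DFunLike.congr_fun h (Complex.equivRealProdCLM.symm x)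
  rw [SchwartzMap.fourierInv_coe, Real.fourierInv_eq] at h2
  have h3 : toComplexSchwartz g (Complex.equivRealProdCLM.symm x) = g x := by
    simp [toComplexSchwartz]
  rw [h3] at h2
  rw [← h2, ← integral_comp_equivRealProd]
  congr 1; ext w
  rw [fourierChar_smul_eq_chr_mul, inner_eq_dot2, fourier_toComplexSchwartz, dot2_comm,
    ContinuousLinearEquiv.apply_symm_apply]

lemma FT_norm_le (g : SchwartzMap V2 ℂ) (ξ : V2) : ‖FT g ξ‖ ≤ ∫ x, ‖g x‖ := by
  rw [FT_eq_integral_chr]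
  refine (norm_integral_le_integral_norm _).trans (le_of_eq ?_)
  simp

/-- The frequency-side product of three functions, as a function on `ℝ² × ℝ²`. -/
def freqProd (g1 g2 g3 : V2 → ℂ) (ξ : V2 × V2) : ℂ :=
  FT g1 ξ.1 * (FT g2 ξ.2 * FT g3 (-(ξ.1 + ξ.2)))

lemma freqProd_continuous (g1 g2 g3 : SchwartzMap V2 ℂ) : Continuous (freqProd g1 g2 g3) := by
  have h1 := FT_continuous g1
  have h2 := FT_continuous g2
  have h3 := FT_continuous g3
  unfold freqProd
  fun_prop

lemma freqProd_integrable (g1 g2 g3 : SchwartzMap V2 ℂ) : Integrable (freqProd g1 g2 g3) := by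
  have h := ((FT_integrable g1).mul_prod (FT_integrable g2)).mul_const
    ((∫ x, ‖g3 x‖ : ℝ) : ℂ)
  refine h.mono (freqProd_continuous g1 g2 g3).aestronglyMeasurable
    (Eventually.of_forall fun ξ => ?_)
  simp only [freqProd, norm_mul, ← mul_assoc]
  gcongr
  rw [Complex.norm_real]
  exact (FT_norm_le _ _).trans (le_abs_self _)

/-- The trilinear correlation `t ↦ ∫ f1(x - t v1) f2(x - t v2) f3(x - t v3) dx`. -/
def corr (v : Amb) (f1 f2 f3 : V2 → ℂ) (t : ℝ) : ℂ :=
  ∫ x : V2, f1 (x - t • v.1) * (f2 (x - t • v.2.1) * f3 (x - t • v.2.2))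

lemma corr_eq_integral_freqProd (v : Amb) (g1 g2 g3 : SchwartzMap V2 ℂ) (t : ℝ) :
    corr v g1 g2 g3 t = ∫ ξ, chr (-(t * dot6 (Phi ξ) v)) * freqProd g1 g2 g3 ξ := by
  set H : V2 → V2 × V2 → ℂ := fun x ξ =>
    (chr (dot2 (x - t • v.1) ξ.1) * FT g1 ξ.1) * (chr (dot2 (x - t • v.2.1) ξ.2) * FT g2 ξ.2)
      * g3 (x - t • v.2.2) with hH
  have c1 := FT_continuous g1
  have c2 := FT_continuous g2
  have c3 := g3.continuous
  have hint : Integrable (Function.uncurry H) := by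
    have h := (g3.integrable (μ := volume)).comp_sub_right (t • v.2.2)
    have h := h.mul_prod ((FT_integrable g1).mul_prod (FT_integrable g2))
    refine h.mono ?_ (Eventually.of_forall fun ξ => ?_)
    · refine Continuous.aestronglyMeasurable ?_
      simp only [hH, Function.uncurry_def]
      fun_prop
    · simp only [hH, Function.uncurry_def, norm_mul, norm_chr]
      apply le_of_eq; ring
  have h1 : corr v g1 g2 g3 t = ∫ x, ∫ ξ, H x ξ := by
    unfold corr
    congr 1; ext x
    rw [integral_mul_const, Measure.volume_eq_prod,
      integral_prod_mul (f := fun ξ => chr (dot2 (x - t • v.1) ξ) * FT g1 ξ)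
        (g := fun ξ => chr (dot2 (x - t • v.2.1) ξ) * FT g2 ξ), ← FT_inversion, ← FT_inversion,
        mul_assoc]
  rw [h1, integral_integral_swap hint]
  congr 1; ext ξ
  have h3 : FT g3 (-(ξ.1 + ξ.2)) =
      ∫ x, chr (dot2 (x - t • v.2.2) (ξ.1 + ξ.2)) * g3 (x - t • v.2.2) := by
    rw [FT_eq_integral_chr, ← integral_sub_right_eq_self _ (t • v.2.2)]
    congr 1; ext x
    rw [dot2_neg_right, neg_neg]
  unfold freqProd
  rw [h3]
  simp only [← integral_const_mul]
  congr 1; ext x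
  have : chr (-(t * dot6 (Phi ξ) v)) * chr (dot2 (x - t • v.2.2) (ξ.1 + ξ.2)) =
      chr (dot2 (x - t • v.1) ξ.1) * chr (dot2 (x - t • v.2.1) ξ.2) := by
    rw [← chr_add, ← chr_add]; congr 1
    simp [dot6, dot2, Phi]; ring
  simp only [hH]
  linear_combination (- FT g1 ξ.1 * FT g2 ξ.2 * g3 (x - t • v.2.2)) * this
/-- A sign `±1` as a real number. -/
def sgnR (s : ℤˣ) : ℝ := ((s : ℤ) : ℝ)

lemma sgnR_mul (s t : ℤˣ) : sgnR (s * t) = sgnR s * sgnR t := by simp [sgnR]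

lemma sgnR_mul_self (s : ℤˣ) : sgnR s * sgnR s = 1 := by
  rw [← sgnR_mul, Int.units_mul_self]; simp [sgnR]

lemma sum_exp_signs_le {N : ℕ} (a : Fin N → ℝ) :
    ∑ ε : Fin N → ℤˣ, Real.exp (∑ n, sgnR (ε n) * a n) ≤
      2 ^ N * Real.exp ((∑ n, a n ^ 2) / 2) := by
  have h : ∑ ε : Fin N → ℤˣ, Real.exp (∑ n, sgnR (ε n) * a n) =
      ∏ n, ∑ s : ℤˣ, Real.exp (sgnR s * a n) := by
    rw [Finset.prod_univ_sum, Fintype.piFinset_univ]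
    exact Finset.sum_congr rfl fun ε _ => Real.exp_sum _ _
  have h0 : (2 : ℝ) ^ N = ∏ _n : Fin N, 2 := by simp
  rw [h, Finset.sum_div, Real.exp_sum, h0, ← Finset.prod_mul_distrib]
  refine Finset.prod_le_prod (fun n _ => Finset.sum_nonneg fun s _ => (Real.exp_pos _).le)
    fun n _ => ?_
  have h2 : ∑ s : ℤˣ, Real.exp (sgnR s * a n) = 2 * Real.cosh (a n) := by
    rw [UnitsInt.univ, Finset.sum_pair (by decide), Real.cosh_eq]
    simp [sgnR]; ring
  rw [h2]
  gcongr
  exact Real.cosh_le_exp_half_sq _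

lemma rpow_le_mul_exp {p : ℝ} (hp : 0 < p) {x : ℝ} (hx : 0 ≤ x) :
    x ^ p ≤ p ^ p * Real.exp x := by
  have h1 : x / p ≤ Real.exp (x / p) := by linarith [Real.add_one_le_exp (x / p)]
  have h2 := Real.rpow_le_rpow (by positivity) h1 hp.le
  rw [← Real.exp_mul, div_mul_cancel₀ _ hp.ne', Real.div_rpow hx hp.le,
    div_le_iff₀ (by positivity)] at h2
  linarith

lemma exp_norm_le_sum (z : ℂ) :
    Real.exp ‖z‖ ≤ Real.exp (2 * z.re) + Real.exp (-2 * z.re) +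
      (Real.exp (2 * z.im) + Real.exp (-2 * z.im)) := by
  have habs : ∀ y : ℝ, Real.exp (2 * |y|) ≤ Real.exp (2 * y) + Real.exp (-2 * y) := fun y => by
    have h1 := Real.exp_pos (2 * y)
    have h2 := Real.exp_pos (-2 * y)
    rcases abs_cases y with h | h <;> rw [h.1]
    · linarith
    · rw [mul_neg, ← neg_mul]; linarith
  have h1 : Real.exp ‖z‖ ≤ Real.exp (|z.re|) * Real.exp (|z.im|) := by
    rw [← Real.exp_add]; exact Real.exp_le_exp.2 (Complex.norm_le_abs_re_add_abs_im z)
  have h2 : ∀ y : ℝ, Real.exp (2 * y) = Real.exp y ^ 2 := fun y => by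
    rw [sq, ← Real.exp_add]; ring_nf
  have h3 := habs z.re
  have h4 := habs z.im
  rw [h2] at h3 h4
  nlinarith [sq_nonneg (Real.exp |z.re| - Real.exp |z.im|), sq_nonneg (Real.exp |z.re|),
    sq_nonneg (Real.exp |z.im|)]

/-- The constant in the Khinchin inequality below. -/
def khinchinConst (p : ℝ) : ℝ := p ^ p * (4 * Real.exp 2)

lemma khinchinConst_nonneg {p : ℝ} (hp : 0 < p) : 0 ≤ khinchinConst p := by
  unfold khinchinConst; positivity

lemma khinchin_of_sum_sq_le_one {p : ℝ} (hp : 0 < p) {N : ℕ} (z : Fin N → ℂ)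
    (hz : ∑ n, ‖z n‖ ^ 2 ≤ 1) :
    ∑ ε : Fin N → ℤˣ, ‖∑ n, (sgnR (ε n) : ℂ) * z n‖ ^ p ≤ 2 ^ N * khinchinConst p := by
  have key : ∀ (c : ℝ) (a : Fin N → ℝ), c ^ 2 = 4 → (∀ n, a n ^ 2 ≤ ‖z n‖ ^ 2) →
      ∑ ε : Fin N → ℤˣ, Real.exp (c * ∑ n, sgnR (ε n) * a n) ≤ 2 ^ N * Real.exp 2 := by
    intro c a hc ha
    have h := sum_exp_signs_le (fun n => c * a n)
    simp only [mul_pow, hc, ← Finset.mul_sum, mul_left_comm _ c] at h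
    refine h.trans ?_
    gcongr
    have := (Finset.sum_le_sum fun n (_ : n ∈ Finset.univ) => ha n).trans hz
    linarith
  have hre : ∀ n, (z n).re ^ 2 ≤ ‖z n‖ ^ 2 := fun n => by
    rw [← Complex.normSq_eq_norm_sq, Complex.normSq_apply]; nlinarith [mul_self_nonneg (z n).im]
  have him : ∀ n, (z n).im ^ 2 ≤ ‖z n‖ ^ 2 := fun n => by
    rw [← Complex.normSq_eq_norm_sq, Complex.normSq_apply]; nlinarith [mul_self_nonneg (z n).re]
  calc ∑ ε : Fin N → ℤˣ, ‖∑ n, (sgnR (ε n) : ℂ) * z n‖ ^ p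
      ≤ ∑ ε : Fin N → ℤˣ, p ^ p *
        (Real.exp (2 * ∑ n, sgnR (ε n) * (z n).re) + Real.exp (-2 * ∑ n, sgnR (ε n) * (z n).re) +
          (Real.exp (2 * ∑ n, sgnR (ε n) * (z n).im) +
            Real.exp (-2 * ∑ n, sgnR (ε n) * (z n).im))) := by
        refine Finset.sum_le_sum fun ε _ => (rpow_le_mul_exp hp (norm_nonneg _)).trans ?_
        gcongr
        have h := exp_norm_le_sum (∑ n, (sgnR (ε n) : ℂ) * z n)
        simpa only [Complex.re_sum, Complex.im_sum, Complex.re_ofReal_mul,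
          Complex.im_ofReal_mul] using h
    _ ≤ 2 ^ N * khinchinConst p := by
        rw [← Finset.mul_sum, Finset.sum_add_distrib, Finset.sum_add_distrib,
          Finset.sum_add_distrib, khinchinConst]
        have h1 := key 2 _ (by norm_num) hre
        have h2 := key (-2) _ (by norm_num) hre
        have h3 := key 2 _ (by norm_num) him
        have h4 := key (-2) _ (by norm_num) him
        have : (0 : ℝ) < p ^ p := by positivity
        nlinarith

/-- **Khinchin's inequality** (upper bound) for complex coefficients. -/
lemma khinchin {p : ℝ} (hp : 0 < p) {N : ℕ} (z : Fin N → ℂ) :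
    ∑ ε : Fin N → ℤˣ, ‖∑ n, (sgnR (ε n) : ℂ) * z n‖ ^ p ≤
      2 ^ N * khinchinConst p * Real.sqrt (∑ n, ‖z n‖ ^ 2) ^ p := by
  set σ := Real.sqrt (∑ n, ‖z n‖ ^ 2) with hσ
  have hnn : 0 ≤ ∑ n, ‖z n‖ ^ 2 := Finset.sum_nonneg fun n _ => by positivity
  have hσ2 : σ ^ 2 = ∑ n, ‖z n‖ ^ 2 := Real.sq_sqrt hnn
  rcases (Real.sqrt_nonneg (∑ n, ‖z n‖ ^ 2)).eq_or_lt with h0 | h0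
  · have hz : ∀ n, z n = 0 := fun n => by
      have : ∑ n, ‖z n‖ ^ 2 = 0 := by rw [← hσ2, hσ, ← h0]; norm_num
      have := (Finset.sum_eq_zero_iff_of_nonneg fun n _ => by positivity).1 this n
        (Finset.mem_univ _)
      simpa using this
    simp [hz, Real.zero_rpow hp.ne']
    have := khinchinConst_nonneg hp
    positivity
  · rw [← hσ] at h0
    have h1 := khinchin_of_sum_sq_le_one hp (fun n => z n / (σ : ℂ)) (by
      simp only [norm_div, Complex.norm_real, div_pow, Real.norm_eq_abs, sq_abs]
      rw [← Finset.sum_div, hσ2, div_self (by rw [← hσ2]; positivity)])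
    have h2 : ∀ ε : Fin N → ℤˣ, ‖∑ n, (sgnR (ε n) : ℂ) * (z n / (σ : ℂ))‖ ^ p =
        ‖∑ n, (sgnR (ε n) : ℂ) * z n‖ ^ p / σ ^ p := fun ε => by
      simp only [mul_div_assoc']
      rw [← Finset.sum_div, norm_div, Complex.norm_real, Real.norm_of_nonneg h0.le,
        Real.div_rpow (norm_nonneg _) h0.le]
    simp only [h2] at h1
    rw [← Finset.sum_div, div_le_iff₀ (by positivity)] at h1
    exact h1

lemma sum_signs_mul {N : ℕ} (n m : Fin N) :
    ∑ ε : Fin N → ℤˣ, sgnR (ε n) * sgnR (ε m) = if n = m then 2 ^ N else 0 := by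
  split_ifs with h
  · subst h
    simp [sgnR_mul_self]
  · set τ : Fin N → ℤˣ := Function.update 1 n (-1) with hτ
    have h1 := Equiv.sum_comp (Equiv.mulRight τ) (fun ε : Fin N → ℤˣ => sgnR (ε n) * sgnR (ε m))
    have h2 : ∀ ε : Fin N → ℤˣ, sgnR ((Equiv.mulRight τ ε) n) * sgnR ((Equiv.mulRight τ ε) m) =
        -(sgnR (ε n) * sgnR (ε m)) := fun ε => by
      simp [hτ, Function.update_of_ne (Ne.symm h), sgnR]
    simp only [h2, Finset.sum_neg_distrib] at h1
    linarith
/-- The pointwise `ℓ²` norm of a finite family of functions. -/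
def sqFun {N : ℕ} (f : Fin N → V2 → ℂ) (x : V2) : ℝ := Real.sqrt (∑ n, ‖f n x‖ ^ 2)

lemma sqFun_nonneg {N : ℕ} (f : Fin N → V2 → ℂ) (x : V2) : 0 ≤ sqFun f x := Real.sqrt_nonneg _

lemma sum_prod_rpow_le {Ω : Type*} [Fintype Ω] (X : Fin 3 → Ω → ENNReal) (q : Fin 3 → ℝ)
    (hq : ∀ j, 0 ≤ q j) (hsum : ∑ j, q j = 1) :
    ∑ ω, ∏ j, X j ω ^ q j ≤ ∏ j, (∑ ω, X j ω) ^ q j := by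
  let _ : MeasurableSpace Ω := ⊤
  have h := ENNReal.lintegral_prod_norm_pow_le (μ := Measure.count (α := Ω)) Finset.univ
    (f := X) (p := q) (fun j _ => measurable_from_top.aemeasurable) hsum (fun j _ => hq j)
  simpa [lintegral_count, tsum_fintype] using h

lemma eLpNorm_ofReal_eq {E : Type*} [NormedAddCommGroup E] {p : ℝ} (hp : 0 < p) (f : V2 → E) :
    eLpNorm f (ENNReal.ofReal p) volume = (∫⁻ x, ‖f x‖ₑ ^ p) ^ p⁻¹ := by
  rw [eLpNorm_eq_lintegral_rpow_enorm_toReal (by simpa using hp) ENNReal.ofReal_ne_top,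
    ENNReal.toReal_ofReal hp.le, one_div]

lemma sum_lintegral_signs_le {p : ℝ} (hp : 0 < p) {N : ℕ} {Ω : Type*} [Fintype Ω]
    (σ : Ω → Fin N → ℤˣ)
    (hσ : ∀ φ : (Fin N → ℤˣ) → ℝ, ∑ ω, φ (σ ω) = 2 ^ N * ∑ ε, φ ε)
    (f : Fin N → V2 → ℂ) (hf : ∀ n, Measurable (f n)) (c : Fin N → ℂ) (hc : ∀ n, ‖c n‖ ≤ 1) :
    ∑ ω, ∫⁻ x, ‖∑ n, (sgnR (σ ω n) : ℂ) * (c n * f n x)‖ₑ ^ p ≤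
      4 ^ N * ENNReal.ofReal (khinchinConst p) * ∫⁻ x, ‖sqFun f x‖ₑ ^ p := by
  rw [← lintegral_finsetSum _ (fun ω _ => by fun_prop), ← lintegral_const_mul' _ _
    (ENNReal.mul_ne_top (by simp) ENNReal.ofReal_ne_top)]
  refine lintegral_mono fun x => ?_
  have hK := khinchinConst_nonneg hp
  have h1 : ∑ ω, ‖∑ n, (sgnR (σ ω n) : ℂ) * (c n * f n x)‖ ^ p ≤
      4 ^ N * khinchinConst p * sqFun f x ^ p := by
    rw [hσ (fun ε => ‖∑ n, (sgnR (ε n) : ℂ) * (c n * f n x)‖ ^ p)]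
    have h2 := khinchin hp (fun n => c n * f n x)
    have h3 : Real.sqrt (∑ n, ‖c n * f n x‖ ^ 2) ^ p ≤ sqFun f x ^ p := by
      refine Real.rpow_le_rpow (Real.sqrt_nonneg _) (Real.sqrt_le_sqrt ?_) hp.le
      refine Finset.sum_le_sum fun n _ => ?_
      rw [norm_mul]
      gcongr
      exact mul_le_of_le_one_left (norm_nonneg _) (hc n)
    calc _ ≤ 2 ^ N * (2 ^ N * khinchinConst p * sqFun f x ^ p) := by
          gcongr; exact h2.trans (by gcongr)
      _ = _ := by rw [show (4 : ℝ) = 2 * 2 by norm_num, mul_pow]; ring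
  have h4 := ENNReal.ofReal_le_ofReal h1
  rw [ENNReal.ofReal_sum_of_nonneg (fun ω _ => by positivity), ENNReal.ofReal_mul (by positivity),
    ENNReal.ofReal_mul (by positivity), ENNReal.ofReal_pow (by norm_num)] at h4
  simp only [← ENNReal.ofReal_rpow_of_nonneg (norm_nonneg _) hp.le,
    ← ENNReal.ofReal_rpow_of_nonneg (sqFun_nonneg f x) hp.le, ofReal_norm] at h4
  rw [Real.enorm_of_nonneg (sqFun_nonneg f x)]
  simpa using h4

lemma measurable_Phi : Measurable Phi := by unfold Phi; fun_prop

lemma FT_sum_smul {N : ℕ} (a : Fin N → ℂ) (h : Fin N → SchwartzMap V2 ℂ) (ξ : V2) :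
    FT (⇑(∑ n, a n • h n)) ξ = ∑ n, a n * FT (h n) ξ := by
  have h0 : ⇑(∑ n, a n • h n) = fun x => ∑ n, a n * h n x := by
    ext x; simp 
  rw [h0, FT_eq_integral_chr]
  simp only [Finset.mul_sum, FT_eq_integral_chr, ← integral_const_mul]
  rw [integral_finsetSum]
  · refine Finset.sum_congr rfl fun n _ => ?_
    congr 1; ext x; ring
  · intro n _
    refine (((h n).integrable (μ := volume)).const_mul (a n)).mono ?_ ?_
    · have := (h n).continuous
      exact Continuous.aestronglyMeasurable (by fun_prop)
    · exact Eventually.of_forall fun x => by simp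

lemma indicator_mul_integrable {s : Set (V2 × V2)} (hs : MeasurableSet s) {G : V2 × V2 → ℂ}
    (hG : Integrable G) : Integrable fun ξ => s.indicator (fun _ => (1 : ℂ)) ξ * G ξ := by
  refine (hG.indicator hs).congr (Eventually.of_forall fun ξ => ?_)
  by_cases h : ξ ∈ s <;> simp [h]

lemma LambdaIntegrand_integrable {Dt : Set Amb} (hmeas : MeasurableSet Dt)
    (g1 g2 g3 : SchwartzMap V2 ℂ) : Integrable (LambdaIntegrand Dt g1 g2 g3) :=
  indicator_mul_integrable (measurable_Phi hmeas) (freqProd_integrable g1 g2 g3)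

lemma Lambda_sum_smul {Dt : Set Amb} (hmeas : MeasurableSet Dt) {N : ℕ} (a b c : Fin N → ℂ)
    (g1 g2 g3 : Fin N → SchwartzMap V2 ℂ) :
    Lambda Dt ⇑(∑ n, a n • g1 n) ⇑(∑ n, b n • g2 n) ⇑(∑ n, c n • g3 n) =
      ∑ n, ∑ m, ∑ k, a n * b m * c k * Lambda Dt (g1 n) (g2 m) (g3 k) := by
  have hI := fun n m k => (LambdaIntegrand_integrable hmeas (g1 n) (g2 m) (g3 k)).const_mul
    (a n * b m * c k)
  simp only [Lambda, ← integral_const_mul]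
  have h1 : LambdaIntegrand Dt ⇑(∑ n, a n • g1 n) ⇑(∑ n, b n • g2 n) ⇑(∑ n, c n • g3 n) =
      fun ξ => ∑ n, ∑ m, ∑ k, a n * b m * c k * LambdaIntegrand Dt (g1 n) (g2 m) (g3 k) ξ := by
    ext ξ
    simp only [LambdaIntegrand, FT_sum_smul]
    rw [Finset.sum_mul_sum, Finset.sum_mul, Finset.mul_sum]
    refine Finset.sum_congr rfl fun n _ => ?_
    simp only [Finset.mul_sum]
    refine Finset.sum_congr rfl fun m _ => Finset.sum_congr rfl fun k _ => by ring
  rw [h1, integral_finsetSum _ fun n _ => integrable_finsetSum _ fun m _ =>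
    integrable_finsetSum _ fun k _ => hI n m k]
  refine Finset.sum_congr rfl fun n _ => ?_
  rw [integral_finsetSum _ fun m _ => integrable_finsetSum _ fun k _ => hI n m k]
  refine Finset.sum_congr rfl fun m _ => ?_
  rw [integral_finsetSum _ fun k _ => hI n m k]

lemma sum_signs_trilinear {N : ℕ} (θ : Fin N → ℂ) (T : Fin N → Fin N → Fin N → ℂ) :
    ∑ ω : (Fin N → ℤˣ) × (Fin N → ℤˣ), ∑ n, ∑ m, ∑ k,
      ((sgnR (ω.1 n) : ℂ) * θ n) * (sgnR (ω.2 m) : ℂ) * (sgnR ((ω.1 * ω.2) k) : ℂ) * T n m k =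
    4 ^ N * ∑ n, θ n * T n n n := by
  have hs : ∀ n m : Fin N, ∑ ε : Fin N → ℤˣ, ((sgnR (ε n) : ℂ) * (sgnR (ε m) : ℂ)) =
      if n = m then 2 ^ N else 0 := fun n m => by
    have := congrArg (fun r : ℝ => (r : ℂ)) (sum_signs_mul n m)
    push_cast at this
    rw [this]
    split_ifs <;> simp
  have h1 : ∀ n m k, ∑ ω : (Fin N → ℤˣ) × (Fin N → ℤˣ), ((sgnR (ω.1 n) : ℂ) * θ n) *
      (sgnR (ω.2 m) : ℂ) * (sgnR ((ω.1 * ω.2) k) : ℂ) * T n m k =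
      (if n = k then 2 ^ N else 0) * (if m = k then 2 ^ N else 0) * (θ n * T n m k) := by
    intro n m k
    rw [← hs, ← hs, Finset.sum_mul_sum, Fintype.sum_prod_type, Finset.sum_mul]
    refine Finset.sum_congr rfl fun ε _ => ?_
    rw [Finset.sum_mul]
    refine Finset.sum_congr rfl fun ε' _ => ?_
    simp only [Pi.mul_apply, sgnR_mul]
    push_cast; ring
  rw [Finset.sum_comm, Finset.mul_sum]
  refine Finset.sum_congr rfl fun n _ => ?_
  rw [Finset.sum_comm]
  simp_rw [Finset.sum_comm (s := Finset.univ (α := (Fin N → ℤˣ) × (Fin N → ℤˣ))), h1]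
  simp only [mul_ite, ite_mul, zero_mul, mul_zero, Finset.sum_ite_eq, Finset.mem_univ, if_true]
  rw [show (4 : ℂ) = 2 * 2 by norm_num, mul_pow]

/-- The constant in the randomized estimate. -/
def meyerConst (p : Fin 3 → ℝ) : ℝ := ∏ j, khinchinConst (p j) ^ (p j)⁻¹

lemma exists_norm_le_one_mul_eq_norm (z : ℂ) : ∃ θ : ℂ, ‖θ‖ ≤ 1 ∧ θ * z = ‖z‖ := by
  by_cases h : z = 0
  · exact ⟨0, by simp, by simp [h]⟩
  · have h' : (‖z‖ : ℂ) ≠ 0 := by simpa using h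
    refine ⟨‖z‖ / z, by simp [h], by field_simp⟩

lemma sum_norm_Lambda_le (p : Fin 3 → ℝ) (hp : ∀ k, 0 < p k)
    (hsum : (p 0)⁻¹ + (p 1)⁻¹ + (p 2)⁻¹ = 1)
    (Dt : Set Amb) (hmeas : MeasurableSet Dt) (C : ℝ)
    (hC : ∀ f1 f2 f3 : SchwartzMap V2 ℂ,
      ENNReal.ofReal ‖Lambda Dt ⇑f1 ⇑f2 ⇑f3‖ ≤ ENNReal.ofReal C *
        (eLpNorm (⇑f1) (ENNReal.ofReal (p 0)) volume *
          (eLpNorm (⇑f2) (ENNReal.ofReal (p 1)) volume *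
            eLpNorm (⇑f3) (ENNReal.ofReal (p 2)) volume)))
    {N : ℕ} (g : Fin 3 → Fin N → SchwartzMap V2 ℂ) :
    ENNReal.ofReal (∑ n, ‖Lambda Dt (g 0 n) (g 1 n) (g 2 n)‖) ≤
      ENNReal.ofReal C * ENNReal.ofReal (meyerConst p) *
        ∏ j, eLpNorm (sqFun fun n => ⇑(g j n)) (ENNReal.ofReal (p j)) volume := by
  choose θ hθ1 hθ2 using fun n =>
    exists_norm_le_one_mul_eq_norm (Lambda Dt (g 0 n) (g 1 n) (g 2 n))
  set c : Fin 3 → Fin N → ℂ := ![θ, fun _ => 1, fun _ => 1] with hc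
  have hc1 : ∀ j n, ‖c j n‖ ≤ 1 := by
    intro j n; fin_cases j <;> simp [hc, hθ1]
  set σ : Fin 3 → (Fin N → ℤˣ) × (Fin N → ℤˣ) → Fin N → ℤˣ :=
    ![fun ω => ω.1, fun ω => ω.2, fun ω => ω.1 * ω.2] with hσ
  have hcard : Fintype.card (Fin N → ℤˣ) = 2 ^ N := by simp
  have hσ1 : ∀ j (φ : (Fin N → ℤˣ) → ℝ), ∑ ω, φ (σ j ω) = 2 ^ N * ∑ ε, φ ε := by
    intro j φ
    rw [Fintype.sum_prod_type]
    fin_cases j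
    · simp [hσ, Finset.mul_sum]
    · simp [hσ]
    · simp only [hσ, Fin.reduceFinMk, Matrix.cons_val]
      have h : ∀ x : Fin N → ℤˣ, ∑ y, φ (x * y) = ∑ y, φ y :=
        fun x => Equiv.sum_comp (Equiv.mulLeft x) φ
      simp [h]
  set F : Fin 3 → (Fin N → ℤˣ) × (Fin N → ℤˣ) → SchwartzMap V2 ℂ :=
    fun j ω => ∑ n, ((sgnR (σ j ω n) : ℂ) * c j n) • g j n with hF
  have hFx : ∀ j ω x, F j ω x = ∑ n, (sgnR (σ j ω n) : ℂ) * (c j n * g j n x) := by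
    intro j ω x
    simp [hF, mul_assoc]
  have h1 : ∑ ω, Lambda Dt (F 0 ω) (F 1 ω) (F 2 ω) =
      4 ^ N * ((∑ n, ‖Lambda Dt (g 0 n) (g 1 n) (g 2 n)‖ : ℝ) : ℂ) := by
    simp only [hF, Lambda_sum_smul hmeas, hσ, hc, Matrix.cons_val, mul_one]
    rw [sum_signs_trilinear θ fun n m k => Lambda Dt (g 0 n) (g 1 m) (g 2 k)]
    push_cast
    simp only [hθ2]
  have h2 : (4 : ENNReal) ^ N * ENNReal.ofReal (∑ n, ‖Lambda Dt (g 0 n) (g 1 n) (g 2 n)‖) ≤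
      ∑ ω, ENNReal.ofReal ‖Lambda Dt (F 0 ω) (F 1 ω) (F 2 ω)‖ := by
    have h3 := congrArg norm h1
    rw [norm_mul, Complex.norm_real, Real.norm_of_nonneg
      (Finset.sum_nonneg fun n _ => norm_nonneg _)] at h3
    rw [← ENNReal.ofReal_sum_of_nonneg fun ω _ => norm_nonneg _]
    have h4 : ENNReal.ofReal (4 ^ N) = 4 ^ N := by
      rw [ENNReal.ofReal_pow (by norm_num)]; norm_num
    rw [← h4, ← ENNReal.ofReal_mul (by positivity)]
    apply ENNReal.ofReal_le_ofReal
    refine le_trans (le_of_eq ?_) (norm_sum_le _ _)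
    rw [h3]; simp
  have hq : ∑ j, (p j)⁻¹ = 1 := by rw [Fin.sum_univ_three]; exact hsum
  have h5 : ∑ ω, ENNReal.ofReal ‖Lambda Dt (F 0 ω) (F 1 ω) (F 2 ω)‖ ≤ ENNReal.ofReal C *
      ∏ j, (4 ^ N * ENNReal.ofReal (khinchinConst (p j)) *
        ∫⁻ x, ‖sqFun (fun n => ⇑(g j n)) x‖ₑ ^ p j) ^ (p j)⁻¹ := by
    calc _ ≤ ∑ ω, ENNReal.ofReal C * ∏ j, (∫⁻ x, ‖F j ω x‖ₑ ^ p j) ^ (p j)⁻¹ := by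
          refine Finset.sum_le_sum fun ω _ => (hC _ _ _).trans (le_of_eq ?_)
          simp only [Fin.prod_univ_three, eLpNorm_ofReal_eq (hp _), mul_assoc]
      _ ≤ ENNReal.ofReal C * ∏ j, (∑ ω, ∫⁻ x, ‖F j ω x‖ₑ ^ p j) ^ (p j)⁻¹ := by
          rw [← Finset.mul_sum]
          gcongr
          exact sum_prod_rpow_le _ _ (fun j => (inv_pos.2 (hp j)).le) hq
      _ ≤ _ := by
          gcongr with j
          · exact (inv_pos.2 (hp j)).le
          simp only [hFx]
          exact sum_lintegral_signs_le (hp j) (σ j) (hσ1 j) (fun n => ⇑(g j n))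
            (fun n => (g j n).continuous.measurable) (c j) (hc1 j)
  have h6 : ∏ j, ((4 : ENNReal) ^ N * ENNReal.ofReal (khinchinConst (p j)) *
        ∫⁻ x, ‖sqFun (fun n => ⇑(g j n)) x‖ₑ ^ p j) ^ (p j)⁻¹ =
      4 ^ N * (ENNReal.ofReal (meyerConst p) *
        ∏ j, eLpNorm (sqFun fun n => ⇑(g j n)) (ENNReal.ofReal (p j)) volume) := by
    simp only [ENNReal.mul_rpow_of_nonneg _ _ (inv_pos.2 (hp _)).le, Finset.prod_mul_distrib,
      eLpNorm_ofReal_eq (hp _), meyerConst]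
    rw [ENNReal.ofReal_prod_of_nonneg fun j _ => Real.rpow_nonneg (khinchinConst_nonneg (hp j)) _]
    simp only [ENNReal.ofReal_rpow_of_nonneg (khinchinConst_nonneg (hp _)) (inv_pos.2 (hp _)).le]
    rw [← mul_assoc]
    congr 2
    rw [Fin.prod_univ_three, ← ENNReal.rpow_add _ _ (by simp) (by simp),
      ← ENNReal.rpow_add _ _ (by simp) (by simp), hsum, ENNReal.rpow_one]
  have h7 := h2.trans (h5.trans_eq (by rw [h6, mul_left_comm]))
  rw [ENNReal.mul_le_mul_iff_right (by simp) (by simp)] at h7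
  rwa [mul_assoc]
lemma hasTemperateGrowth_chr : Function.HasTemperateGrowth chr := by
  have hd : ∀ s, HasDerivAt chr (2 * Real.pi * Complex.I * chr s) s := fun s => by
    have h1 : HasDerivAt (fun s : ℝ => ((2 * Real.pi * s : ℝ) : ℂ) * Complex.I)
        (2 * Real.pi * Complex.I) s := by
      have := ((hasDerivAt_id s).const_mul (2 * Real.pi)).ofReal_comp.mul_const Complex.I
      simpa using this
    have := h1.cexp
    unfold chr
    convert this using 1
    ring
  have hk : ∀ k, iteratedDeriv k chr = fun s => (2 * Real.pi * Complex.I) ^ k * chr s := by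
    intro k
    induction k with
    | zero => ext s; simp
    | succ k ih =>
      rw [iteratedDeriv_succ, ih]
      ext s
      rw [((hd s).const_mul _).deriv]
      ring
  refine ⟨?_, fun k => ⟨0, (2 * Real.pi) ^ k, fun s => ?_⟩⟩
  · unfold chr
    exact ((Complex.ofRealCLM.contDiff.comp (contDiff_const.mul contDiff_id)).mul
      contDiff_const).cexp
  · rw [norm_iteratedFDeriv_eq_norm_iteratedDeriv, hk]
    simp [abs_of_pos Real.pi_pos]

/-- The pairing with a fixed vector as a continuous linear map. -/
def dot2CLM (ξ : V2) : V2 →L[ℝ] ℝ :=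
  ξ.1 • ContinuousLinearMap.fst ℝ ℝ ℝ + ξ.2 • ContinuousLinearMap.snd ℝ ℝ ℝ

lemma dot2CLM_apply (ξ x : V2) : dot2CLM ξ x = dot2 x ξ := by
  simp [dot2CLM, dot2]; ring

/-- A Schwartz function dilated by `r` and then modulated to the frequency `ξ`. -/
def modDil (g : SchwartzMap V2 ℂ) (ξ : V2) {r : ℝ} (hr : r ≠ 0) : SchwartzMap V2 ℂ :=
  SchwartzMap.smulLeftCLM ℂ (fun x => chr (dot2CLM ξ x))
    (SchwartzMap.compCLMOfContinuousLinearEquiv ℂ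
      (ContinuousLinearEquiv.smulLeft (Units.mk0 r⁻¹ (inv_ne_zero hr))) g)

lemma modDil_apply (g : SchwartzMap V2 ℂ) (ξ : V2) {r : ℝ} (hr : r ≠ 0) (x : V2) :
    modDil g ξ hr x = chr (dot2 x ξ) * g (r⁻¹ • x) := by
  have h : Function.HasTemperateGrowth fun x => chr (dot2CLM ξ x) :=
    hasTemperateGrowth_chr.comp (dot2CLM ξ).hasTemperateGrowth
  rw [modDil, SchwartzMap.smulLeftCLM_apply_apply h, dot2CLM_apply]
  rfl

lemma FT_modDil (g : SchwartzMap V2 ℂ) (ξ : V2) {r : ℝ} (hr : 0 < r) (ζ : V2) :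
    FT (modDil g ξ hr.ne') ζ = r ^ 2 * FT g (r • (ζ - ξ)) := by
  rw [FT_eq_integral_chr, FT_eq_integral_chr]
  have h := Measure.integral_comp_inv_smul (volume : Measure V2)
    (fun x => chr (-dot2 x (r • (ζ - ξ))) * g x) r
  have h2 : (fun x => chr (-dot2 x ζ) * modDil g ξ hr.ne' x) =
      fun x => chr (-dot2 (r⁻¹ • x) (r • (ζ - ξ))) * g (r⁻¹ • x) := by
    ext x
    rw [modDil_apply, ← mul_assoc, ← chr_add, dot2_smul_left, dot2_smul_right, dot2_sub_right,
      inv_mul_cancel_left₀ hr.ne']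
    congr 2; ring
  rw [h2, h]
  simp [abs_of_pos hr]

lemma freqProd_modDil (g1 g2 g3 : SchwartzMap V2 ℂ) (a : V2 × V2) {r : ℝ} (hr : 0 < r)
    (ζ : V2 × V2) :
    freqProd (modDil g1 a.1 hr.ne') (modDil g2 a.2 hr.ne') (modDil g3 (-(a.1 + a.2)) hr.ne') ζ =
      r ^ 6 * freqProd g1 g2 g3 (r • (ζ - a)) := by
  simp only [freqProd]
  rw [FT_modDil _ _ hr, FT_modDil _ _ hr, FT_modDil _ _ hr]
  have : r • (-(ζ.1 + ζ.2) - -(a.1 + a.2)) =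
      -((r • (ζ - a)).1 + (r • (ζ - a)).2) := by
    simp [← smul_add, ← smul_neg]; congr 1; abel
  rw [this]
  simp only [Prod.smul_fst, Prod.smul_snd, Prod.fst_sub, Prod.snd_sub]
  ring

instance isAddHaarMeasure_volume_V2_prod_V2 : (volume : Measure (V2 × V2)).IsAddHaarMeasure :=
  Measure.prod.instIsAddHaarMeasure (volume : Measure V2) (volume : Measure V2)

lemma Lambda_modDil (Dt : Set Amb) (g1 g2 g3 : SchwartzMap V2 ℂ) (b η : V2 × V2) {r : ℝ}
    (hr : 0 < r) :
    Lambda Dt (modDil g1 (b - r⁻¹ • η).1 hr.ne') (modDil g2 (b - r⁻¹ • η).2 hr.ne')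
        (modDil g3 (-((b - r⁻¹ • η).1 + (b - r⁻¹ • η).2)) hr.ne') =
      r ^ 2 * ∫ ζ, (blowSet Dt (Phi b) r).indicator (fun _ => (1 : ℂ)) (Phi (ζ - η)) *
        freqProd g1 g2 g3 ζ := by
  set a := b - r⁻¹ • η with ha
  have h1 : LambdaIntegrand Dt (modDil g1 a.1 hr.ne') (modDil g2 a.2 hr.ne')
        (modDil g3 (-(a.1 + a.2)) hr.ne') = fun ξ =>
      (fun ζ => r ^ 6 * ((blowSet Dt (Phi b) r).indicator (fun _ => (1 : ℂ)) (Phi (ζ - η)) *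
        freqProd g1 g2 g3 ζ)) (r • (ξ - a)) := by
    ext ξ
    have hm : Phi ξ ∈ Dt ↔ Phi (r • (ξ - a) - η) ∈ blowSet Dt (Phi b) r := by
      have e : ∀ y, r • (y - Phi b) = Phi (r • (ξ - a) - η) ↔ y = Phi ξ := fun y => by
        have e2 : Phi (r • (ξ - a) - η) = r • (Phi ξ - Phi b) := by
          have : r • (ξ - a) - η = r • (ξ - b) := by
            rw [ha]; simp only [smul_sub, smul_inv_smul₀ hr.ne']; abel
          rw [this]
          ext <;> simp [Phi] <;> ring
        rw [e2, smul_right_inj hr.ne', sub_left_inj]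
      simp only [blowSet, Set.mem_image, e]
      simp
    have := freqProd_modDil g1 g2 g3 a hr ξ
    simp only [LambdaIntegrand]
    rw [freqProd] at this
    rw [this]
    by_cases h : Phi ξ ∈ Dt
    · simp [h, hm.1 h]
    · simp [h, mt hm.2 h]
  rw [Lambda, h1]
  rw [integral_sub_right_eq_self (fun ξ => (fun ζ => (r : ℂ) ^ 6 *
    ((blowSet Dt (Phi b) r).indicator (fun _ => (1 : ℂ)) (Phi (ζ - η)) *
        freqProd g1 g2 g3 ζ)) (r • ξ)) a, Measure.integral_comp_smul volume (fun ζ => (r : ℂ) ^ 6 *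
    ((blowSet Dt (Phi b) r).indicator (fun _ => (1 : ℂ)) (Phi (ζ - η)) *
        freqProd g1 g2 g3 ζ)) r, integral_const_mul]
  have : Module.finrank ℝ (V2 × V2) = 4 := by simp
  rw [this, abs_of_pos (by positivity), Complex.real_smul, ← mul_assoc]
  congr 1
  have : (r : ℂ) ≠ 0 := by exact_mod_cast hr.ne'
  push_cast
  field_simp

lemma eLpNorm_sqFun_modDil {p : ℝ} (hp : 0 < p) {N : ℕ} (g : Fin N → SchwartzMap V2 ℂ)
    (ξ : Fin N → V2) {r : ℝ} (hr : 0 < r) :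
    eLpNorm (sqFun fun n => ⇑(modDil (g n) (ξ n) hr.ne')) (ENNReal.ofReal p) volume =
      ENNReal.ofReal (r ^ 2) ^ p⁻¹ *
        eLpNorm (sqFun fun n => ⇑(g n)) (ENNReal.ofReal p) volume := by
  have h1 : (sqFun fun n => ⇑(modDil (g n) (ξ n) hr.ne')) =
      fun x => (sqFun fun n => ⇑(g n)) (r⁻¹ • x) := by
    ext x
    simp [sqFun, modDil_apply]
  rw [eLpNorm_ofReal_eq hp, eLpNorm_ofReal_eq hp, h1,
    ← ENNReal.mul_rpow_of_nonneg _ _ (inv_nonneg.2 hp.le)]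
  congr 1
  set F : V2 → ENNReal := fun x => ‖(sqFun fun n => ⇑(g n)) x‖ₑ ^ p
  have h2 := (Homeomorph.smulOfNeZero r⁻¹ (inv_ne_zero hr.ne')
    : V2 ≃ₜ V2).measurableEmbedding.lintegral_map (μ := volume) F
  have h3 : Measure.map (⇑(Homeomorph.smulOfNeZero r⁻¹ (inv_ne_zero hr.ne') : V2 ≃ₜ V2)) volume
      = ENNReal.ofReal (r ^ 2) • (volume : Measure V2) := by
    have := Measure.map_addHaar_smul (volume : Measure V2) (inv_ne_zero hr.ne')
    simpa [abs_of_pos hr] using this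
  rw [h3, lintegral_smul_measure] at h2
  exact h2.symm
lemma sum_norm_blowSet_le (p : Fin 3 → ℝ) (hp : ∀ k, 0 < p k)
    (hsum : (p 0)⁻¹ + (p 1)⁻¹ + (p 2)⁻¹ = 1)
    (Dt : Set Amb) (hmeas : MeasurableSet Dt) (C : ℝ)
    (hC : ∀ f1 f2 f3 : SchwartzMap V2 ℂ,
      ENNReal.ofReal ‖Lambda Dt ⇑f1 ⇑f2 ⇑f3‖ ≤ ENNReal.ofReal C *
        (eLpNorm (⇑f1) (ENNReal.ofReal (p 0)) volume *
          (eLpNorm (⇑f2) (ENNReal.ofReal (p 1)) volume *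
            eLpNorm (⇑f3) (ENNReal.ofReal (p 2)) volume)))
    {N : ℕ} (g : Fin 3 → Fin N → SchwartzMap V2 ℂ) (b η : Fin N → V2 × V2) {r : ℝ} (hr : 0 < r) :
    ENNReal.ofReal (∑ n, ‖∫ ζ, (blowSet Dt (Phi (b n)) r).indicator (fun _ => (1 : ℂ))
        (Phi (ζ - η n)) * freqProd (g 0 n) (g 1 n) (g 2 n) ζ‖) ≤
      ENNReal.ofReal C * ENNReal.ofReal (meyerConst p) *
        ∏ j, eLpNorm (sqFun fun n => ⇑(g j n)) (ENNReal.ofReal (p j)) volume := by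
  have h := sum_norm_Lambda_le p hp hsum Dt hmeas C hC
    (fun j n => modDil (g j n) (comp3 (Phi (b n - r⁻¹ • η n)) j) hr.ne')
  simp only [eLpNorm_sqFun_modDil (hp _) _ _ hr, Finset.prod_mul_distrib] at h
  have h1 : ∏ j, ENNReal.ofReal (r ^ 2) ^ (p j)⁻¹ = ENNReal.ofReal (r ^ 2) := by
    have h0 : ENNReal.ofReal (r ^ 2) ≠ 0 := by simpa using hr.ne'
    rw [Fin.prod_univ_three, ← ENNReal.rpow_add _ _ h0 ENNReal.ofReal_ne_top,
      ← ENNReal.rpow_add _ _ h0 ENNReal.ofReal_ne_top, hsum, ENNReal.rpow_one]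
  have h2 : ∀ n, ‖Lambda Dt (modDil (g 0 n) (comp3 (Phi (b n - r⁻¹ • η n)) 0) hr.ne')
      (modDil (g 1 n) (comp3 (Phi (b n - r⁻¹ • η n)) 1) hr.ne')
      (modDil (g 2 n) (comp3 (Phi (b n - r⁻¹ • η n)) 2) hr.ne')‖ = r ^ 2 *
      ‖∫ ζ, (blowSet Dt (Phi (b n)) r).indicator (fun _ => (1 : ℂ))
        (Phi (ζ - η n)) * freqProd (g 0 n) (g 1 n) (g 2 n) ζ‖ := fun n => by
    have := Lambda_modDil Dt (g 0 n) (g 1 n) (g 2 n) (b n) (η n) hr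
    refine (congrArg norm this).trans ?_
    rw [norm_mul, norm_pow, Complex.norm_real, Real.norm_of_nonneg hr.le]
  simp only [h2] at h
  rw [← Finset.mul_sum, ENNReal.ofReal_mul (by positivity), h1, mul_left_comm] at h
  exact (ENNReal.mul_le_mul_iff_right (by simpa using hr.ne') ENNReal.ofReal_ne_top).1 h

lemma BlowupNormal.tendsto_integral {Dt : Set Amb} (hmeas : MeasurableSet Dt) {ξ v : Amb}
    (h : BlowupNormal Dt ξ v) (η : V2 × V2) {G : V2 × V2 → ℂ} (hG : Integrable G) :
    Tendsto (fun r : ℝ => ∫ ζ, (blowSet Dt ξ r).indicator (fun _ => (1 : ℂ)) (Phi (ζ - η)) * G ζ)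
      atTop (𝓝 (∫ ζ, (Pv v).indicator (fun _ => (1 : ℂ)) (Phi (ζ - η)) * G ζ)) := by
  have hae : ∀ᵐ ζ : V2 × V2, Tendsto (fun r : ℝ => (blowSet Dt ξ r).indicator
      (fun _ => (1 : ℝ)) (Phi (ζ - η))) atTop
      (𝓝 ((Pv v).indicator (fun _ => (1 : ℝ)) (Phi (ζ - η)))) :=
    (measurePreserving_sub_right volume η).quasiMeasurePreserving.ae h
  have hcast : ∀ (S : Set Amb) x, S.indicator (fun _ => (1 : ℂ)) x =
      ((S.indicator (fun _ => (1 : ℝ)) x : ℝ) : ℂ) := fun S x => by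
    by_cases hx : x ∈ S <;> simp [hx]
  refine tendsto_integral_filter_of_dominated_convergence (fun ζ => ‖G ζ‖) ?_ ?_ hG.norm ?_
  · filter_upwards [eventually_gt_atTop 0] with r hr
    have hS : MeasurableSet (blowSet Dt ξ r) := by
      have : blowSet Dt ξ r = (fun z => r⁻¹ • z + ξ) ⁻¹' Dt := by
        ext z
        simp only [blowSet, Set.mem_image, Set.mem_preimage]
        constructor
        · rintro ⟨y, hy, rfl⟩
          simpa [inv_smul_smul₀ hr.ne'] using hy
        · intro hz
          exact ⟨_, hz, by simp [smul_inv_smul₀ hr.ne']⟩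
      rw [this]
      exact measurableSet_preimage (by fun_prop) hmeas
    have hT : MeasurableSet ((fun ζ => Phi (ζ - η)) ⁻¹' blowSet Dt ξ r) :=
      (measurable_Phi.comp (measurable_id.sub_const η)) hS
    exact (indicator_mul_integrable hT hG).aestronglyMeasurable
  · refine Eventually.of_forall fun r => Eventually.of_forall fun ζ => ?_
    rw [norm_mul]
    refine mul_le_of_le_one_left (norm_nonneg _) ?_
    exact (norm_indicator_le_norm_self _ _).trans (by simp)
  · filter_upwards [hae] with ζ hζ
    simp only [hcast]
    exact ((Complex.continuous_ofReal.tendsto _).comp hζ).mul_const _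

lemma sum_norm_halfspace_le (p : Fin 3 → ℝ) (hp : ∀ k, 0 < p k)
    (hsum : (p 0)⁻¹ + (p 1)⁻¹ + (p 2)⁻¹ = 1)
    (Dt : Set Amb) (hmeas : MeasurableSet Dt) (C : ℝ)
    (hC : ∀ f1 f2 f3 : SchwartzMap V2 ℂ,
      ENNReal.ofReal ‖Lambda Dt ⇑f1 ⇑f2 ⇑f3‖ ≤ ENNReal.ofReal C *
        (eLpNorm (⇑f1) (ENNReal.ofReal (p 0)) volume *
          (eLpNorm (⇑f2) (ENNReal.ofReal (p 1)) volume *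
            eLpNorm (⇑f3) (ENNReal.ofReal (p 2)) volume)))
    {N : ℕ} (ξv vv : Fin N → Amb) (hξ : ∀ n, ξv n ∈ bdry Dt)
    (hv : ∀ n, BlowupNormal Dt (ξv n) (vv n))
    (g : Fin 3 → Fin N → SchwartzMap V2 ℂ) (η : Fin N → V2 × V2) :
    ENNReal.ofReal (∑ n, ‖∫ ζ, (Pv (vv n)).indicator (fun _ => (1 : ℂ)) (Phi (ζ - η n)) *
        freqProd (g 0 n) (g 1 n) (g 2 n) ζ‖) ≤
      ENNReal.ofReal C * ENNReal.ofReal (meyerConst p) *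
        ∏ j, eLpNorm (sqFun fun n => ⇑(g j n)) (ENNReal.ofReal (p j)) volume := by
  choose b _ hb using hξ
  refine le_of_tendsto (ENNReal.tendsto_ofReal (tendsto_finsetSum _ fun n _ =>
    ((hv n).tendsto_integral hmeas (η n) (freqProd_integrable (g 0 n) (g 1 n) (g 2 n))).norm)) ?_
  filter_upwards [eventually_gt_atTop 0] with r hr
  simp only [← hb]
  exact sum_norm_blowSet_le p hp hsum Dt hmeas C hC g b η hr
open FourierTransform in
lemma fourier_eq_integral_chr (f : ℝ → ℂ) (s : ℝ) : 𝓕 f s = ∫ t, chr (-(t * s)) * f t := by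
  rw [Real.fourier_real_eq]
  simp only [fourierChar_smul_eq_chr_mul]

/-- The two-sided exponential kernel of total mass one. -/
def expKer (c a : ℝ) : ℝ := Real.pi * c * Real.exp (-(2 * Real.pi * c * |a|))

/-- The Fourier transform of `expKer c`. -/
def cauchyBump (c t : ℝ) : ℝ := (1 + (t / c) ^ 2)⁻¹

@[fun_prop] lemma continuous_expKer (c : ℝ) : Continuous (expKer c) := by
  unfold expKer; fun_prop

@[fun_prop] lemma continuous_cauchyBump (c : ℝ) : Continuous (cauchyBump c) := by
  unfold cauchyBump
  exact Continuous.inv₀ (by fun_prop) fun t => by positivity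

lemma cauchyBump_pos (c t : ℝ) : 0 < cauchyBump c t := by unfold cauchyBump; positivity

lemma expKer_nonneg {c : ℝ} (hc : 0 < c) (a : ℝ) : 0 ≤ expKer c a := by
  have := Real.pi_pos
  unfold expKer; positivity

lemma expKer_neg (c a : ℝ) : expKer c (-a) = expKer c a := by simp [expKer]

lemma integrable_cauchyBump {c : ℝ} (hc : c ≠ 0) : Integrable (cauchyBump c) := by
  exact integrable_inv_one_add_sq.comp_div hc

lemma chr_mul_expKer_of_nonneg (c t : ℝ) {a : ℝ} (ha : 0 ≤ a) :
    chr (-(a * t)) * (expKer c a : ℂ) = (Real.pi * c : ℝ) *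
      Complex.exp ((-(2 * Real.pi * c : ℝ) - (2 * Real.pi * t : ℝ) * Complex.I) * a) := by
  rw [chr, expKer, abs_of_nonneg ha]
  push_cast
  rw [mul_left_comm, ← Complex.exp_add]
  congr 2; ring

lemma chr_mul_expKer_of_nonpos (c t : ℝ) {a : ℝ} (ha : a ≤ 0) :
    chr (-(a * t)) * (expKer c a : ℂ) = (Real.pi * c : ℝ) *
      Complex.exp (((2 * Real.pi * c : ℝ) - (2 * Real.pi * t : ℝ) * Complex.I) * a) := by
  rw [chr, expKer, abs_of_nonpos ha]
  push_cast
  rw [mul_left_comm, ← Complex.exp_add]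
  congr 2; ring

lemma integrableOn_chr_mul_expKer {c : ℝ} (hc : 0 < c) (t : ℝ) :
    IntegrableOn (fun a => chr (-(a * t)) * (expKer c a : ℂ)) (Iic 0) ∧
    IntegrableOn (fun a => chr (-(a * t)) * (expKer c a : ℂ)) (Ioi 0) := by
  have hpi := Real.pi_pos
  constructor
  · refine IntegrableOn.congr_fun (Integrable.const_mul
        (integrableOn_exp_mul_complex_Iic (a := (2 * Real.pi * c : ℝ) -
      (2 * Real.pi * t : ℝ) * Complex.I) ?_ 0) ((Real.pi * c : ℝ) : ℂ))
      (fun a ha => (chr_mul_expKer_of_nonpos c t ha).symm) measurableSet_Iic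
    simp; positivity
  · refine IntegrableOn.congr_fun (Integrable.const_mul
        (integrableOn_exp_mul_complex_Ioi (a := -(2 * Real.pi * c : ℝ) -
      (2 * Real.pi * t : ℝ) * Complex.I) ?_ 0) ((Real.pi * c : ℝ) : ℂ))
      (fun a ha => (chr_mul_expKer_of_nonneg c t (le_of_lt ha)).symm) measurableSet_Ioi
    simp; positivity

lemma integrable_expKer {c : ℝ} (hc : 0 < c) : Integrable (expKer c) := by
  have h := integrableOn_chr_mul_expKer hc 0
  have h2 := h.1.union h.2
  rw [Iic_union_Ioi, integrableOn_univ] at h2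
  simpa [chr_zero, abs_of_nonneg (expKer_nonneg hc _)] using h2.norm

open FourierTransform in
lemma fourier_expKer {c : ℝ} (hc : 0 < c) (t : ℝ) :
    𝓕 (fun a => (expKer c a : ℂ)) t = cauchyBump c t := by
  have hpi := Real.pi_pos
  have h := integrableOn_chr_mul_expKer hc t
  rw [fourier_eq_integral_chr, ← intervalIntegral.integral_Iic_add_Ioi h.1 h.2,
    setIntegral_congr_fun measurableSet_Iic (fun a ha => chr_mul_expKer_of_nonpos c t ha),
    setIntegral_congr_fun measurableSet_Ioi
      (fun a ha => chr_mul_expKer_of_nonneg c t (le_of_lt ha)),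
    integral_const_mul, integral_const_mul, integral_exp_mul_complex_Iic (by simp; positivity),
    integral_exp_mul_complex_Ioi (by simp; positivity), cauchyBump]
  have h1 : (c : ℂ) - t * Complex.I ≠ 0 := fun h => by
    have := congrArg Complex.re h
    simp at this
    exact hc.ne' this
  have h2 : (c : ℂ) + t * Complex.I ≠ 0 := fun h => by
    have := congrArg Complex.re h
    simp at this
    exact hc.ne' this
  have h3 : ((c : ℂ) ^ 2 + t ^ 2) ≠ 0 := by
    have : (c : ℂ) ^ 2 + t ^ 2 = (c - t * Complex.I) * (c + t * Complex.I) := by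
      linear_combination (t : ℂ) ^ 2 * Complex.I_sq
    rw [this]; exact mul_ne_zero h1 h2
  have hc' : (c : ℂ) ≠ 0 := by exact_mod_cast hc.ne'
  have hpi' : (Real.pi : ℂ) ≠ 0 := by exact_mod_cast hpi.ne'
  have e1 : ((2 * Real.pi * c : ℝ) : ℂ) - (2 * Real.pi * t : ℝ) * Complex.I =
      2 * Real.pi * (c - t * Complex.I) := by push_cast; ring
  have e2 : -((2 * Real.pi * c : ℝ) : ℂ) - (2 * Real.pi * t : ℝ) * Complex.I =
      -(2 * Real.pi * (c + t * Complex.I)) := by push_cast; ring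
  rw [e1, e2]
  have e3 : (((1 + (t / c) ^ 2)⁻¹ : ℝ) : ℂ) = c ^ 2 / (c ^ 2 + t ^ 2) := by
    push_cast
    have : (1 + ((t : ℂ) / c) ^ 2) = (c ^ 2 + t ^ 2) / c ^ 2 := by field_simp
    rw [this, inv_div]
  rw [e3]
  simp only [Complex.ofReal_zero, mul_zero, Complex.exp_zero]
  push_cast
  rw [eq_div_iff h3]
  field_simp
  linear_combination (2 * c * (t : ℂ) ^ 2) * Complex.I_sq

lemma integral_expKer {c : ℝ} (hc : 0 < c) : ∫ a, expKer c a = 1 := by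
  have h := fourier_expKer hc 0
  simp only [fourier_eq_integral_chr, mul_zero, neg_zero, chr_zero, one_mul] at h
  rw [integral_complex_ofReal] at h
  simpa [cauchyBump] using h

lemma integral_Iic_expKer {c : ℝ} (hc : 0 < c) : ∫ a in Iic 0, expKer c a = 1 / 2 := by
  have h := integrable_expKer hc
  have h1 := integral_expKer hc
  have h2 := integral_comp_neg_Iic (0 : ℝ) (expKer c)
  simp only [expKer_neg, neg_zero] at h2
  rw [← intervalIntegral.integral_Iic_add_Ioi h.integrableOn h.integrableOn (b := 0), ← h2] at h1
  linarith

open FourierTransform in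
lemma fourier_cauchyBump {c : ℝ} (hc : 0 < c) (a : ℝ) :
    𝓕 (fun t => (cauchyBump c t : ℂ)) a = expKer c a := by
  have h1 : 𝓕 (fun a => (expKer c a : ℂ)) = fun t => (cauchyBump c t : ℂ) :=
    funext (fourier_expKer hc)
  have h2 := Continuous.fourierInv_fourier_eq (f := fun a => (expKer c a : ℂ)) (by fun_prop)
    (integrable_expKer hc).ofReal (h1 ▸ (integrable_cauchyBump hc.ne').ofReal)
  have h3 := congrFun h2 (-a)
  rw [Real.fourierInv_eq_fourier_neg, neg_neg, h1] at h3
  rw [h3, expKer_neg]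

/-- A smooth odd truncation of the kernel `1 / t` to the range `δ < |t| < 1 / δ`. -/
def pvKernel (δ t : ℝ) : ℝ := (cauchyBump δ⁻¹ t - cauchyBump δ t) / t

lemma mul_pvKernel (δ t : ℝ) : t * pvKernel δ t = cauchyBump δ⁻¹ t - cauchyBump δ t := by
  by_cases h : t = 0
  · simp [h, cauchyBump]
  · rw [pvKernel, mul_div_cancel₀ _ h]

lemma pvKernel_neg (δ t : ℝ) : pvKernel δ (-t) = -pvKernel δ t := by
  simp [pvKernel, cauchyBump, neg_div, div_neg]

lemma measurable_pvKernel (δ : ℝ) : Measurable (pvKernel δ) := by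
  have h1 := (continuous_cauchyBump δ).measurable
  have h2 := (continuous_cauchyBump δ⁻¹).measurable
  exact (h2.sub h1).div measurable_id

lemma abs_pvKernel_le {δ : ℝ} (h0 : 0 < δ) (h1 : δ < 1) (t : ℝ) :
    |pvKernel δ t| ≤ δ⁻¹ * cauchyBump δ⁻¹ t := by
  by_cases ht : t = 0
  · subst ht; simp [pvKernel, cauchyBump, h0.le]
  have ht' := abs_pos.2 ht
  rw [pvKernel, abs_div, div_le_iff₀ ht']
  have hc := cauchyBump_pos δ⁻¹ t
  have hle : cauchyBump δ t ≤ cauchyBump δ⁻¹ t := by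
    unfold cauchyBump
    refine inv_anti₀ (by positivity) (add_le_add le_rfl ?_)
    · have : (t / δ⁻¹) ^ 2 = δ ^ 2 * t ^ 2 := by field_simp
      have h2 : (t / δ) ^ 2 = (δ ^ 2)⁻¹ * t ^ 2 := by field_simp
      rw [this, h2]
      have h3 : δ ^ 2 ≤ 1 := pow_le_one₀ h0.le h1.le
      have h4 : 1 ≤ (δ ^ 2)⁻¹ := (one_le_inv₀ (by positivity)).2 h3
      nlinarith [sq_nonneg t]
  rw [abs_of_nonneg (by linarith)]
  by_cases h : δ ≤ |t|
  · have : 1 ≤ δ⁻¹ * |t| := by rw [← div_eq_inv_mul]; exact (one_le_div h0).2 h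
    nlinarith [cauchyBump_pos δ t]
  · push Not at h
    have e : ∀ c : ℝ, 1 - cauchyBump c t = (t / c) ^ 2 * cauchyBump c t := fun c => by
      unfold cauchyBump
      have : (1 + (t / c) ^ 2) ≠ 0 := by positivity
      field_simp
      ring
    have e1 := e δ⁻¹
    have e2 := e δ
    have key : cauchyBump δ⁻¹ t - cauchyBump δ t =
      ((t / δ) ^ 2 - (t / δ⁻¹) ^ 2) * cauchyBump δ t * cauchyBump δ⁻¹ t := by
      linear_combination (cauchyBump δ⁻¹ t) * e2 - (cauchyBump δ t) * e1
    rw [key]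
    have hb : cauchyBump δ t ≤ 1 := by
      have := e2
      have := mul_nonneg (sq_nonneg (t / δ)) (cauchyBump_pos δ t).le
      linarith
    have h5 : (t / δ) ^ 2 ≤ δ⁻¹ * |t| := by
      have : |t| / δ ≤ 1 := (div_le_one h0).2 h.le
      have h6 : (t / δ) ^ 2 = (|t| / δ) * (|t| / δ) := by
        rw [← sq, ← sq_abs, abs_div, abs_of_pos h0]
      rw [h6, ← div_eq_inv_mul]
      exact mul_le_of_le_one_left (by positivity) this
    have h7 : ((t / δ) ^ 2 - (t / δ⁻¹) ^ 2) * cauchyBump δ t ≤ δ⁻¹ * |t| := by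
      calc _ ≤ (t / δ) ^ 2 * cauchyBump δ t := by
            have := (cauchyBump_pos δ t).le
            gcongr
            linarith [sq_nonneg (t / δ⁻¹)]
        _ ≤ (t / δ) ^ 2 * 1 := by gcongr
        _ ≤ _ := by linarith
    nlinarith

lemma integrable_pvKernel {δ : ℝ} (h0 : 0 < δ) (h1 : δ < 1) : Integrable (pvKernel δ) :=
  ((integrable_cauchyBump (inv_ne_zero h0.ne')).const_mul δ⁻¹).mono'
    (measurable_pvKernel δ).aestronglyMeasurable (Eventually.of_forall (abs_pvKernel_le h0 h1))

/-- The derivative of the Fourier transform of `pvKernel δ`. -/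
def pvDensity (δ a : ℝ) : ℂ := (-2 * Real.pi * Complex.I) * ((expKer δ⁻¹ a - expKer δ a : ℝ) : ℂ)

lemma integrable_pvDensity {δ : ℝ} (h0 : 0 < δ) : Integrable (pvDensity δ) :=
  (((integrable_expKer (inv_pos.2 h0)).sub (integrable_expKer h0)).ofReal).const_mul _

@[fun_prop] lemma continuous_pvDensity (δ : ℝ) : Continuous (pvDensity δ) := by
  unfold pvDensity; fun_prop

lemma integral_norm_pvDensity_le {δ : ℝ} (h0 : 0 < δ) :
    ∫ a, ‖pvDensity δ a‖ ≤ 4 * Real.pi := by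
  have i1 := integrable_expKer (inv_pos.2 h0)
  have i2 := integrable_expKer h0
  calc ∫ a, ‖pvDensity δ a‖ ≤ ∫ a, 2 * Real.pi * (expKer δ⁻¹ a + expKer δ a) := by
        refine integral_mono (integrable_pvDensity h0).norm ((i1.add i2).const_mul _) fun a => ?_
        simp only [pvDensity, norm_mul, Complex.norm_real, norm_neg, Complex.norm_I,
          Complex.norm_ofNat, Real.norm_eq_abs, abs_of_pos Real.pi_pos, mul_one]
        have := Real.pi_pos
        gcongr
        refine (abs_sub _ _).trans ?_
        rw [abs_of_nonneg (expKer_nonneg (inv_pos.2 h0) a), abs_of_nonneg (expKer_nonneg h0 a)]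
    _ = 4 * Real.pi := by
        rw [integral_const_mul, integral_add i1 i2, integral_expKer (inv_pos.2 h0),
          integral_expKer h0]
        ring

open FourierTransform in
lemma fourier_pvKernel {δ : ℝ} (h0 : 0 < δ) (h1 : δ < 1) (s : ℝ) :
    𝓕 (fun t => (pvKernel δ t : ℂ)) s = ∫ a in Iic s, pvDensity δ a := by
  have hi : Integrable fun t => (pvKernel δ t : ℂ) := (integrable_pvKernel h0 h1).ofReal
  have c1 := integrable_cauchyBump (inv_ne_zero h0.ne')
  have c2 := integrable_cauchyBump h0.ne'
  have hm : (fun t : ℝ => t • (pvKernel δ t : ℂ)) =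
      fun t => ((cauchyBump δ⁻¹ t : ℂ) - cauchyBump δ t) := by
    ext t
    rw [Complex.real_smul, ← Complex.ofReal_mul, mul_pvKernel, Complex.ofReal_sub]
  have hi2 : Integrable fun t : ℝ => t • (pvKernel δ t : ℂ) := by
    rw [hm]; exact c1.ofReal.sub c2.ofReal
  have hd : ∀ s, HasDerivAt (𝓕 (fun t => (pvKernel δ t : ℂ))) (pvDensity δ s) s := fun s => by
    have h := Real.hasDerivAt_fourier hi hi2 s
    refine h.congr_deriv ?_
    have e : (fun x : ℝ => (-2 * Real.pi * Complex.I * x) • (pvKernel δ x : ℂ)) =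
        fun x => (-2 * Real.pi * Complex.I) * ((cauchyBump δ⁻¹ x : ℂ) - cauchyBump δ x) := by
      ext x
      have := congrFun hm x
      simp only [Complex.real_smul] at this
      rw [← this, smul_eq_mul]; ring
    rw [e, pvDensity, Complex.ofReal_sub, ← fourier_cauchyBump h0,
      ← fourier_cauchyBump (inv_pos.2 h0)]
    simp only [fourier_eq_integral_chr]
    rw [← integral_sub, ← integral_const_mul]
    · congr 1; ext x; ring
    all_goals
      refine Integrable.bdd_mul (c := 1) (by first | exact c1.ofReal | exact c2.ofReal)
        (Continuous.aestronglyMeasurable (by fun_prop)) (by simp)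
  have hz : 𝓕 (fun t => (pvKernel δ t : ℂ)) 0 = 0 := by
    simp only [fourier_eq_integral_chr, mul_zero, neg_zero, chr_zero, one_mul]
    have := integral_neg_eq_self (fun t => (pvKernel δ t : ℂ)) volume
    simp only [pvKernel_neg, Complex.ofReal_neg, integral_neg] at this
    linear_combination (-1 / 2 : ℂ) * this
  have hI := integrable_pvDensity h0
  have hz2 : ∫ a in Iic 0, pvDensity δ a = 0 := by
    simp only [pvDensity]
    rw [integral_const_mul, integral_complex_ofReal,
      integral_sub (integrable_expKer (inv_pos.2 h0)).integrableOn
        (integrable_expKer h0).integrableOn,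
      integral_Iic_expKer h0, integral_Iic_expKer (inv_pos.2 h0)]
    simp
  have h3 := intervalIntegral.integral_eq_sub_of_hasDerivAt (a := 0) (b := s) (fun x _ => hd x)
    ((continuous_pvDensity δ).intervalIntegrable _ _)
  rw [hz, sub_zero] at h3
  rw [← h3, ← intervalIntegral.integral_Iic_sub_Iic hI.integrableOn hI.integrableOn, hz2, sub_zero]
@[fun_prop] lemma continuous_dot6_Phi {X : Type*} [TopologicalSpace X] {f : X → V2 × V2}
    (hf : Continuous f) (v : Amb) : Continuous fun x => dot6 (Phi (f x)) v := by
  unfold dot6 Phi; fun_prop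

lemma dot6_Phi_sub_smul (ξ e : V2 × V2) (a : ℝ) (v : Amb) :
    dot6 (Phi (ξ - a • e)) v = dot6 (Phi ξ) v - a * dot6 (Phi e) v := by
  simp [dot6, dot2, Phi]; ring

lemma Phi_mem_Pv_iff (ξ : V2 × V2) (v : Amb) : Phi ξ ∈ Pv v ↔ 0 < dot6 (Phi ξ) v := by
  simp [Pv, Gamma, Phi]

open FourierTransform in
lemma integral_corr_mul_pvKernel (v : Amb) (g1 g2 g3 : SchwartzMap V2 ℂ) {δ : ℝ} (h0 : 0 < δ)
    (h1 : δ < 1) : ∫ t, corr v g1 g2 g3 t * pvKernel δ t =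
      ∫ ξ, freqProd g1 g2 g3 ξ * ∫ a in Iic (dot6 (Phi ξ) v), pvDensity δ a := by
  have hF := freqProd_integrable g1 g2 g3
  have hFc := freqProd_continuous g1 g2 g3
  have hk : Integrable fun t => (pvKernel δ t : ℂ) := (integrable_pvKernel h0 h1).ofReal
  have hint : Integrable (Function.uncurry fun (t : ℝ) (ξ : V2 × V2) =>
      chr (-(t * dot6 (Phi ξ) v)) * freqProd g1 g2 g3 ξ * pvKernel δ t) := by
    refine (hk.mul_prod hF).mono ?_ (Eventually.of_forall fun x => ?_)
    · have hm := measurable_pvKernel δ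
      have hc : Measurable fun x : ℝ × (V2 × V2) =>
          chr (-(x.1 * dot6 (Phi x.2) v)) * freqProd g1 g2 g3 x.2 :=
        Continuous.measurable (by fun_prop)
      exact (hc.mul (Complex.measurable_ofReal.comp (hm.comp measurable_fst))).aestronglyMeasurable
    · simp only [Function.uncurry, norm_mul, norm_chr, one_mul]
      rw [mul_comm]
  calc ∫ t, corr v g1 g2 g3 t * pvKernel δ t
      = ∫ t, ∫ ξ, chr (-(t * dot6 (Phi ξ) v)) * freqProd g1 g2 g3 ξ * pvKernel δ t := by
        simp only [corr_eq_integral_freqProd, integral_mul_const]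
    _ = ∫ ξ, ∫ t, chr (-(t * dot6 (Phi ξ) v)) * freqProd g1 g2 g3 ξ * pvKernel δ t :=
        integral_integral_swap hint
    _ = _ := by
        congr 1; ext ξ
        rw [← fourier_pvKernel h0 h1, fourier_eq_integral_chr, ← integral_const_mul]
        congr 1; ext t; ring

lemma exists_dot6_Phi_eq_one {v : Amb} (h : ∃ ξ, dot6 (Phi ξ) v ≠ 0) :
    ∃ e, dot6 (Phi e) v = 1 := by
  obtain ⟨ξ, hξ⟩ := h
  refine ⟨0 - (-(dot6 (Phi ξ) v)⁻¹) • ξ, ?_⟩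
  rw [dot6_Phi_sub_smul]
  have : dot6 (Phi 0) v = 0 := by simp [dot6, dot2, Phi]
  rw [this]
  field_simp
  ring

lemma integrable_halfspace_prod (v : Amb) (e : V2 × V2) (g1 g2 g3 : SchwartzMap V2 ℂ) {δ : ℝ}
    (h0 : 0 < δ) : Integrable fun x : ℝ × (V2 × V2) =>
      (Pv v).indicator (fun _ => (1 : ℂ)) (Phi (x.2 - x.1 • e)) *
        (pvDensity δ x.1 * freqProd g1 g2 g3 x.2) := by
  have hG := (integrable_pvDensity h0).mul_prod (freqProd_integrable g1 g2 g3)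
  have hS : MeasurableSet {x : ℝ × (V2 × V2) | Phi (x.2 - x.1 • e) ∈ Pv v} := by
    simp only [Phi_mem_Pv_iff, dot6_Phi_sub_smul]
    exact measurableSet_lt measurable_const (Continuous.measurable (by fun_prop))
  refine (hG.indicator hS).congr (Eventually.of_forall fun x => ?_)
  by_cases h : Phi (x.2 - x.1 • e) ∈ Pv v
  · have h' : x ∈ {x : ℝ × (V2 × V2) | Phi (x.2 - x.1 • e) ∈ Pv v} := h
    simp only [Set.indicator_of_mem h', Set.indicator_of_mem h, one_mul]
  · have h' : x ∉ {x : ℝ × (V2 × V2) | Phi (x.2 - x.1 • e) ∈ Pv v} := h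
    simp only [Set.indicator_of_notMem h', Set.indicator_of_notMem h, zero_mul]

lemma integral_halfspace_prod (v : Amb) (e : V2 × V2) (G : V2 × V2 → ℂ) (δ a : ℝ) :
    ∫ ξ, (Pv v).indicator (fun _ => (1 : ℂ)) (Phi (ξ - a • e)) * (pvDensity δ a * G ξ) =
      pvDensity δ a * ∫ ξ, (Pv v).indicator (fun _ => (1 : ℂ)) (Phi (ξ - a • e)) * G ξ := by
  rw [← integral_const_mul]
  congr 1; ext ξ; ring

lemma integrable_pvDensity_mul_halfspace (v : Amb) (e : V2 × V2) (g1 g2 g3 : SchwartzMap V2 ℂ)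
    {δ : ℝ} (h0 : 0 < δ) : Integrable fun a => pvDensity δ a *
      ∫ ξ, (Pv v).indicator (fun _ => (1 : ℂ)) (Phi (ξ - a • e)) * freqProd g1 g2 g3 ξ := by
  have := (integrable_halfspace_prod v e g1 g2 g3 h0).integral_prod_left
  simpa only [integral_halfspace_prod] using this

lemma exists_norm_integral_corr_mul_pvKernel_le (v : Amb) : ∃ e : V2 × V2,
    ∀ (g1 g2 g3 : SchwartzMap V2 ℂ) (δ : ℝ), 0 < δ → δ < 1 →
      ‖∫ t, corr v g1 g2 g3 t * pvKernel δ t‖ ≤ ∫ a, ‖pvDensity δ a *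
        ∫ ξ, (Pv v).indicator (fun _ => (1 : ℂ)) (Phi (ξ - a • e)) * freqProd g1 g2 g3 ξ‖ := by
  by_cases h : ∃ ξ, dot6 (Phi ξ) v ≠ 0
  · obtain ⟨e, he⟩ := exists_dot6_Phi_eq_one h
    refine ⟨e, fun g1 g2 g3 δ h0 h1 => ?_⟩
    rw [integral_corr_mul_pvKernel v g1 g2 g3 h0 h1]
    have h2 : ∀ ξ, freqProd g1 g2 g3 ξ * ∫ a in Iic (dot6 (Phi ξ) v), pvDensity δ a =
        ∫ a, (Pv v).indicator (fun _ => (1 : ℂ)) (Phi (ξ - a • e)) *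
          (pvDensity δ a * freqProd g1 g2 g3 ξ) := fun ξ => by
      rw [integral_Iic_eq_integral_Iio, ← integral_indicator measurableSet_Iio,
        ← integral_const_mul]
      congr 1; ext a
      have hm : Phi (ξ - a • e) ∈ Pv v ↔ a ∈ Iio (dot6 (Phi ξ) v) := by
        rw [Phi_mem_Pv_iff, dot6_Phi_sub_smul, he, mul_one, sub_pos, Set.mem_Iio]
      by_cases ha : a ∈ Iio (dot6 (Phi ξ) v)
      · rw [Set.indicator_of_mem ha, Set.indicator_of_mem (hm.2 ha)]; ring
      · rw [Set.indicator_of_notMem ha, Set.indicator_of_notMem (mt hm.1 ha)]; ring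
    simp only [h2]
    have hint := integrable_halfspace_prod v e g1 g2 g3 h0
    rw [← integral_integral_swap (f := fun a ξ => (Pv v).indicator (fun _ => (1 : ℂ))
      (Phi (ξ - a • e)) * (pvDensity δ a * freqProd g1 g2 g3 ξ)) hint]
    simp only [integral_halfspace_prod]
    exact norm_integral_le_integral_norm _
  · push Not at h
    refine ⟨0, fun g1 g2 g3 δ h0 h1 => ?_⟩
    have hz : ∫ a in Iic 0, pvDensity δ a = 0 := by
      rw [← fourier_pvKernel h0 h1, fourier_eq_integral_chr]
      have := integral_neg_eq_self (fun t => (pvKernel δ t : ℂ)) volume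
      simp only [pvKernel_neg, Complex.ofReal_neg, integral_neg] at this
      simp only [mul_zero, neg_zero, chr_zero, one_mul]
      linear_combination (-1 / 2 : ℂ) * this
    rw [integral_corr_mul_pvKernel v g1 g2 g3 h0 h1]
    simp only [h, hz, mul_zero, integral_zero, norm_zero]
    positivity

lemma sum_norm_integral_corr_le_of_schwartz (p : Fin 3 → ℝ) (hp : ∀ k, 0 < p k)
    (hsum : (p 0)⁻¹ + (p 1)⁻¹ + (p 2)⁻¹ = 1)
    (Dt : Set Amb) (hmeas : MeasurableSet Dt) (C : ℝ)
    (hC : ∀ f1 f2 f3 : SchwartzMap V2 ℂ,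
      ENNReal.ofReal ‖Lambda Dt ⇑f1 ⇑f2 ⇑f3‖ ≤ ENNReal.ofReal C *
        (eLpNorm (⇑f1) (ENNReal.ofReal (p 0)) volume *
          (eLpNorm (⇑f2) (ENNReal.ofReal (p 1)) volume *
            eLpNorm (⇑f3) (ENNReal.ofReal (p 2)) volume)))
    {N : ℕ} (ξv vv : Fin N → Amb) (hξ : ∀ n, ξv n ∈ bdry Dt)
    (hv : ∀ n, BlowupNormal Dt (ξv n) (vv n))
    (g : Fin 3 → Fin N → SchwartzMap V2 ℂ) {δ : ℝ} (h0 : 0 < δ) (h1 : δ < 1) :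
    ENNReal.ofReal (∑ n, ‖∫ t, corr (vv n) (g 0 n) (g 1 n) (g 2 n) t * pvKernel δ t‖) ≤
      ENNReal.ofReal (4 * Real.pi) * (ENNReal.ofReal C * ENNReal.ofReal (meyerConst p) *
        ∏ j, eLpNorm (sqFun fun n => ⇑(g j n)) (ENNReal.ofReal (p j)) volume) := by
  choose e he using fun n => exists_norm_integral_corr_mul_pvKernel_le (vv n)
  have key := fun a : ℝ => sum_norm_halfspace_le p hp hsum Dt hmeas C hC ξv vv hξ hv g
    (fun n => a • e n)
  set B := ENNReal.ofReal C * ENNReal.ofReal (meyerConst p) *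
        ∏ j, eLpNorm (sqFun fun n => ⇑(g j n)) (ENNReal.ofReal (p j)) volume
  by_cases hB : B = ⊤
  · rw [hB, ENNReal.mul_top (by simp [Real.pi_pos])]
    exact le_top
  have hint := fun n => (integrable_pvDensity_mul_halfspace (vv n) (e n) (g 0 n) (g 1 n) (g 2 n)
    h0).norm
  rw [← ENNReal.ofReal_toReal hB, ← ENNReal.ofReal_mul (by positivity)]
  refine ENNReal.ofReal_le_ofReal ?_
  calc _ ≤ ∑ n, _ := Finset.sum_le_sum fun n _ => he n (g 0 n) (g 1 n) (g 2 n) δ h0 h1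
    _ ≤ ∫ a, ‖pvDensity δ a‖ * B.toReal := by
      rw [← integral_finsetSum _ fun n _ => hint n]
      refine integral_mono (integrable_finsetSum _ fun n _ => hint n)
        ((integrable_pvDensity h0).norm.mul_const _) fun a => ?_
      simp only [norm_mul, ← Finset.mul_sum]
      gcongr
      exact (ENNReal.ofReal_le_iff_le_toReal hB).1 (key a)
    _ ≤ _ := by
      rw [integral_mul_const]
      gcongr
      exact integral_norm_pvDensity_le h0
/-- `f` is bounded by `M` and vanishes outside the closed ball of radius `R`. -/
def BoundedInBall (M R : ℝ) (f : V2 → ℂ) : Prop :=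
  (∀ x, ‖f x‖ ≤ M) ∧ ∀ x, R < ‖x‖ → f x = 0

lemma BoundedInBall.mono {M M' R R' : ℝ} {f : V2 → ℂ} (h : BoundedInBall M R f) (hM : M ≤ M')
    (hR : R ≤ R') : BoundedInBall M' R' f :=
  ⟨fun x => (h.1 x).trans hM, fun x hx => h.2 x (hR.trans_lt hx)⟩

lemma BoundedInBall.nonneg {M R : ℝ} {f : V2 → ℂ} (h : BoundedInBall M R f) : 0 ≤ M :=
  (norm_nonneg _).trans (h.1 0)

lemma BoundedInBall.norm_le_indicator {M R : ℝ} {f : V2 → ℂ} (h : BoundedInBall M R f) (x : V2) :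
    ‖f x‖ ≤ (Metric.closedBall (0 : V2) R).indicator (fun _ => M) x := by
  by_cases hx : x ∈ Metric.closedBall (0 : V2) R
  · rw [Set.indicator_of_mem hx]; exact h.1 x
  · rw [Set.indicator_of_notMem hx, h.2 x (by simpa using hx), norm_zero]

lemma exists_boundedInBall {f : V2 → ℂ} (hb : ∃ M : ℝ, ∀ x, ‖f x‖ ≤ M)
    (hs : HasCompactSupport f) : ∃ M, BoundedInBall M M f := by
  obtain ⟨M, hM⟩ := hb
  obtain ⟨R, hR⟩ := hs.isCompact.isBounded.exists_norm_le
  refine ⟨max M R, fun x => (hM x).trans (le_max_left _ _), fun x hx => ?_⟩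
  by_contra h
  exact absurd (hR x (subset_tsupport f h)) (not_le.2 ((le_max_right _ _).trans_lt hx))

lemma BoundedInBall.integrable {M R : ℝ} {f : V2 → ℂ} (h : BoundedInBall M R f)
    (hf : Measurable f) : Integrable f :=
  Integrable.mono' ((integrable_indicator_iff measurableSet_closedBall).2
    (integrableOn_const measure_closedBall_lt_top.ne)) hf.aestronglyMeasurable
    (Eventually.of_forall h.norm_le_indicator)

/-- A sequence of smooth bumps concentrating at the origin. -/
def bumpSeq (k : ℕ) : ContDiffBump (0 : V2) where
  rIn := 1 / ((k : ℝ) + 1) / 2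
  rOut := 1 / ((k : ℝ) + 1)
  rIn_pos := by positivity
  rIn_lt_rOut := half_lt_self (by positivity)

lemma exists_schwartz_approx {M R : ℝ} {f : V2 → ℂ} (h : BoundedInBall M R f)
    (hf : Measurable f) : ∃ g : ℕ → SchwartzMap V2 ℂ,
      (∀ k, BoundedInBall M (R + 1) (g k)) ∧
      ∀ᵐ x, Tendsto (fun k => g k x) atTop (𝓝 (f x)) := by
  have hloc := (h.integrable hf).locallyIntegrable
  set φ : ℕ → V2 → ℂ := fun k =>
    convolution ((bumpSeq k).normed volume) f (ContinuousLinearMap.lsmul ℝ ℝ) volume with hφ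
  have hsub : ∀ k x, R + 1 < ‖x‖ → φ k x = 0 := fun k x hx => by
    by_contra hne
    obtain ⟨y, hy, z, hz, rfl⟩ := support_convolution_subset _ hne
    rw [ContDiffBump.support_normed_eq, mem_ball_zero_iff] at hy
    have hy1 : (bumpSeq k).rOut ≤ 1 := by
      simp only [bumpSeq]
      rw [div_le_one (by positivity)]
      linarith [(Nat.cast_nonneg k : (0 : ℝ) ≤ k)]
    have hz1 : ‖z‖ ≤ R := by
      by_contra hlt
      exact hz (h.2 z (not_le.1 hlt))
    linarith [norm_add_le y z]
  have hcs : ∀ k, HasCompactSupport (φ k) := fun k =>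
    HasCompactSupport.intro (isCompact_closedBall (0 : V2) (R + 1)) fun x hx =>
      hsub k x (by simpa using hx)
  have hsm : ∀ k, ContDiff ℝ (⊤ : ℕ∞) (φ k) := fun k =>
    (bumpSeq k).hasCompactSupport_normed.contDiff_convolution_left _
      (bumpSeq k).contDiff_normed hloc
  refine ⟨fun k => (hcs k).toSchwartzMap (hsm k), fun k => ⟨fun x => ?_, hsub k⟩, ?_⟩
  · change ‖φ k x‖ ≤ M
    calc ‖φ k x‖ ≤ ∫ y, (bumpSeq k).normed volume y * M := by
          refine norm_integral_le_of_norm_le ((bumpSeq k).integrable_normed.mul_const M)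
            (Eventually.of_forall fun y => ?_)
          rw [ContinuousLinearMap.lsmul_apply, norm_smul,
            Real.norm_of_nonneg ((bumpSeq k).nonneg_normed y)]
          exact mul_le_mul_of_nonneg_left (h.1 _) ((bumpSeq k).nonneg_normed y)
      _ = M := by rw [integral_mul_const, (bumpSeq k).integral_normed, one_mul]
  · refine ContDiffBump.ae_convolution_tendsto_right_of_locallyIntegrable (K := 2)
      tendsto_one_div_add_atTop_nhds_zero_nat (Eventually.of_forall fun k => ?_) hloc
    simp only [bumpSeq]
    linarith

lemma measurable_corr (v : Amb) {f1 f2 f3 : V2 → ℂ} (h1 : Measurable f1) (h2 : Measurable f2)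
    (h3 : Measurable f3) : StronglyMeasurable (corr v f1 f2 f3) := by
  refine StronglyMeasurable.integral_prod_right (f := fun (t : ℝ) (x : V2) =>
    f1 (x - t • v.1) * (f2 (x - t • v.2.1) * f3 (x - t • v.2.2))) (Measurable.stronglyMeasurable ?_)
  simp only [Function.uncurry_def]
  fun_prop

/-- The pointwise bound for the integrand of `corr`. -/
lemma norm_corr_integrand_le {M R : ℝ} {f1 f2 f3 : V2 → ℂ} (h1 : BoundedInBall M R f1)
    (h2 : BoundedInBall M R f2) (h3 : BoundedInBall M R f3) (a b c x : V2) :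
    ‖f1 (x - a) * (f2 (x - b) * f3 (x - c))‖ ≤
      (Metric.closedBall (0 : V2) R).indicator (fun _ => M) (x - a) * (M * M) := by
  have hM := h1.nonneg
  rw [norm_mul, norm_mul]
  have := h1.norm_le_indicator (x - a)
  have h0 := (norm_nonneg _).trans this
  gcongr
  · exact h2.1 _
  · exact h3.1 _

lemma integrable_indicator_closedBall (M R : ℝ) (a : V2) :
    Integrable fun x => (Metric.closedBall (0 : V2) R).indicator (fun _ => M) (x - a) :=
  ((integrable_indicator_iff measurableSet_closedBall).2
    (integrableOn_const measure_closedBall_lt_top.ne)).comp_sub_right a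

lemma norm_corr_le {M R : ℝ} (v : Amb) {f1 f2 f3 : V2 → ℂ} (h1 : BoundedInBall M R f1)
    (h2 : BoundedInBall M R f2) (h3 : BoundedInBall M R f3) (t : ℝ) :
    ‖corr v f1 f2 f3 t‖ ≤
      (∫ x, (Metric.closedBall (0 : V2) R).indicator (fun _ => M) x) * (M * M) := by
  rw [← integral_sub_right_eq_self _ (t • v.1), ← integral_mul_const]
  exact norm_integral_le_of_norm_le ((integrable_indicator_closedBall M R _).mul_const _)
    (Eventually.of_forall fun x => norm_corr_integrand_le h1 h2 h3 _ _ _ x)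

lemma tendsto_corr {M R : ℝ} (v : Amb) {f1 f2 f3 : V2 → ℂ} {g1 g2 g3 : ℕ → V2 → ℂ}
    (hm1 : ∀ k, Measurable (g1 k)) (hm2 : ∀ k, Measurable (g2 k)) (hm3 : ∀ k, Measurable (g3 k))
    (h1 : ∀ k, BoundedInBall M R (g1 k)) (h2 : ∀ k, BoundedInBall M R (g2 k))
    (h3 : ∀ k, BoundedInBall M R (g3 k))
    (l1 : ∀ᵐ x, Tendsto (fun k => g1 k x) atTop (𝓝 (f1 x)))
    (l2 : ∀ᵐ x, Tendsto (fun k => g2 k x) atTop (𝓝 (f2 x)))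
    (l3 : ∀ᵐ x, Tendsto (fun k => g3 k x) atTop (𝓝 (f3 x))) (t : ℝ) :
    Tendsto (fun k => corr v (g1 k) (g2 k) (g3 k) t) atTop (𝓝 (corr v f1 f2 f3 t)) := by
  refine tendsto_integral_of_dominated_convergence _ (fun k => ?_)
    ((integrable_indicator_closedBall M R (t • v.1)).mul_const (M * M))
    (fun k => Eventually.of_forall fun x =>
      norm_corr_integrand_le (h1 k) (h2 k) (h3 k) _ _ _ x) ?_
  · have := hm1 k
    have := hm2 k
    have := hm3 k
    exact Measurable.aestronglyMeasurable (by fun_prop)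
  · have q := fun w : V2 =>
      (measurePreserving_sub_right (volume : Measure V2) w).quasiMeasurePreserving
    filter_upwards [(q (t • v.1)).ae l1, (q (t • v.2.1)).ae l2, (q (t • v.2.2)).ae l3]
      with x e1 e2 e3
    exact e1.mul (e2.mul e3)

lemma tendsto_integral_corr {M R : ℝ} (v : Amb) {f1 f2 f3 : V2 → ℂ} {g1 g2 g3 : ℕ → V2 → ℂ}
    (hm1 : ∀ k, Measurable (g1 k)) (hm2 : ∀ k, Measurable (g2 k)) (hm3 : ∀ k, Measurable (g3 k))
    (h1 : ∀ k, BoundedInBall M R (g1 k)) (h2 : ∀ k, BoundedInBall M R (g2 k))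
    (h3 : ∀ k, BoundedInBall M R (g3 k))
    (l1 : ∀ᵐ x, Tendsto (fun k => g1 k x) atTop (𝓝 (f1 x)))
    (l2 : ∀ᵐ x, Tendsto (fun k => g2 k x) atTop (𝓝 (f2 x)))
    (l3 : ∀ᵐ x, Tendsto (fun k => g3 k x) atTop (𝓝 (f3 x))) {δ : ℝ} (h0 : 0 < δ) (hδ : δ < 1) :
    Tendsto (fun k => ∫ t, corr v (g1 k) (g2 k) (g3 k) t * pvKernel δ t) atTop
      (𝓝 (∫ t, corr v f1 f2 f3 t * pvKernel δ t)) := by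
  refine tendsto_integral_of_dominated_convergence _ (fun k => ?_)
    ((integrable_pvKernel h0 hδ).norm.const_mul
      ((∫ x, (Metric.closedBall (0 : V2) R).indicator (fun _ => M) x) * (M * M)))
    (fun k => Eventually.of_forall fun t => ?_) (Eventually.of_forall fun t => ?_)
  · exact ((measurable_corr v (hm1 k) (hm2 k) (hm3 k)).aestronglyMeasurable.mul
      (integrable_pvKernel h0 hδ).ofReal.aestronglyMeasurable)
  · rw [norm_mul, Complex.norm_real]
    exact mul_le_mul_of_nonneg_right (norm_corr_le v (h1 k) (h2 k) (h3 k) t) (norm_nonneg _)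
  · exact (tendsto_corr v hm1 hm2 hm3 h1 h2 h3 l1 l2 l3 t).mul_const _

lemma measurable_sqFun {N : ℕ} {f : Fin N → V2 → ℂ} (hf : ∀ n, Measurable (f n)) :
    Measurable (sqFun f) := by
  unfold sqFun
  fun_prop

lemma enorm_sqFun_rpow_le {p : ℝ} (hp : 0 < p) {M R : ℝ} {N : ℕ} {f : Fin N → V2 → ℂ}
    (h : ∀ n, BoundedInBall M R (f n)) (x : V2) : ‖sqFun f x‖ₑ ^ p ≤
      (Metric.closedBall (0 : V2) R).indicator
        (fun _ => ENNReal.ofReal (Real.sqrt (∑ _n : Fin N, M ^ 2)) ^ p) x := by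
  rw [Real.enorm_of_nonneg (sqFun_nonneg f x)]
  by_cases hx : x ∈ Metric.closedBall (0 : V2) R
  · rw [Set.indicator_of_mem hx]
    unfold sqFun
    gcongr with n
    exact (h n).1 x
  · rw [Set.indicator_of_notMem hx]
    have : sqFun f x = 0 := by
      simp [sqFun, fun n => (h n).2 x (by simpa using hx)]
    simp [this, hp]

lemma lintegral_closedBall_indicator_ne_top {p : ℝ} (hp : 0 < p) (K R : ℝ) :
    ∫⁻ x, (Metric.closedBall (0 : V2) R).indicator (fun _ => ENNReal.ofReal K ^ p) x ≠ ⊤ := by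
  rw [lintegral_indicator_const measurableSet_closedBall]
  exact ENNReal.mul_ne_top (ENNReal.rpow_ne_top_of_nonneg hp.le ENNReal.ofReal_ne_top)
    measure_closedBall_lt_top.ne

lemma eLpNorm_sqFun_ne_top {p : ℝ} (hp : 0 < p) {M R : ℝ} {N : ℕ} {f : Fin N → V2 → ℂ}
    (h : ∀ n, BoundedInBall M R (f n)) : eLpNorm (sqFun f) (ENNReal.ofReal p) volume ≠ ⊤ := by
  rw [eLpNorm_ofReal_eq hp]
  refine ENNReal.rpow_ne_top_of_nonneg (inv_nonneg.2 hp.le) ?_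
  exact ne_top_of_le_ne_top (lintegral_closedBall_indicator_ne_top hp _ R)
    (lintegral_mono (enorm_sqFun_rpow_le hp h))

lemma tendsto_eLpNorm_sqFun {p : ℝ} (hp : 0 < p) {M R : ℝ} {N : ℕ} {f : Fin N → V2 → ℂ}
    {g : ℕ → Fin N → V2 → ℂ} (hm : ∀ k n, Measurable (g k n))
    (h : ∀ k n, BoundedInBall M R (g k n))
    (l : ∀ n, ∀ᵐ x, Tendsto (fun k => g k n x) atTop (𝓝 (f n x))) :
    Tendsto (fun k => eLpNorm (sqFun (g k)) (ENNReal.ofReal p) volume) atTop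
      (𝓝 (eLpNorm (sqFun f) (ENNReal.ofReal p) volume)) := by
  simp only [eLpNorm_ofReal_eq hp]
  refine (ENNReal.continuous_rpow_const.tendsto _).comp ?_
  refine tendsto_lintegral_of_dominated_convergence _ (fun k => ?_)
    (fun k => Eventually.of_forall (enorm_sqFun_rpow_le hp (h k)))
    (lintegral_closedBall_indicator_ne_top hp _ R) ?_
  · have := measurable_sqFun (hm k)
    fun_prop
  · filter_upwards [ae_all_iff.2 l] with x hx
    refine (ENNReal.continuous_rpow_const.tendsto _).comp ((continuous_enorm.tendsto _).comp ?_)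
    unfold sqFun
    exact (Real.continuous_sqrt.tendsto _).comp
      (tendsto_finsetSum _ fun n _ => (hx n).norm.pow 2)

lemma sum_norm_integral_corr_le (p : Fin 3 → ℝ) (hp : ∀ k, 0 < p k)
    (hsum : (p 0)⁻¹ + (p 1)⁻¹ + (p 2)⁻¹ = 1)
    (Dt : Set Amb) (hmeas : MeasurableSet Dt) (C : ℝ)
    (hC : ∀ f1 f2 f3 : SchwartzMap V2 ℂ,
      ENNReal.ofReal ‖Lambda Dt ⇑f1 ⇑f2 ⇑f3‖ ≤ ENNReal.ofReal C *
        (eLpNorm (⇑f1) (ENNReal.ofReal (p 0)) volume *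
          (eLpNorm (⇑f2) (ENNReal.ofReal (p 1)) volume *
            eLpNorm (⇑f3) (ENNReal.ofReal (p 2)) volume)))
    {N : ℕ} (ξv vv : Fin N → Amb) (hξ : ∀ n, ξv n ∈ bdry Dt)
    (hv : ∀ n, BlowupNormal Dt (ξv n) (vv n)) {M R : ℝ}
    (f : Fin 3 → Fin N → V2 → ℂ) (hf : ∀ j n, Measurable (f j n))
    (hb : ∀ j n, BoundedInBall M R (f j n)) {δ : ℝ} (h0 : 0 < δ) (h1 : δ < 1) :
    ENNReal.ofReal (∑ n, ‖∫ t, corr (vv n) (f 0 n) (f 1 n) (f 2 n) t * pvKernel δ t‖) ≤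
      ENNReal.ofReal (4 * Real.pi) * (ENNReal.ofReal C * ENNReal.ofReal (meyerConst p) *
        ∏ j, eLpNorm (sqFun (f j)) (ENNReal.ofReal (p j)) volume) := by
  choose g hgb hgl using fun j n => exists_schwartz_approx (hb j n) (hf j n)
  have hgm : ∀ j n k, Measurable (g j n k) := fun j n k => (g j n k).continuous.measurable
  have hL := ENNReal.tendsto_ofReal (tendsto_finsetSum Finset.univ fun n _ =>
    (tendsto_integral_corr (vv n) (hgm 0 n) (hgm 1 n) (hgm 2 n) (hgb 0 n) (hgb 1 n) (hgb 2 n)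
      (hgl 0 n) (hgl 1 n) (hgl 2 n) h0 h1).norm)
  have hR := ENNReal.tendsto_finsetProd_of_ne_top Finset.univ (fun j _ =>
    tendsto_eLpNorm_sqFun (hp j) (g := fun k n => ⇑(g j n k)) (fun k n => hgm j n k)
      (fun k n => hgb j n k) (hgl j)) (fun j _ => eLpNorm_sqFun_ne_top (hp j) (hb j))
  have hR' := ENNReal.Tendsto.const_mul (a := ENNReal.ofReal (4 * Real.pi))
    (ENNReal.Tendsto.const_mul (a := ENNReal.ofReal C * ENNReal.ofReal (meyerConst p)) hR
      (Or.inr (by finiteness))) (Or.inr (by finiteness))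
  exact le_of_tendsto_of_tendsto' hL hR' fun k =>
    sum_norm_integral_corr_le_of_schwartz p hp hsum Dt hmeas C hC ξv vv hξ hv
      (fun j n => g j n k) h0 h1

/-- The derivative of `s ↦ cauchyBump δ⁻¹ s - cauchyBump δ s`. -/
def pvWeight (δ s : ℝ) : ℝ :=
  2 * s / δ ^ 2 * cauchyBump δ s ^ 2 - 2 * s * δ ^ 2 * cauchyBump δ⁻¹ s ^ 2

@[fun_prop] lemma continuous_pvWeight (δ : ℝ) : Continuous (pvWeight δ) := by
  unfold pvWeight; fun_prop

lemma hasDerivAt_cauchyBump (c s : ℝ) :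
    HasDerivAt (cauchyBump c) (-(2 * s / c ^ 2 * cauchyBump c s ^ 2)) s := by
  have h : HasDerivAt (fun s : ℝ => 1 + (s / c) ^ 2) (2 * s / c ^ 2) s := by
    refine ((((hasDerivAt_id' s).div_const c).pow 2).const_add 1).congr_deriv ?_
    ring
  have h0 : 1 + (s / c) ^ 2 ≠ 0 := by positivity
  refine (h.inv h0).congr_deriv ?_
  unfold cauchyBump; field_simp

lemma integral_pvWeight (δ : ℝ) {a : ℝ} (ha : 0 ≤ a) :
    ∫ s in Ioo 0 a, pvWeight δ s = cauchyBump δ⁻¹ a - cauchyBump δ a := by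
  rw [← integral_Ioc_eq_integral_Ioo, ← intervalIntegral.integral_of_le ha,
    intervalIntegral.integral_eq_sub_of_hasDerivAt
      (f := fun s => cauchyBump δ⁻¹ s - cauchyBump δ s)
      (fun s _ => ?_) ((continuous_pvWeight δ).intervalIntegrable _ _)]
  · simp [cauchyBump]
  · refine ((hasDerivAt_cauchyBump δ⁻¹ s).sub (hasDerivAt_cauchyBump δ s)).congr_deriv ?_
    simp only [pvWeight, inv_pow, div_inv_eq_mul]; ring

lemma pvWeight_nonneg {δ s : ℝ} (h0 : 0 < δ) (h1 : δ < 1) (hs : s ∈ Ioo (0 : ℝ) 1) :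
    0 ≤ pvWeight δ s := by
  obtain ⟨hs0, hs1⟩ := hs
  have e : pvWeight δ s = 2 * s * δ ^ 2 * (((δ ^ 2 + s ^ 2)⁻¹) ^ 2 -
      ((1 + δ ^ 2 * s ^ 2)⁻¹) ^ 2) := by
    unfold pvWeight cauchyBump; field_simp
  rw [e]
  refine mul_nonneg (by positivity) (sub_nonneg.2 ?_)
  have h2 : δ ^ 2 < 1 := by nlinarith
  have h3 : s ^ 2 < 1 := by nlinarith
  have h4 : δ ^ 2 + s ^ 2 ≤ 1 + δ ^ 2 * s ^ 2 := by nlinarith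
  exact pow_le_pow_left₀ (by positivity) (inv_anti₀ (by positivity) h4) 2

lemma pvWeight_le {δ s : ℝ} (h0 : 0 < δ) (hs : 0 < s) : pvWeight δ s ≤ 2 * δ ^ 2 / s ^ 3 := by
  have e : 2 * s / δ ^ 2 * cauchyBump δ s ^ 2 ≤ 2 * δ ^ 2 / s ^ 3 := by
    have : cauchyBump δ s ≤ δ ^ 2 / s ^ 2 := by
      unfold cauchyBump
      rw [inv_le_comm₀ (by positivity) (by positivity), inv_div, div_pow]
      linarith
    have hp := cauchyBump_pos δ s
    calc _ ≤ 2 * s / δ ^ 2 * (δ ^ 2 / s ^ 2) ^ 2 := by gcongr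
      _ = _ := by field_simp
  have : 0 ≤ 2 * s * δ ^ 2 * cauchyBump δ⁻¹ s ^ 2 := by positivity
  unfold pvWeight; linarith

lemma cauchyBump_sub_inv {δ t : ℝ} (h0 : δ ≠ 0) (ht : t ≠ 0) :
    cauchyBump δ⁻¹ t⁻¹ - cauchyBump δ t⁻¹ = cauchyBump δ⁻¹ t - cauchyBump δ t := by
  unfold cauchyBump
  have h1 : 1 + (t⁻¹ / δ⁻¹) ^ 2 = (t ^ 2 + δ ^ 2) / t ^ 2 := by field_simp
  have h2 : 1 + (t⁻¹ / δ) ^ 2 = (1 + δ ^ 2 * t ^ 2) / (δ ^ 2 * t ^ 2) := by field_simp; ring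
  have h3 : 1 + (t / δ⁻¹) ^ 2 = 1 + δ ^ 2 * t ^ 2 := by field_simp
  have h4 : 1 + (t / δ) ^ 2 = (t ^ 2 + δ ^ 2) / δ ^ 2 := by field_simp; ring
  rw [h1, h2, h3, h4]
  have : t ^ 2 + δ ^ 2 ≠ 0 := by positivity
  have : 1 + δ ^ 2 * t ^ 2 ≠ 0 := by positivity
  field_simp
  ring

/-- The truncation region of `truncPV`. -/
def truncSet (s : ℝ) : Set ℝ := {t : ℝ | s < |t| ∧ |t| < s⁻¹}

lemma integral_pvWeight_truncSet {δ t : ℝ} (h0 : δ ≠ 0) (ht : t ≠ 0) :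
    ∫ s in Ioo (0 : ℝ) 1, pvWeight δ s * (truncSet s).indicator 1 t =
      cauchyBump δ⁻¹ t - cauchyBump δ t := by
  have hpos := abs_pos.2 ht
  have hset : ∀ s ∈ Ioo (0 : ℝ) 1, pvWeight δ s * (truncSet s).indicator 1 t =
      (Ioo 0 (min |t| |t|⁻¹)).indicator (pvWeight δ) s := fun s hs => by
    have : t ∈ truncSet s ↔ s ∈ Ioo 0 (min |t| |t|⁻¹) := by
      simp only [truncSet, mem_ofPred_eq, mem_Ioo, hs.1, true_and, lt_min_iff,
        lt_inv_comm₀ hpos hs.1]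
    by_cases h : t ∈ truncSet s
    · simp [indicator_of_mem h, indicator_of_mem (this.1 h)]
    · simp [indicator_of_notMem h, indicator_of_notMem (mt this.2 h)]
  have hmin : min |t| |t|⁻¹ ≤ 1 := by
    rcases le_total |t| 1 with h | h
    · exact (min_le_left _ _).trans h
    · exact (min_le_right _ _).trans (inv_le_one_of_one_le₀ h)
  have heven : ∀ c, cauchyBump c |t| = cauchyBump c t := fun c => by
    simp [cauchyBump, div_pow]
  rw [setIntegral_congr_fun measurableSet_Ioo hset, setIntegral_indicator measurableSet_Ioo,
    Ioo_inter_Ioo, max_self, min_eq_right hmin, integral_pvWeight δ (by positivity)]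
  rcases min_choice |t| |t|⁻¹ with h | h <;> rw [h]
  · rw [heven, heven]
  · rw [cauchyBump_sub_inv h0 hpos.ne', heven, heven]

lemma measurableSet_truncSet : MeasurableSet {q : ℝ × ℝ | q.1 ∈ truncSet q.2} := by
  exact (measurableSet_lt (by fun_prop : Measurable fun q : ℝ × ℝ => q.2) (by fun_prop)).inter
    (measurableSet_lt (by fun_prop : Measurable fun q : ℝ × ℝ => |q.1|) (by fun_prop))

lemma truncPV_eq (v : Amb) (f1 f2 f3 : V2 → ℂ) (s : ℝ) :
    truncPV v f1 f2 f3 s = ∫ t in truncSet s, corr v f1 f2 f3 t / t := rfl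

lemma integrable_pvWeight_corr {M R : ℝ} (v : Amb) {f1 f2 f3 : V2 → ℂ} (m1 : Measurable f1)
    (m2 : Measurable f2) (m3 : Measurable f3) (h1 : BoundedInBall M R f1)
    (h2 : BoundedInBall M R f2) (h3 : BoundedInBall M R f3) {δ : ℝ} (h0 : 0 < δ) (hδ : δ < 1) :
    Integrable (fun q : ℝ × ℝ => corr v f1 f2 f3 q.1 / q.1 *
      ((pvWeight δ q.2 * (truncSet q.2).indicator 1 q.1 : ℝ) : ℂ))
      (volume.prod (volume.restrict (Ioo 0 1))) := by
  have hc := (measurable_corr v m1 m2 m3).measurable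
  have hind : Measurable fun q : ℝ × ℝ => (truncSet q.2).indicator (1 : ℝ → ℝ) q.1 :=
    (measurable_const (a := (1 : ℝ))).indicator measurableSet_truncSet
  have hw := (continuous_pvWeight δ).measurable
  have hm : Measurable (fun q : ℝ × ℝ => corr v f1 f2 f3 q.1 / q.1 *
      ((pvWeight δ q.2 * (truncSet q.2).indicator 1 q.1 : ℝ) : ℂ)) := by fun_prop
  have hwi : IntegrableOn (pvWeight δ) (Ioo 0 1) :=
    ((continuous_pvWeight δ).continuousOn.integrableOn_Icc).mono_set Ioo_subset_Icc_self
  refine (integrable_prod_iff hm.aestronglyMeasurable).2 ⟨Eventually.of_forall fun t => ?_, ?_⟩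
  · have hi : Integrable (fun s => pvWeight δ s * (truncSet s).indicator (1 : ℝ → ℝ) t)
        (volume.restrict (Ioo 0 1)) := by
      refine Integrable.mono hwi (hw.mul (hind.comp measurable_prodMk_left)).aestronglyMeasurable
        (Eventually.of_forall fun s => ?_)
      rw [norm_mul]
      refine mul_le_of_le_one_right (norm_nonneg _) ?_
      by_cases h : t ∈ truncSet s <;> simp [h]
    exact (hi.ofReal (𝕜 := ℂ)).const_mul (corr v f1 f2 f3 t / t)
  · have hi : Integrable fun t => corr v f1 f2 f3 t * (pvKernel δ t : ℂ) :=
      (integrable_pvKernel h0 hδ).ofReal.bdd_mul hc.aestronglyMeasurable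
        (Eventually.of_forall (norm_corr_le v h1 h2 h3))
    refine hi.norm.congr ?_
    filter_upwards [compl_mem_ae_iff.2 (measure_singleton (0 : ℝ))] with t ht
    have e : ∫ s in Ioo (0 : ℝ) 1, ‖corr v f1 f2 f3 t / t *
        ((pvWeight δ s * (truncSet s).indicator 1 t : ℝ) : ℂ)‖ =
        ∫ s in Ioo (0 : ℝ) 1, ‖corr v f1 f2 f3 t / t‖ *
          (pvWeight δ s * (truncSet s).indicator 1 t) := by
      refine setIntegral_congr_fun measurableSet_Ioo fun s hs => ?_
      have : 0 ≤ pvWeight δ s * (truncSet s).indicator 1 t :=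
        mul_nonneg (pvWeight_nonneg h0 hδ hs) (indicator_nonneg (fun _ _ => zero_le_one) _)
      simp only [norm_mul, Complex.norm_real, Real.norm_of_nonneg this]
    rw [e, integral_const_mul, integral_pvWeight_truncSet h0.ne' ht, ← mul_pvKernel]
    have hnn : 0 ≤ t * pvKernel δ t := by
      rw [mul_pvKernel, ← integral_pvWeight_truncSet h0.ne' ht]
      exact setIntegral_nonneg measurableSet_Ioo fun s hs =>
        mul_nonneg (pvWeight_nonneg h0 hδ hs) (indicator_nonneg (fun _ _ => zero_le_one) _)
    have ht' : (t : ℂ) ≠ 0 := Complex.ofReal_ne_zero.2 ht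
    rw [← Real.norm_of_nonneg hnn, ← Complex.norm_real, ← norm_mul]
    congr 1
    push_cast
    field_simp

lemma integral_corr_mul_pvKernel_eq_average {M R : ℝ} (v : Amb) {f1 f2 f3 : V2 → ℂ}
    (m1 : Measurable f1) (m2 : Measurable f2) (m3 : Measurable f3) (h1 : BoundedInBall M R f1)
    (h2 : BoundedInBall M R f2) (h3 : BoundedInBall M R f3) {δ : ℝ} (h0 : 0 < δ) (hδ : δ < 1) :
    ∫ t, corr v f1 f2 f3 t * pvKernel δ t =
      ∫ s in Ioo (0 : ℝ) 1, pvWeight δ s • truncPV v f1 f2 f3 s := by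
  have hsw := integral_integral_swap (f := fun t s => corr v f1 f2 f3 t / t *
    ((pvWeight δ s * (truncSet s).indicator 1 t : ℝ) : ℂ))
    (integrable_pvWeight_corr v m1 m2 m3 h1 h2 h3 h0 hδ)
  convert hsw using 1
  · refine integral_congr_ae ?_
    filter_upwards [compl_mem_ae_iff.2 (measure_singleton (0 : ℝ))] with t ht
    simp only [integral_const_mul, integral_complex_ofReal]
    rw [integral_pvWeight_truncSet h0.ne' ht, pvKernel]
    push_cast; ring
  · refine integral_congr_ae (Eventually.of_forall fun s => ?_)
    have hs : MeasurableSet (truncSet s) := measurable_prodMk_right measurableSet_truncSet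
    simp only [truncPV_eq, ← integral_smul, ← integral_indicator hs]
    refine integral_congr_ae (Eventually.of_forall fun t => ?_)
    by_cases h : t ∈ truncSet s
    · simp only [indicator_of_mem h, Complex.real_smul]; simp [mul_comm]
    · simp [indicator_of_notMem h]

lemma norm_truncPV_le {M R η s : ℝ} (v : Amb) {f1 f2 f3 : V2 → ℂ} (h1 : BoundedInBall M R f1)
    (h2 : BoundedInBall M R f2) (h3 : BoundedInBall M R f3) (hη : 0 < η) (hs : η ≤ s) :
    ‖truncPV v f1 f2 f3 s‖ ≤
      (∫ x, (Metric.closedBall (0 : V2) R).indicator (fun _ => M) x) * (M * M) / η *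
        (2 * η⁻¹) := by
  set B := (∫ x, (Metric.closedBall (0 : V2) R).indicator (fun _ => M) x) * (M * M)
  have hB : 0 ≤ B := (norm_nonneg _).trans (norm_corr_le v h1 h2 h3 0)
  have hsub : truncSet s ⊆ Icc (-η⁻¹) η⁻¹ := fun t ht =>
    abs_le.1 (ht.2.le.trans (inv_anti₀ hη hs))
  have hvol : volume.real (truncSet s) ≤ 2 * η⁻¹ := by
    refine (measureReal_mono hsub measure_Icc_lt_top.ne).trans ?_
    rw [Real.volume_real_Icc_of_le (by linarith [inv_pos.2 hη])]
    linarith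
  rw [truncPV_eq]
  refine (norm_setIntegral_le_of_norm_le_const (C := B / η)
    ((measure_mono hsub).trans_lt measure_Icc_lt_top) fun t ht => ?_).trans (by gcongr)
  rw [norm_div, Complex.norm_real, Real.norm_eq_abs]
  have := norm_corr_le v h1 h2 h3 t
  have := hs.trans ht.1.le
  gcongr

lemma measurable_truncPV (v : Amb) {f1 f2 f3 : V2 → ℂ} (m1 : Measurable f1) (m2 : Measurable f2)
    (m3 : Measurable f3) : StronglyMeasurable (truncPV v f1 f2 f3) := by
  have hc := (measurable_corr v m1 m2 m3).measurable
  have e : truncPV v f1 f2 f3 = fun s => ∫ t, {q : ℝ × ℝ | q.1 ∈ truncSet q.2}.indicator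
      (fun q => corr v f1 f2 f3 q.1 / q.1) (t, s) := funext fun s => by
    have hs : MeasurableSet (truncSet s) := measurable_prodMk_right measurableSet_truncSet
    rw [truncPV_eq, ← integral_indicator hs]
    rfl
  rw [e]
  have hm : Measurable ({q : ℝ × ℝ | q.1 ∈ truncSet q.2}.indicator
      (fun q => corr v f1 f2 f3 q.1 / q.1)) :=
    Measurable.indicator (by fun_prop) measurableSet_truncSet
  exact hm.stronglyMeasurable.integral_prod_left'

lemma integrableOn_truncPV {M R : ℝ} (v : Amb) {f1 f2 f3 : V2 → ℂ} (m1 : Measurable f1)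
    (m2 : Measurable f2) (m3 : Measurable f3) (h1 : BoundedInBall M R f1)
    (h2 : BoundedInBall M R f2) (h3 : BoundedInBall M R f3) {L : ℂ} (hL : HasPV v f1 f2 f3 L) :
    IntegrableOn (truncPV v f1 f2 f3) (Ioo 0 1) := by
  obtain ⟨η, hη, hη'⟩ := mem_nhdsGT_iff_exists_Ioo_subset.1
    (hL.norm.eventually (gt_mem_nhds (lt_add_one ‖L‖)))
  refine Measure.integrableOn_of_bounded measure_Ioo_lt_top.ne
    (measurable_truncPV v m1 m2 m3).aestronglyMeasurable
    (M := max (‖L‖ + 1) ((∫ x, (Metric.closedBall (0 : V2) R).indicator (fun _ => M) x) *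
      (M * M) / η * (2 * η⁻¹)))
    ((ae_restrict_iff' measurableSet_Ioo).2 (Eventually.of_forall fun s hs => ?_))
  rcases lt_or_ge s η with h | h
  · exact le_max_of_le_left (le_of_lt (hη' ⟨hs.1, h⟩))
  · exact le_max_of_le_right (norm_truncPV_le v h1 h2 h3 hη h)

lemma tendsto_integral_pvWeight :
    Tendsto (fun δ => ∫ s in Ioo 0 1, pvWeight δ s) (𝓝[>] (0 : ℝ)) (𝓝 1) := by
  have h : ContinuousAt (fun δ : ℝ => (1 - δ ^ 2) / (1 + δ ^ 2)) 0 :=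
    (Continuous.div (by fun_prop) (by fun_prop) fun δ => by positivity).continuousAt
  have h' := h.tendsto.mono_left (nhdsWithin_le_nhds (s := Ioi 0))
  norm_num at h'
  refine h'.congr' ?_
  filter_upwards [self_mem_nhdsWithin] with δ (hδ : 0 < δ)
  rw [integral_pvWeight δ zero_le_one]
  unfold cauchyBump
  field_simp
  ring

lemma tendstoUniformlyOn_pvWeight {u : Set ℝ} (hu : IsOpen u) (h0 : (0 : ℝ) ∈ u) :
    TendstoUniformlyOn pvWeight 0 (𝓝[>] 0) (Ioo 0 1 \ u) := by
  obtain ⟨η, hη, hu⟩ := Metric.isOpen_iff.1 hu 0 h0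
  have hlim : Tendsto (fun δ : ℝ => 2 * δ ^ 2 / η ^ 3) (𝓝[>] 0) (𝓝 0) := by
    have h : Continuous fun δ : ℝ => 2 * δ ^ 2 / η ^ 3 := by fun_prop
    simpa using (h.tendsto 0).mono_left (nhdsWithin_le_nhds (s := Ioi 0))
  refine Metric.tendstoUniformlyOn_iff.2 fun ε hε => ?_
  filter_upwards [hlim.eventually (gt_mem_nhds hε), Ioo_mem_nhdsGT one_pos] with δ hδ hδ' s hs
  have hηs : η ≤ s := by
    by_contra! h
    exact hs.2 (hu (by simpa [abs_of_pos hs.1.1] using h))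
  rw [Pi.zero_apply, dist_zero_left, Real.norm_of_nonneg (pvWeight_nonneg hδ'.1 hδ'.2 hs.1)]
  calc _ ≤ 2 * δ ^ 2 / s ^ 3 := pvWeight_le hδ'.1 hs.1.1
    _ ≤ 2 * δ ^ 2 / η ^ 3 := by gcongr
    _ < ε := hδ

lemma tendsto_integral_corr_mul_pvKernel {M R : ℝ} (v : Amb) {f1 f2 f3 : V2 → ℂ}
    (m1 : Measurable f1) (m2 : Measurable f2) (m3 : Measurable f3) (h1 : BoundedInBall M R f1)
    (h2 : BoundedInBall M R f2) (h3 : BoundedInBall M R f3) {L : ℂ} (hL : HasPV v f1 f2 f3 L) :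
    Tendsto (fun δ => ∫ t, corr v f1 f2 f3 t * pvKernel δ t) (𝓝[>] 0) (𝓝 L) := by
  have h01 : ∀ᶠ δ : ℝ in 𝓝[>] 0, δ ∈ Ioo 0 1 := Ioo_mem_nhdsGT one_pos
  have h := tendsto_setIntegral_peak_smul_of_integrableOn_of_tendsto (μ := volume)
    (l := 𝓝[>] (0 : ℝ)) (φ := pvWeight) (x₀ := 0) (a := L) (measurableSet_Ioo (a := 0) (b := 1))
    measurableSet_Ioo Subset.rfl self_mem_nhdsWithin measure_Ioo_lt_top.ne
    (h01.mono fun δ hδ s hs => pvWeight_nonneg hδ.1 hδ.2 hs)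
    (fun u hu h0 => tendstoUniformlyOn_pvWeight hu h0) tendsto_integral_pvWeight
    (Eventually.of_forall fun δ => (continuous_pvWeight δ).aestronglyMeasurable)
    (integrableOn_truncPV v m1 m2 m3 h1 h2 h3 hL)
    (Tendsto.mono_left hL (nhdsWithin_mono _ Ioo_subset_Ioi_self))
  refine h.congr' (h01.mono fun δ hδ => ?_)
  exact (integral_corr_mul_pvKernel_eq_average v m1 m2 m3 h1 h2 h3 hδ.1 hδ.2).symm

/-- **Meyer-type square function estimate, part (a).** If `Λ_{D̃}` is bounded on
`L^{p₁} × L^{p₂} × L^{p₃}`, then for any points `ξ⃗ⁿ ∈ ∂D̃` with blow-up normal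
vectors `v⃗ⁿ` one has the ℓ²-valued estimate for the directional principal-value
forms `Λ̃_{v⃗ⁿ}`, with a constant independent of `N`, of the points and of the
normal vectors. -/
theorem meyer_lemma_a (p : Fin 3 → ℝ) (hp : ∀ k, 0 < p k)
    (hsum : (p 0)⁻¹ + (p 1)⁻¹ + (p 2)⁻¹ = 1)
    (Dt : Set Amb) (hsub : Dt ⊆ Gamma) (hmeas : MeasurableSet Dt)
    (C : ℝ)
    (hC : ∀ f1 f2 f3 : SchwartzMap V2 ℂ,
      ENNReal.ofReal ‖Lambda Dt ⇑f1 ⇑f2 ⇑f3‖ ≤ ENNReal.ofReal C *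
        (eLpNorm (⇑f1) (ENNReal.ofReal (p 0)) volume *
          (eLpNorm (⇑f2) (ENNReal.ofReal (p 1)) volume *
            eLpNorm (⇑f3) (ENNReal.ofReal (p 2)) volume))) :
    ∃ C' : ℝ, ∀ (N : ℕ) (ξv vv : Fin N → Amb),
      (∀ n, ξv n ∈ bdry Dt) →
      (∀ n, BlowupNormal Dt (ξv n) (vv n)) →
      ∀ (f : Fin 3 → Fin N → V2 → ℂ) (L : Fin N → ℂ),
        (∀ j n, Measurable (f j n)) →
        (∀ j n, ∃ M : ℝ, ∀ x, ‖f j n x‖ ≤ M) →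
        (∀ j n, HasCompactSupport (f j n)) →
        (∀ n, HasPV (vv n) (f 0 n) (f 1 n) (f 2 n) (L n)) →
        ENNReal.ofReal (∑ n, ‖L n‖) ≤ ENNReal.ofReal C' *
          ∏ j : Fin 3, eLpNorm (fun x => Real.sqrt (∑ n, ‖f j n x‖ ^ 2))
            (ENNReal.ofReal (p j)) volume := by
  refine ⟨4 * Real.pi * (max C 0 * meyerConst p), fun N ξv vv hξ hv f L hf hb hs hL => ?_⟩
  choose K hK using fun j n => exists_boundedInBall (hb j n) (hs j n)
  obtain ⟨M, hM⟩ := Finite.exists_le fun q : Fin 3 × Fin N => K q.1 q.2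
  have hB : ∀ j n, BoundedInBall M M (f j n) := fun j n => (hK j n).mono (hM (j, n)) (hM (j, n))
  have hlim := ENNReal.tendsto_ofReal (tendsto_finsetSum Finset.univ fun n _ =>
    (tendsto_integral_corr_mul_pvKernel (vv n) (hf 0 n) (hf 1 n) (hf 2 n) (hB 0 n) (hB 1 n)
      (hB 2 n) (hL n)).norm)
  rw [ENNReal.ofReal_mul (by positivity), ENNReal.ofReal_mul (le_max_right _ _),
    ENNReal.ofReal_max, ENNReal.ofReal_zero, max_eq_left zero_le, mul_assoc]
  refine le_of_tendsto hlim ?_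
  filter_upwards [Ioo_mem_nhdsGT one_pos] with δ hδ
  exact sum_norm_integral_corr_le p hp hsum Dt hmeas C hC ξv vv hξ hv f hf hB hδ.1 hδ.2
end
end

section
/- Theorem (half-space forms outside the Banach triangle): Let v⃗ = (v1,v2,v3) ∈ Γ be nondegenerate, i.e. v1, v2, v3 are not all scalar multiples of one single vector of ℝ². Let (p1,p2,p3) be an admissible triple with p_i ≤ −1 for some i. Then the trilinear form Λ̃_{v⃗} is not of generalized restricted type (p1,p2,p3). -/
open MeasureTheory Filter Topology Set

noncomputable section

/-- A vector of `Γ` is degenerate if its three ℝ²-components are all scalar multiples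
of one single vector. -/
def Degenerate (v : Amb) : Prop :=
  ∃ (u : V2) (c1 c2 c3 : ℝ), v.1 = c1 • u ∧ v.2.1 = c2 • u ∧ v.2.2 = c3 • u

/-- Admissibility of an exponent triple, recorded through the reciprocals
`a k = 1/p k` (with `1/∞ = 0`): the condition `p k ∈ [1,∞] ∪ (−∞,−1]` is exactly
`a k ∈ [−1,1]`, at most one `p k` (equivalently `a k`) is negative, and
`1/p₁+1/p₂+1/p₃ = 1`. -/
def Admissible (a : Fin 3 → ℝ) : Prop :=
  (∀ k, -1 ≤ a k ∧ a k ≤ 1) ∧ (∀ k l, a k < 0 → a l < 0 → k = l) ∧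
    a 0 + a 1 + a 2 = 1

/-- Generalized restricted type `(p₁,p₂,p₃)` (recorded through the reciprocals
`a k = 1/p k`) for a partially defined trilinear form, given as the relation
`Lam f₁ f₂ f₃ z` ("`z` is the value of the form at `(f₁,f₂,f₃)`"). -/
def GenRestrictedType (Lam : (V2 → ℂ) → (V2 → ℂ) → (V2 → ℂ) → ℂ → Prop)
    (a : Fin 3 → ℝ) : Prop :=
  ∃ C : ℝ, ∀ E : Fin 3 → Set V2,
    (∀ k, MeasurableSet (E k)) → (∀ k, 0 < volume (E k)) → (∀ k, volume (E k) < ⊤) →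
    ∃ j : Fin 3, (∀ k, a k < 0 → j = k) ∧
      ∃ Et : Set V2, MeasurableSet Et ∧ Et ⊆ E j ∧ volume (E j) ≤ 2 * volume Et ∧
        ∀ f : Fin 3 → V2 → ℂ, (∀ k, Measurable (f k)) →
          (∀ k x, ‖f k x‖ ≤ Set.indicator (E k) (fun _ => (1 : ℝ)) x) →
          (∀ x, ‖f j x‖ ≤ Set.indicator Et (fun _ => (1 : ℝ)) x) →
          ∀ z : ℂ, Lam (f 0) (f 1) (f 2) z →
            ‖z‖ ≤ C * ((volume (E 0)).toReal ^ a 0 *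
              ((volume (E 1)).toReal ^ a 1 * (volume (E 2)).toReal ^ a 2))

theorem exists_linearEquiv_of_det_ne_zero (p q : V2) (h : p.1 * q.2 - p.2 * q.1 ≠ 0) :
    ∃ e : V2 ≃ₗ[ℝ] V2, e p = (-1, 0) ∧ e q = (-1, -1) := by
  set D := p.1 * q.2 - p.2 * q.1 with hD
  let T : V2 →ₗ[ℝ] V2 :=
    { toFun := fun x => (-((x.1 * q.2 - x.2 * q.1) / D + (p.1 * x.2 - p.2 * x.1) / D),
        -((p.1 * x.2 - p.2 * x.1) / D))
      map_add' := fun x y => by ext <;> simp <;> ring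
      map_smul' := fun c x => by ext <;> simp <;> ring }
  let S : V2 →ₗ[ℝ] V2 :=
    { toFun := fun y => ((y.2 - y.1) * p.1 - y.2 * q.1, (y.2 - y.1) * p.2 - y.2 * q.2)
      map_add' := fun x y => by ext <;> simp <;> ring
      map_smul' := fun c x => by ext <;> simp <;> ring }
  refine ⟨LinearEquiv.ofLinearMap T S ?_ ?_, ?_, ?_⟩
  · apply LinearMap.ext
    intro y
    ext
    · simp only [T, S, LinearMap.comp_apply, LinearMap.coe_mk, AddHom.coe_mk, LinearMap.id_apply]
      field_simp
      rw [hD]; ring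
    · simp only [T, S, LinearMap.comp_apply, LinearMap.coe_mk, AddHom.coe_mk, LinearMap.id_apply]
      field_simp
      rw [hD]; ring
  · apply LinearMap.ext
    intro y
    ext
    · simp only [T, S, LinearMap.comp_apply, LinearMap.coe_mk, AddHom.coe_mk, LinearMap.id_apply]
      field_simp
      rw [hD]; ring
    · simp only [T, S, LinearMap.comp_apply, LinearMap.coe_mk, AddHom.coe_mk, LinearMap.id_apply]
      field_simp
      rw [hD]; ring
  · simp only [T, LinearEquiv.coe_ofLinearMap, LinearMap.coe_mk, AddHom.coe_mk]
    ext
    · simp only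
      field_simp
      rw [hD]; ring
    · simp only
      field_simp
      ring
  · simp only [T, LinearEquiv.coe_ofLinearMap, LinearMap.coe_mk, AddHom.coe_mk]
    ext
    · simp only
      field_simp
      rw [hD]; ring
    · simp only
      field_simp
      rw [hD]

theorem degenerate_of_det_eq_zero (v : Amb) (hvG : v ∈ Gamma)
    (h : v.1.1 * v.2.1.2 - v.1.2 * v.2.1.1 = 0) : Degenerate v := by
  obtain ⟨⟨a, b⟩, ⟨c, d⟩, ⟨e, f⟩⟩ := v
  simp only [Gamma, mem_ofPred_eq, Prod.mk_add_mk, Prod.mk_eq_zero] at hvG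
  simp only at h
  obtain ⟨h1, h2⟩ := hvG
  obtain rfl : e = -(a + c) := by linarith
  obtain rfl : f = -(b + d) := by linarith
  by_cases ha : a = 0
  · by_cases hb : b = 0
    · refine ⟨(c, d), 0, 1, -1, ?_, ?_, ?_⟩ <;> simp [ha, hb]
    · refine ⟨(a, b), 1, d / b, -(1 + d / b), ?_, ?_, ?_⟩ <;> ext <;> simp <;> field_simp <;>
        linarith
  · refine ⟨(a, b), 1, c / a, -(1 + c / a), ?_, ?_, ?_⟩ <;> ext <;> simp <;> field_simp <;>
        linarith

/-- Linear coordinates in which the two differences `vᵢ - vₖ`, `k ≠ i`, have first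
coordinate `-1`. -/
theorem exists_adapted_coordinates (v : Amb) (hvG : v ∈ Gamma) (hnd : ¬ Degenerate v)
    (i : Fin 3) :
    ∃ e : V2 ≃ₗ[ℝ] V2, ∀ k, k ≠ i →
      (e (comp3 v i - comp3 v k)).1 = -1 ∧ |(e (comp3 v i - comp3 v k)).2| ≤ 1 := by
  have hD : v.1.1 * v.2.1.2 - v.1.2 * v.2.1.1 ≠ 0 :=
    fun h => hnd (degenerate_of_det_eq_zero v hvG h)
  have h1 : v.1.1 + v.2.1.1 + v.2.2.1 = 0 := congrArg Prod.fst hvG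
  have h2 : v.1.2 + v.2.1.2 + v.2.2.2 = 0 := congrArg Prod.snd hvG
  have key : ∀ j k : Fin 3, (∀ l, l ≠ i → l = j ∨ l = k) →
      ((comp3 v i - comp3 v j).1 * (comp3 v i - comp3 v k).2 -
        (comp3 v i - comp3 v j).2 * (comp3 v i - comp3 v k).1 ≠ 0) →
      ∃ e : V2 ≃ₗ[ℝ] V2, ∀ k, k ≠ i →
      (e (comp3 v i - comp3 v k)).1 = -1 ∧ |(e (comp3 v i - comp3 v k)).2| ≤ 1 := by
    intro j k hjk hdet
    obtain ⟨e, he1, he2⟩ := exists_linearEquiv_of_det_ne_zero _ _ hdet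
    refine ⟨e, fun l hl => ?_⟩
    rcases hjk l hl with rfl | rfl
    · rw [he1]; simp
    · rw [he2]; simp
  have e1 : v.2.2.1 = -(v.1.1 + v.2.1.1) := by linarith
  have e2 : v.2.2.2 = -(v.1.2 + v.2.1.2) := by linarith
  fin_cases i
  · refine key 1 2 (by decide) fun h => hD ?_
    simp [comp3, e1, e2] at h
    linarith
  · refine key 0 2 (by decide) fun h => hD ?_
    simp [comp3, e1, e2] at h
    linarith
  · refine key 0 1 (by decide) fun h => hD ?_
    simp [comp3, e1, e2] at h
    linarith

/-- For indicator functions the inner integral of the truncated form is a measure. -/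
theorem integral_indicator_translates (v : Amb) (F : Fin 3 → Set V2)
    (hF : ∀ k, MeasurableSet (F k)) (t : ℝ) :
    ∫ x : V2, (F 0).indicator (fun _ => (1 : ℂ)) (x - t • v.1) *
      ((F 1).indicator (fun _ => (1 : ℂ)) (x - t • v.2.1) *
        (F 2).indicator (fun _ => (1 : ℂ)) (x - t • v.2.2)) =
      ((volume {x : V2 | ∀ k, x - t • comp3 v k ∈ F k}).toReal : ℂ) := by
  have hm : MeasurableSet {x : V2 | ∀ k, x - t • comp3 v k ∈ F k} := by
    rw [ofPred_forall]
    exact MeasurableSet.iInter fun k => (measurable_id.sub_const _) (hF k)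
  rw [show (fun x : V2 => (F 0).indicator (fun _ => (1 : ℂ)) (x - t • v.1) *
      ((F 1).indicator (fun _ => (1 : ℂ)) (x - t • v.2.1) *
        (F 2).indicator (fun _ => (1 : ℂ)) (x - t • v.2.2))) =
      {x : V2 | ∀ k, x - t • comp3 v k ∈ F k}.indicator (fun _ => (1 : ℂ)) from ?_]
  · rw [integral_indicator_const _ hm]
    simp [Measure.real]
  · funext x
    simp only [Fin.forall_fin_succ, comp3]
    by_cases h0 : x - t • v.1 ∈ F 0 <;> by_cases h1 : x - t • v.2.1 ∈ F 1 <;>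
      by_cases h2 : x - t • v.2.2 ∈ F 2 <;> simp [h0, h1, h2]

/-- A set `T` in the unit parallelogram together with two thin strips of width `2δ`
yields a configuration whose `t`-slices are the slices of `|y₁ - t| ≤ δ`. -/
theorem volume_translates_eq (v : Amb) (i : Fin 3) (e : V2 ≃ₗ[ℝ] V2)
    (he : ∀ k, k ≠ i →
      (e (comp3 v i - comp3 v k)).1 = -1 ∧ |(e (comp3 v i - comp3 v k)).2| ≤ 1)
    (T : Set V2) (hT : T ⊆ e ⁻¹' (Icc 1 2 ×ˢ Icc 0 1)) (δ : ℝ) (hδ : δ ≤ 1 / 2)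
    (F : Fin 3 → Set V2) (hFi : F i = T)
    (hF : ∀ k, k ≠ i → F k = e ⁻¹' (Icc (-δ) δ ×ˢ Icc (-4) 4)) (t : ℝ) :
    volume {x : V2 | ∀ k, x - t • comp3 v k ∈ F k} =
      volume {q : V2 | q ∈ T ∧ |(e q).1 - t| ≤ δ} := by
  have hset : {x : V2 | ∀ k, x - t • comp3 v k ∈ F k} =
      (fun x => x - t • comp3 v i) ⁻¹' {q : V2 | q ∈ T ∧ |(e q).1 - t| ≤ δ} := by
    ext x
    have hx : ∀ k, e (x - t • comp3 v k) =
        e (x - t • comp3 v i) + t • e (comp3 v i - comp3 v k) := by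
      intro k
      rw [← map_smul, ← map_add]
      congr 1
      module
    simp only [mem_ofPred_eq, mem_preimage]
    set q := x - t • comp3 v i with hq
    constructor
    · intro h
      refine ⟨hFi ▸ h i, ?_⟩
      obtain ⟨k, hk⟩ : ∃ k, k ≠ i := exists_ne i
      have h1 := h k
      rw [hF k hk, mem_preimage, hx k] at h1
      have h2 := h1.1
      simp only [Prod.fst_add, Prod.smul_fst, (he k hk).1, smul_eq_mul, mem_Icc] at h2
      rw [abs_le]
      constructor <;> linarith [h2.1, h2.2]
    · rintro ⟨h1, h2⟩ k
      by_cases hk : k = i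
      · rw [hk, hFi]; exact h1
      · have h3 := hT h1
        obtain ⟨h4, h5⟩ := abs_le.1 h2
        obtain ⟨h6, h7⟩ := he k hk
        obtain ⟨h8, h9⟩ := h3.1
        obtain ⟨h10, h11⟩ := h3.2
        have ht : |t * (e (comp3 v i - comp3 v k)).2| ≤ 3 := by
          rw [abs_mul]
          have : |t| ≤ 3 := abs_le.2 ⟨by linarith, by linarith⟩
          calc |t| * _ ≤ 3 * 1 := by gcongr
            _ = 3 := by norm_num
        obtain ⟨h12, h13⟩ := abs_le.1 ht
        rw [hF k hk, mem_preimage, hx k]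
        refine ⟨?_, ?_⟩
        · simp only [Prod.fst_add, Prod.smul_fst, h6, smul_eq_mul, mem_Icc]
          constructor <;> linarith
        · simp only [Prod.snd_add, Prod.smul_snd, smul_eq_mul, mem_Icc]
          constructor <;> linarith
  simp_rw [hset, sub_eq_add_neg]
  exact measure_preimage_add_right _ _ _

/-- The weighted integral of the slices of `{(t, q) | q ∈ T, |φ q - t| ≤ δ}`. -/
theorem le_integral_slices (T : Set V2) (hTm : MeasurableSet T) (hTf : volume T < ⊤)
    (φ : V2 → ℝ) (hφ : Measurable φ) (hφT : ∀ q ∈ T, φ q ∈ Icc (1 : ℝ) 2)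
    (δ : ℝ) (hδ0 : 0 < δ) (hδ : δ ≤ 1 / 2) :
    2 * δ * (volume T).toReal / 3 ≤
      ∫ t : ℝ, (volume {q : V2 | q ∈ T ∧ |φ q - t| ≤ δ}).toReal / t := by
  set H : Set (ℝ × V2) := {z | z.2 ∈ T ∧ |φ z.2 - z.1| ≤ δ} with hH
  have hHm : MeasurableSet H := by
    have h : Measurable fun z : ℝ × V2 => |φ z.2 - z.1| := ((hφ.comp measurable_snd).sub measurable_fst).abs
    exact (measurable_snd hTm).inter (measurableSet_le h measurable_const)
  have hvol : (volume.prod volume) H = ENNReal.ofReal (2 * δ) * volume T := by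
    rw [Measure.prod_apply_symm hHm]
    have : ∀ q : V2, volume ((fun t : ℝ => (t, q)) ⁻¹' H) =
        T.indicator (fun _ => ENNReal.ofReal (2 * δ)) q := by
      intro q
      by_cases hq : q ∈ T
      · rw [indicator_of_mem hq]
        have : (fun t : ℝ => (t, q)) ⁻¹' H = Icc (φ q - δ) (φ q + δ) := by
          ext t
          simp only [hH, mem_preimage, mem_ofPred_eq, hq, true_and, mem_Icc, abs_le]
          constructor <;> rintro ⟨h1, h2⟩ <;> constructor <;> linarith
        rw [this, Real.volume_Icc]
        congr 1; ring
      · rw [indicator_of_notMem hq]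
        have : (fun t : ℝ => (t, q)) ⁻¹' H = ∅ := by
          ext t; simp [hH, hq]
        rw [this, measure_empty]
    simp_rw [this]
    rw [lintegral_indicator_const hTm]
  have hfin : (volume.prod volume) H ≠ ⊤ := by
    rw [hvol]; exact ENNReal.mul_ne_top ENNReal.ofReal_ne_top hTf.ne
  set g : ℝ → ℝ := fun t => (volume (Prod.mk t ⁻¹' H)).toReal with hg
  have hgi : Integrable g := Measure.integrable_measure_prodMk_left hHm hfin
  have hg0 : ∀ t, 0 ≤ g t := fun t => ENNReal.toReal_nonneg
  have hgs : ∀ t, t ∉ Icc (1 / 2 : ℝ) 3 → g t = 0 := by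
    intro t ht
    have : Prod.mk t ⁻¹' H = ∅ := by
      rw [eq_empty_iff_forall_notMem]
      rintro q ⟨h1, h2⟩
      obtain ⟨h3, h4⟩ := hφT q h1
      obtain ⟨h5, h6⟩ := abs_le.1 h2
      simp only at h5 h6
      exact ht ⟨by linarith, by linarith⟩
    simp [hg, this]
  have hgint : ∫ t, g t = 2 * δ * (volume T).toReal := by
    rw [hg, integral_toReal (measurable_measure_prodMk_left hHm).aemeasurable
      (Measure.ae_measure_lt_top hHm hfin), ← Measure.prod_apply hHm, hvol, ENNReal.toReal_mul,
      ENNReal.toReal_ofReal (by positivity)]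
  have hgd : Integrable fun t => g t / t := by
    refine (hgi.const_mul 2).mono (hgi.aestronglyMeasurable.aemeasurable.div
      measurable_id.aemeasurable).aestronglyMeasurable (ae_of_all _ fun t => ?_)
    by_cases ht : t ∈ Icc (1 / 2 : ℝ) 3
    · have htp : 0 < t := by linarith [ht.1]
      rw [Real.norm_of_nonneg (div_nonneg (hg0 t) htp.le),
        Real.norm_of_nonneg (by linarith [hg0 t]), div_le_iff₀ htp]
      nlinarith [hg0 t, ht.1]
    · simp [hgs t ht]
  calc 2 * δ * (volume T).toReal / 3 = ∫ t, g t / 3 := by rw [integral_div, hgint]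
    _ ≤ ∫ t, g t / t := by
      refine integral_mono (hgi.div_const 3) hgd fun t => ?_
      by_cases ht : t ∈ Icc (1 / 2 : ℝ) 3
      · exact div_le_div_of_nonneg_left (hg0 t) (by linarith [ht.1]) ht.2
      · simp [hgs t ht]
    _ = _ := rfl

theorem exists_hasPV_lower_bound (v : Amb) (i : Fin 3) (e : V2 ≃ₗ[ℝ] V2)
    (he : ∀ k, k ≠ i →
      (e (comp3 v i - comp3 v k)).1 = -1 ∧ |(e (comp3 v i - comp3 v k)).2| ≤ 1)
    (T : Set V2) (hTm : MeasurableSet T) (hTf : volume T < ⊤)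
    (hT : T ⊆ e ⁻¹' (Icc 1 2 ×ˢ Icc 0 1)) (δ : ℝ) (hδ0 : 0 < δ) (hδ : δ ≤ 1 / 2)
    (F : Fin 3 → Set V2) (hFm : ∀ k, MeasurableSet (F k)) (hFi : F i = T)
    (hF : ∀ k, k ≠ i → F k = e ⁻¹' (Icc (-δ) δ ×ˢ Icc (-4) 4)) :
    ∃ z : ℂ, HasPV v ((F 0).indicator fun _ => 1) ((F 1).indicator fun _ => 1)
      ((F 2).indicator fun _ => 1) z ∧ 2 * δ * (volume T).toReal / 3 ≤ ‖z‖ := by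
  have hφ : Measurable fun q : V2 => (e q).1 :=
    (continuous_fst.comp e.toLinearMap.continuous_of_finiteDimensional).measurable
  have hlow := le_integral_slices T hTm hTf _ hφ (fun q hq => (hT hq).1) δ hδ0 hδ
  set G : ℝ → ℝ := fun t =>
    (volume {q : V2 | q ∈ T ∧ |(e q).1 - t| ≤ δ}).toReal / t with hG
  refine ⟨((∫ t, G t : ℝ) : ℂ), ?_, ?_⟩
  · refine tendsto_const_nhds.congr' ?_
    have hmem : Ioo (0 : ℝ) (1 / 4) ∈ 𝓝[>] (0 : ℝ) := Ioo_mem_nhdsGT (by norm_num)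
    filter_upwards [hmem] with r hr
    have hinv : 4 < r⁻¹ := by
      rw [lt_inv_comm₀ (by norm_num) hr.1]; linarith [hr.2]
    rw [truncPV]
    simp_rw [integral_indicator_translates v F hFm,
      volume_translates_eq v i e he T hT δ hδ F hFi hF, ← Complex.ofReal_div]
    rw [integral_complex_ofReal]
    congr 1
    refine (setIntegral_eq_integral_of_forall_compl_eq_zero fun t ht => ?_).symm
    have : {q : V2 | q ∈ T ∧ |(e q).1 - t| ≤ δ} = ∅ := by
      rw [eq_empty_iff_forall_notMem]
      rintro q ⟨h1, h2⟩
      obtain ⟨h3, h4⟩ := (hT h1).1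
      obtain ⟨h5, h6⟩ := abs_le.1 h2
      refine ht ?_
      have htp : 0 < t := by linarith
      rw [mem_ofPred_eq, abs_of_pos htp]
      exact ⟨by linarith [hr.2], by linarith⟩
    show (volume {q : V2 | q ∈ T ∧ |(e q).1 - t| ≤ δ}).toReal / t = 0
    rw [this]; simp
  · rw [Complex.norm_real]
    exact hlow.trans (le_abs_self _)

theorem volume_preimage_box (e : V2 ≃ₗ[ℝ] V2) :
    ∃ M : ℝ, 0 < M ∧ ∀ a b c d : ℝ, a ≤ b → c ≤ d →
      volume (e ⁻¹' (Icc a b ×ˢ Icc c d)) = ENNReal.ofReal (M * ((b - a) * (d - c))) := by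
  refine ⟨|LinearMap.det (e.symm : V2 →ₗ[ℝ] V2)|, abs_pos.2 e.symm.isUnit_det'.ne_zero, ?_⟩
  intro a b c d hab hcd
  rw [Measure.addHaar_preimage_linearEquiv, Measure.volume_eq_prod, Measure.prod_prod,
    Real.volume_Icc, Real.volume_Icc, ENNReal.ofReal_mul (abs_nonneg _),
    ENNReal.ofReal_mul (by linarith)]

theorem exists_small_violation (A B s : ℝ) (hA : 0 < A) (hs : 1 < s) :
    ∃ δ : ℝ, 0 < δ ∧ δ ≤ 1 / 2 ∧ B * δ ^ s < A * δ := by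
  have hlim : Tendsto (fun δ : ℝ => B * δ ^ (s - 1)) (𝓝[>] 0) (𝓝 0) := by
    have h : ContinuousAt (fun δ : ℝ => B * δ ^ (s - 1)) 0 :=
      (Real.continuousAt_rpow_const 0 (s - 1) (Or.inr (by linarith))).const_mul B
    have ht := h.tendsto
    simp only [Real.zero_rpow (by linarith : s - 1 ≠ 0), mul_zero] at ht
    exact ht.mono_left nhdsWithin_le_nhds
  have hmem : Ioo (0 : ℝ) (1 / 2) ∈ 𝓝[>] (0 : ℝ) := Ioo_mem_nhdsGT (by norm_num)
  obtain ⟨δ, h1, h2⟩ := ((hlim.eventually (gt_mem_nhds hA)).and hmem).exists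
  refine ⟨δ, h2.1, h2.2.le, ?_⟩
  have : δ ^ s = δ ^ (s - 1) * δ := by
    rw [← Real.rpow_add_one h2.1.ne']; congr 1; ring
  rw [this, ← mul_assoc]
  exact mul_lt_mul_of_pos_right h1 h2.1

/-- **Theorem (half-space forms outside the Banach triangle).**  For a nondegenerate
`v⃗ ∈ Γ` and an admissible triple with some `p_i ≤ −1` (i.e. `a i = 1/p_i < 0`), the
principal-value form `Λ̃_{v⃗}` is not of generalized restricted type `(p₁,p₂,p₃)`. -/
theorem halfspace_outside_banach (v : Amb) (hvG : v ∈ Gamma)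
    (hnd : ¬ Degenerate v)
    (a : Fin 3 → ℝ) (hadm : Admissible a) (i : Fin 3) (hai : a i < 0) :
    ¬ GenRestrictedType (fun f1 f2 f3 z => HasPV v f1 f2 f3 z) a := by
  rintro ⟨C, hC⟩
  obtain ⟨e, he⟩ := exists_adapted_coordinates v hvG hnd i
  obtain ⟨M, hM, hbox⟩ := volume_preimage_box e
  have hem : Measurable e := e.toLinearMap.continuous_of_finiteDimensional.measurable
  obtain ⟨δ, hδ0, hδ, hlt⟩ := exists_small_violation (M / 3)
    (C * (M ^ a i * (16 * M) ^ (1 - a i))) (1 - a i) (by positivity) (by linarith)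
  set P : Set V2 := e ⁻¹' (Icc 1 2 ×ˢ Icc 0 1) with hP
  set B : Set V2 := e ⁻¹' (Icc (-δ) δ ×ˢ Icc (-4) 4) with hB
  have hPm : MeasurableSet P := hem (measurableSet_Icc.prod measurableSet_Icc)
  have hBm : MeasurableSet B := hem (measurableSet_Icc.prod measurableSet_Icc)
  have hPv : volume P = ENNReal.ofReal M := by
    rw [hP, hbox _ _ _ _ (by norm_num) (by norm_num)]; congr 1; ring
  have hBv : volume B = ENNReal.ofReal (16 * M * δ) := by
    rw [hB, hbox _ _ _ _ (by linarith) (by norm_num)]; congr 1; ring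
  obtain ⟨j, hj, Et, hEtm, hEtE, hEtv, hbound⟩ := hC (fun k => if k = i then P else B)
    (fun k => by split_ifs <;> assumption)
    (fun k => by
      split_ifs
      · rw [hPv]; simpa using hM
      · rw [hBv]; simpa using by positivity)
    (fun k => by
      split_ifs
      · rw [hPv]; exact ENNReal.ofReal_lt_top
      · rw [hBv]; exact ENNReal.ofReal_lt_top)
  obtain rfl : j = i := hj i hai
  simp only [if_true] at hEtE hEtv
  have hEtf : volume Et < ⊤ :=
    (measure_mono hEtE).trans_lt (by rw [hPv]; exact ENNReal.ofReal_lt_top)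
  set F : Fin 3 → Set V2 := fun k => if k = j then Et else B with hFdef
  have hFm : ∀ k, MeasurableSet (F k) := fun k => by
    simp only [hFdef]; split_ifs <;> assumption
  obtain ⟨z, hz, hzl⟩ := exists_hasPV_lower_bound v j e he Et hEtm hEtf hEtE δ hδ0 hδ F hFm
    (by simp [hFdef]) (fun k hk => by simp [hFdef, hk, hB])
  have hnorm : ∀ (S : Set V2) (x : V2), ‖S.indicator (fun _ => (1 : ℂ)) x‖ =
      S.indicator (fun _ => (1 : ℝ)) x := fun S x => by
    rw [norm_indicator_eq_indicator_norm]; simp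
  have hfin := hbound (fun k => (F k).indicator fun _ => 1)
    (fun k => measurable_const.indicator (hFm k))
    (fun k x => by
      rw [hnorm]
      refine indicator_le_indicator_of_subset ?_ (fun _ => zero_le_one) x
      simp only [hFdef]
      split_ifs
      exacts [hEtE, subset_rfl])
    (fun x => by rw [hnorm]; simp [hFdef])
    z hz
  have hEtM : M ≤ 2 * (volume Et).toReal := by
    have h := ENNReal.toReal_mono (ENNReal.mul_ne_top ENNReal.ofNat_ne_top hEtf.ne) hEtv
    rwa [hPv, ENNReal.toReal_ofReal hM.le, ENNReal.toReal_mul, ENNReal.toReal_ofNat] at h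
  have hPr : (volume P).toReal = M := by rw [hPv, ENNReal.toReal_ofReal hM.le]
  have hBr : (volume B).toReal = 16 * M * δ := by
    rw [hBv, ENNReal.toReal_ofReal (by positivity)]
  have hpos : 0 < 16 * M * δ := by positivity
  have hsum := hadm.2.2
  have hrhs : (volume (if (0 : Fin 3) = j then P else B)).toReal ^ a 0 *
      ((volume (if (1 : Fin 3) = j then P else B)).toReal ^ a 1 *
        (volume (if (2 : Fin 3) = j then P else B)).toReal ^ a 2) =
      M ^ a j * (16 * M * δ) ^ (1 - a j) := by
    fin_cases j
    · simp only [Fin.zero_eta, if_true, one_ne_zero, if_false, hPr, hBr, Fin.reduceEq]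
      rw [← Real.rpow_add hpos]
      congr 2; linarith
    · simp only [Fin.mk_one, if_true, zero_ne_one, if_false, hPr, hBr, Fin.reduceEq]
      rw [mul_left_comm, ← Real.rpow_add hpos]
      congr 2; linarith
    · simp only [Fin.reduceFinMk, if_true, if_false, hPr, hBr, Fin.reduceEq]
      rw [← mul_assoc, ← Real.rpow_add hpos, mul_comm]
      congr 2; linarith
  rw [hrhs, Real.mul_rpow (by positivity) hδ0.le] at hfin
  nlinarith [hzl.trans hfin]
end
end

section
/- Logarithmic lower bound: Let w1, w2 ∈ ℝ² be linearly independent. There is a constant c > 0, depending only on w1 and w2, such that for every ε ∈ (0, 1/2) and every rectangle R ⊆ ℝ² with side lengths 1 and ε whose side of length 1 is parallel to w1 − w2, the principal value S_{(w1,w2)}(χ_R, χ_R)(x) exists for almost every x ∈ ℝ² and ∫_{ℝ²} |S_{(w1,w2)}(χ_R, χ_R)(x)| dx ≥ c · ε · log(1/ε). -/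
open MeasureTheory Filter Topology Set

noncomputable section

/-- Rotation of a vector of ℝ² by +90 degrees. -/
def perp (u : V2) : V2 := (-u.2, u.1)

/-- The closed rectangle with corner `c`, unit side direction `u` (and `perp u`),
and side lengths `l1` (in direction `u`) and `l2`. -/
def rectSet (c u : V2) (l1 l2 : ℝ) : Set V2 :=
  {x | ∃ s t : ℝ, s ∈ Set.Icc 0 l1 ∧ t ∈ Set.Icc 0 l2 ∧ x = c + s • u + t • perp u}

/-- The `δ`-truncation of the directional bilinear Hilbert transform
`S_{(w₁,w₂)}(f,g)(x) = p.v.∫ f(x−tw₁) g(x−tw₂) dt/t`. -/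
def truncS (w1 w2 : V2) (f g : V2 → ℝ) (x : V2) (δ : ℝ) : ℝ :=
  ∫ t in {t : ℝ | δ < |t| ∧ |t| < δ⁻¹}, f (x - t • w1) * g (x - t • w2) / t

/-- `L` is the principal value `S_{(w₁,w₂)}(f,g)(x)`. -/
def SPV (w1 w2 : V2) (f g : V2 → ℝ) (x : V2) (L : ℝ) : Prop :=
  Filter.Tendsto (truncS w1 w2 f g x) (𝓝[>] (0 : ℝ)) (𝓝 L)

theorem measurableSet_truncation (δ : ℝ) : MeasurableSet {t : ℝ | δ < |t| ∧ |t| < δ⁻¹} :=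
  ((isOpen_lt continuous_const continuous_abs).inter
    (isOpen_lt continuous_abs continuous_const)).measurableSet

theorem volume_truncation_ne_top (δ : ℝ) : volume {t : ℝ | δ < |t| ∧ |t| < δ⁻¹} ≠ ⊤ := by
  refine ne_top_of_le_ne_top (measure_Ioo_lt_top (a := -δ⁻¹) (b := δ⁻¹)).ne (measure_mono ?_)
  exact fun t ht => abs_lt.1 ht.2

/-- A bounded measurable function divided by `t` is integrable on each truncation. -/
theorem integrableOn_div_truncation {φ : ℝ → ℝ} (hφ : Measurable φ) {C : ℝ}
    (hC : ∀ t, |φ t| ≤ C) {δ : ℝ} (hδ : 0 < δ) :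
    IntegrableOn (fun t => φ t / t) {t : ℝ | δ < |t| ∧ |t| < δ⁻¹} := by
  refine Measure.integrableOn_of_bounded (M := C / δ) (volume_truncation_ne_top δ)
    (hφ.div measurable_id).aestronglyMeasurable ?_
  filter_upwards [ae_restrict_mem (measurableSet_truncation δ)] with t ht
  rw [Real.norm_eq_abs, abs_div]
  have := (abs_nonneg _).trans (hC t)
  have := ht.1
  gcongr
  exact hC t

/-- Principal values of bounded compactly supported functions that are constant near `0` exist. -/
theorem exists_tendsto_truncation {φ : ℝ → ℝ} (hφ : Measurable φ) {C : ℝ}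
    (hC : ∀ t, |φ t| ≤ C) {k : ℝ} (hk : ∀ᶠ t in 𝓝 (0 : ℝ), φ t = k) {M : ℝ}
    (hM : ∀ t, M < |t| → φ t = 0) :
    ∃ L, Tendsto (fun δ => ∫ t in {t : ℝ | δ < |t| ∧ |t| < δ⁻¹}, φ t / t)
      (𝓝[>] (0 : ℝ)) (𝓝 L) := by
  obtain ⟨r, hr, hrk⟩ := Metric.eventually_nhds_iff.1 hk
  simp only [dist_zero_right, Real.norm_eq_abs] at hrk
  set χ : ℝ → ℝ := {t : ℝ | |t| < r}.indicator fun _ => k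
  have hs : MeasurableSet {t : ℝ | |t| < r} :=
    (isOpen_lt continuous_abs continuous_const).measurableSet
  have hχ : Measurable χ := measurable_const.indicator hs
  have hχC : ∀ t, |χ t| ≤ |k| := fun t => by
    by_cases h : |t| < r <;> simp [χ, h]
  refine ⟨∫ t, (φ t / t - χ t / t), tendsto_const_nhds.congr' ?_⟩
  have hR : 0 < max (max M r) 1 := lt_max_of_lt_right one_pos
  filter_upwards [Ioo_mem_nhdsGT (lt_min hr (inv_pos.2 hR))] with δ hδ
  have hδ0 : 0 < δ := hδ.1
  have hδr : δ < r := hδ.2.trans_le (min_le_left _ _)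
  have hδR : max (max M r) 1 < δ⁻¹ :=
    (lt_inv_comm₀ hδ0 hR).1 (hδ.2.trans_le (min_le_right _ _))
  have hodd : ∫ t in {t : ℝ | δ < |t| ∧ |t| < δ⁻¹}, χ t / t = 0 := by
    rw [← integral_indicator (measurableSet_truncation δ)]
    have h := integral_neg_eq_self
      ({t : ℝ | δ < |t| ∧ |t| < δ⁻¹}.indicator fun t => χ t / t) volume
    have h2 : ∀ t : ℝ, ({t : ℝ | δ < |t| ∧ |t| < δ⁻¹}.indicator fun t => χ t / t) (-t) =
        -({t : ℝ | δ < |t| ∧ |t| < δ⁻¹}.indicator fun t => χ t / t) t := fun t => by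
      simp only [indicator, mem_ofPred_eq, abs_neg, χ]
      split_ifs <;> simp [div_neg]
    simp only [h2, integral_neg] at h
    linarith
  rw [← setIntegral_eq_integral_of_forall_compl_eq_zero (s := {t : ℝ | δ < |t| ∧ |t| < δ⁻¹}),
    integral_sub (integrableOn_div_truncation hφ hC hδ0)
      (integrableOn_div_truncation hχ hχC hδ0), hodd, sub_zero]
  intro t ht
  by_cases h : |t| < r
  · simp [χ, h, hrk h]
  · have h1 : δ < |t| := hδr.trans_le (not_lt.1 h)
    have h2 : δ⁻¹ ≤ |t| := not_lt.1 fun h3 => ht ⟨h1, h3⟩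
    have h3 : M < |t| :=
      ((le_max_left _ _).trans (le_max_left _ _)).trans_lt (hδR.trans_le h2)
    simp [χ, h, hM t h3]

/-- A lower bound for truncated integrals of functions supported on the positive half line. -/
theorem le_integral_truncation {φ : ℝ → ℝ} (hφ : Measurable φ) (h0 : ∀ t, 0 ≤ φ t)
    (h1 : ∀ t, φ t ≤ 1) (hneg : ∀ t ≤ 0, φ t = 0) {α β : ℝ} (hα : 0 < α) (hαβ : α ≤ β)
    (hφ1 : ∀ t ∈ Icc α β, φ t = 1) {δ : ℝ} (hδ : 0 < δ) (hδα : δ < α) (hδβ : β < δ⁻¹) :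
    (β - α) / β ≤ ∫ t in {t : ℝ | δ < |t| ∧ |t| < δ⁻¹}, φ t / t := by
  have hint := integrableOn_div_truncation hφ (C := 1)
    (fun t => abs_le.2 ⟨by linarith [h0 t], h1 t⟩) hδ
  have hsub : Icc α β ⊆ {t : ℝ | δ < |t| ∧ |t| < δ⁻¹} := fun t ht => by
    simp only [mem_ofPred_eq, abs_of_pos (hα.trans_le ht.1)]
    exact ⟨hδα.trans_le ht.1, ht.2.trans_lt hδβ⟩
  have hpos : ∀ t, 0 ≤ φ t / t := fun t => by
    rcases le_total t 0 with h | h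
    · simp [hneg t h]
    · exact div_nonneg (h0 t) h
  calc (β - α) / β = volume.real (Icc α β) • β⁻¹ := by
        rw [Real.volume_real_Icc_of_le hαβ, smul_eq_mul, div_eq_mul_inv]
    _ ≤ ∫ t in Icc α β, φ t / t := by
        refine setIntegral_ge_of_const_le measurableSet_Icc measure_Icc_lt_top.ne
          (fun t ht => ?_) (hint.mono_set hsub)
        rw [hφ1 t ht, one_div]
        exact inv_anti₀ (hα.trans_le ht.1) ht.2
    _ ≤ _ := setIntegral_mono_set hint (ae_of_all _ hpos) hsub.eventuallyLE

theorem mem_rectSet_iff {c u : V2} (hu : dot2 u u = 1) {l1 l2 : ℝ} {x : V2} :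
    x ∈ rectSet c u l1 l2 ↔
      dot2 (x - c) u ∈ Icc 0 l1 ∧ dot2 (x - c) (perp u) ∈ Icc 0 l2 := by
  simp only [dot2] at hu
  constructor
  · rintro ⟨s, t, hs, ht, rfl⟩
    have e1 : dot2 (c + s • u + t • perp u - c) u = s := by
      simp [dot2, perp]; linear_combination s * hu
    have e2 : dot2 (c + s • u + t • perp u - c) (perp u) = t := by
      simp [dot2, perp]; linear_combination t * hu
    rw [e1, e2]
    exact ⟨hs, ht⟩
  · rintro ⟨hs, ht⟩
    refine ⟨_, _, hs, ht, ?_⟩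
    ext <;> simp [dot2, perp]
    · linear_combination (c.1 - x.1) * hu
    · linear_combination (c.2 - x.2) * hu

theorem rectSet_neg (c u : V2) (l1 l2 : ℝ) :
    rectSet (c + l1 • u + l2 • perp u) (-u) l1 l2 = rectSet c u l1 l2 := by
  have key : ∀ s t : ℝ, c + l1 • u + l2 • perp u + s • (-u) + t • perp (-u) =
      c + (l1 - s) • u + (l2 - t) • perp u := fun s t => by
    ext <;> simp [perp] <;> ring
  ext x
  constructor
  · rintro ⟨s, t, hs, ht, rfl⟩
    exact ⟨l1 - s, l2 - t, ⟨by linarith [hs.2], by linarith [hs.1]⟩,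
      ⟨by linarith [ht.2], by linarith [ht.1]⟩, key s t⟩
  · rintro ⟨s, t, hs, ht, rfl⟩
    refine ⟨l1 - s, l2 - t, ⟨by linarith [hs.2], by linarith [hs.1]⟩,
      ⟨by linarith [ht.2], by linarith [ht.1]⟩, ?_⟩
    rw [key]
    simp

/-- The coordinates of a point with respect to the corner and the sides of a rectangle. -/
def rectCoord (c u : V2) (x : V2) : V2 := (dot2 (x - c) u, dot2 (x - c) (perp u))

theorem continuous_rectCoord (c u : V2) : Continuous (rectCoord c u) := by
  unfold rectCoord dot2
  fun_prop

theorem measurePreserving_rectCoord (c : V2) {u : V2} (hu : dot2 u u = 1) :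
    MeasurePreserving (rectCoord c u) := by
  let f : V2 →ₗ[ℝ] V2 := Matrix.toLin (.finTwoProd ℝ) (.finTwoProd ℝ) !![u.1, u.2; -u.2, u.1]
  have hdet : LinearMap.det f = 1 := by
    rw [LinearMap.det_toLin, Matrix.det_fin_two_of, ← hu, dot2]
    ring
  have hf : MeasurePreserving f := by
    refine ⟨f.continuous_of_finiteDimensional.measurable, ?_⟩
    rw [Measure.map_linearMap_addHaar_eq_smul_addHaar _ (by simp [hdet]), hdet]
    simp
  have heq : rectCoord c u = f ∘ fun x => x - c := by
    ext x <;> simp [rectCoord, f, dot2, perp, Matrix.toLin_finTwoProd_apply] <;> ring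
  rw [heq]
  exact hf.comp (measurePreserving_sub_right volume c)

theorem rectSet_eq_preimage {c u : V2} (hu : dot2 u u = 1) (l1 l2 : ℝ) :
    rectSet c u l1 l2 = rectCoord c u ⁻¹' (Icc 0 l1 ×ˢ Icc 0 l2) := by
  ext x
  exact mem_rectSet_iff hu

theorem isClosed_rectSet {c u : V2} (hu : dot2 u u = 1) (l1 l2 : ℝ) :
    IsClosed (rectSet c u l1 l2) := by
  rw [rectSet_eq_preimage hu]
  exact (isClosed_Icc.prod isClosed_Icc).preimage (continuous_rectCoord c u)

/-- The indicator of a rectangle is locally constant almost everywhere. -/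
theorem ae_eventually_indicator_rectSet_eq {c u : V2} (hu : dot2 u u = 1) (l1 l2 : ℝ) :
    ∀ᵐ x : V2, ∀ᶠ y in 𝓝 x, (rectSet c u l1 l2).indicator (fun _ => (1 : ℝ)) y =
      (rectSet c u l1 l2).indicator (fun _ => (1 : ℝ)) x := by
  have h1 (r : ℝ) : ∀ᵐ p : ℝ × ℝ, p.1 ≠ r :=
    Measure.quasiMeasurePreserving_fst.ae (Measure.ae_ne volume r)
  have h2 (r : ℝ) : ∀ᵐ p : ℝ × ℝ, p.2 ≠ r :=
    Measure.quasiMeasurePreserving_snd.ae (Measure.ae_ne volume r)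
  have hq := (measurePreserving_rectCoord c hu).quasiMeasurePreserving
  filter_upwards [hq.ae (h1 0), hq.ae (h1 l1), hq.ae (h2 0), hq.ae (h2 l2)] with x a0 a1 b0 b1
  by_cases hx : x ∈ rectSet c u l1 l2
  · have hmem := hx
    rw [rectSet_eq_preimage hu] at hmem
    obtain ⟨⟨ha0, ha1⟩, hb0, hb1⟩ := hmem
    have hopen : IsOpen (rectCoord c u ⁻¹' (Ioo 0 l1 ×ˢ Ioo 0 l2)) :=
      (isOpen_Ioo.prod isOpen_Ioo).preimage (continuous_rectCoord c u)
    filter_upwards [hopen.mem_nhds ⟨⟨ha0.lt_of_ne' a0, ha1.lt_of_ne a1⟩,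
      hb0.lt_of_ne' b0, hb1.lt_of_ne b1⟩] with y hy
    have hy' : y ∈ rectSet c u l1 l2 := by
      rw [rectSet_eq_preimage hu]
      exact ⟨Ioo_subset_Icc_self hy.1, Ioo_subset_Icc_self hy.2⟩
    simp [hx, hy']
  · filter_upwards [(isClosed_rectSet hu l1 l2).isOpen_compl.mem_nhds hx] with y hy
    rw [indicator_of_notMem hx, indicator_of_notMem hy]

theorem rectCoord_sub_smul {u : V2} (hu : dot2 u u = 1) (c x : V2) (p q t : ℝ) :
    rectCoord c u (x - t • (p • u + q • perp u)) =
      ((rectCoord c u x).1 - t * p, (rectCoord c u x).2 - t * q) := by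
  simp only [dot2] at hu
  ext <;> simp [rectCoord, dot2, perp]
  · linear_combination (-t * p) * hu
  · linear_combination (-t * q) * hu

theorem measurable_indicator_line {R : Set V2} (hR : MeasurableSet R) (x w : V2) :
    Measurable fun t : ℝ => R.indicator (fun _ => (1 : ℝ)) (x - t • w) :=
  (measurable_const.indicator hR).comp (by fun_prop)

/-- Almost everywhere existence of the principal value for a rectangle `R`. -/
theorem ae_exists_SPV_rectSet {c u : V2} (hu : dot2 u u = 1) (l1 l2 p1 p2 : ℝ) {q : ℝ}
    (hq : 0 < q) :
    ∀ᵐ x : V2, ∃ L, SPV (p1 • u + q • perp u) (p2 • u + q • perp u)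
      ((rectSet c u l1 l2).indicator fun _ => (1 : ℝ))
      ((rectSet c u l1 l2).indicator fun _ => (1 : ℝ)) x L := by
  have hR := (isClosed_rectSet (c := c) hu l1 l2).measurableSet
  have hbd : ∀ y, |(rectSet c u l1 l2).indicator (fun _ => (1 : ℝ)) y| ≤ 1 := fun y => by
    by_cases h : y ∈ rectSet c u l1 l2 <;> simp [h]
  filter_upwards [ae_eventually_indicator_rectSet_eq (c := c) hu l1 l2] with x hx
  have htend (w : V2) : Tendsto (fun t : ℝ => x - t • w) (𝓝 0) (𝓝 x) := by
    have : Continuous fun t : ℝ => x - t • w := by fun_prop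
    simpa using this.tendsto 0
  refine exists_tendsto_truncation (C := 1)
    ((measurable_indicator_line hR x _).mul (measurable_indicator_line hR x _))
    (fun t => ?_) (k := (rectSet c u l1 l2).indicator (fun _ => (1 : ℝ)) x *
      (rectSet c u l1 l2).indicator (fun _ => (1 : ℝ)) x) ?_
    (M := (|(rectCoord c u x).2| + |l2|) / q) (fun t ht => ?_)
  · rw [abs_mul]
    exact mul_le_one₀ (hbd _) (abs_nonneg _) (hbd _)
  · filter_upwards [(htend (p1 • u + q • perp u)).eventually hx,
      (htend (p2 • u + q • perp u)).eventually hx] with t h1 h2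
    rw [h1, h2]
  · refine mul_eq_zero_of_left (indicator_of_notMem (fun hmem => ?_) _) _
    rw [rectSet_eq_preimage hu, mem_preimage, rectCoord_sub_smul hu] at hmem
    have h0 := hmem.2.1
    have h1 := hmem.2.2
    rw [div_lt_iff₀ hq] at ht
    simp only at h0 h1
    have := le_abs_self (rectCoord c u x).2
    have := neg_abs_le (rectCoord c u x).2
    have := le_abs_self l2
    have := abs_nonneg l2
    rcases abs_cases t with ⟨h, -⟩ | ⟨h, -⟩ <;> rw [h] at ht <;> linarith

/-- Lower bound for the principal value at a point at height `s` above the rectangle. -/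
theorem le_of_SPV_rectSet {c u : V2} (hu : dot2 u u = 1) {ε k p1 p2 q : ℝ} (hε : 0 < ε)
    (hε1 : ε < 1 / 2) (hk : 0 < k) (hk1 : k ≤ 1) (hp1 : 8 * k * |p1| ≤ q)
    (hp2 : 8 * k * |p2| ≤ q) (hq : 0 < q) {x : V2} {s L : ℝ}
    (hx1 : (rectCoord c u x).1 ∈ Icc (1 / 4 : ℝ) (3 / 4))
    (hx2 : (rectCoord c u x).2 = ε + s) (hs : s ∈ Ioc 0 k)
    (hL : SPV (p1 • u + q • perp u) (p2 • u + q • perp u)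
      ((rectSet c u 1 ε).indicator fun _ => (1 : ℝ))
      ((rectSet c u 1 ε).indicator fun _ => (1 : ℝ)) x L) :
    k * ε / (s + k * ε) ≤ L := by
  have hR := (isClosed_rectSet (c := c) hu 1 ε).measurableSet
  have hs0 : 0 < s := hs.1
  have hkε : 0 < k * ε := mul_pos hk hε
  have hα : 0 < s / q := div_pos hs0 hq
  have hβ : 0 < (s + k * ε) / q := by positivity
  have h01 : ∀ y, 0 ≤ (rectSet c u 1 ε).indicator (fun _ => (1 : ℝ)) y ∧
      (rectSet c u 1 ε).indicator (fun _ => (1 : ℝ)) y ≤ 1 := fun y => by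
    by_cases h : y ∈ rectSet c u 1 ε <;> simp [h]
  have hmem : ∀ p : ℝ, 8 * k * |p| ≤ q → ∀ t ∈ Icc (s / q) ((s + k * ε) / q),
      x - t • (p • u + q • perp u) ∈ rectSet c u 1 ε := by
    intro p hp t ht
    rw [rectSet_eq_preimage hu, mem_preimage, rectCoord_sub_smul hu, hx2]
    have ht1 := (div_le_iff₀ hq).1 ht.1
    have ht2 := (le_div_iff₀ hq).1 ht.2
    have ht0 : 0 < t := hα.trans_le ht.1
    have hkε' : k * ε ≤ ε := by nlinarith
    have hkε2 : k * ε ≤ k := by nlinarith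
    have htp : |t * p| ≤ 1 / 4 := by
      rw [abs_mul, abs_of_pos ht0]
      have h1 : t * (8 * k * |p|) ≤ 2 * k :=
        (mul_le_mul_of_nonneg_left hp ht0.le).trans (by linarith [hs.2])
      have h2 : k * (4 * (t * |p|)) ≤ k * 1 := by linarith
      linarith [le_of_mul_le_mul_left h2 hk]
    obtain ⟨h1, h2⟩ := abs_le.1 htp
    exact ⟨⟨by linarith [hx1.1], by linarith [hx1.2]⟩, by linarith, by linarith⟩
  refine ge_of_tendsto hL ?_
  filter_upwards [Ioo_mem_nhdsGT (lt_min hα (inv_pos.2 hβ))] with δ hδ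
  have hδβ : (s + k * ε) / q < δ⁻¹ :=
    (lt_inv_comm₀ hδ.1 hβ).1 (hδ.2.trans_le (min_le_right _ _))
  have hquot : k * ε / (s + k * ε) = ((s + k * ε) / q - s / q) / ((s + k * ε) / q) := by
    rw [← sub_div, div_div_div_cancel_right₀ hq.ne', add_sub_cancel_left]
  rw [hquot]
  refine le_integral_truncation
    ((measurable_indicator_line hR x (p1 • u + q • perp u)).mul
      (measurable_indicator_line hR x (p2 • u + q • perp u)))
    (fun t => mul_nonneg (h01 _).1 (h01 _).1)
    (fun t => mul_le_one₀ (h01 _).2 (h01 _).1 (h01 _).2) (fun t ht => ?_) hα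
    (div_le_div_of_nonneg_right (by linarith : s ≤ s + k * ε) hq.le) (fun t ht => ?_)
    hδ.1 (hδ.2.trans_le (min_le_left _ _)) hδβ
  · refine mul_eq_zero_of_left (indicator_of_notMem (fun h => ?_) _) _
    rw [rectSet_eq_preimage hu, mem_preimage, rectCoord_sub_smul hu, hx2] at h
    have h2 := h.2.2
    simp only at h2
    nlinarith
  · rw [Pi.mul_apply, indicator_of_mem (hmem p1 hp1 t ht),
      indicator_of_mem (hmem p2 hp2 t ht), one_mul]

theorem ofReal_log_le_lintegral {ε k : ℝ} (hε : 0 < ε) (hk : 0 < k) :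
    ENNReal.ofReal (k / 2 * ε * Real.log (1 / ε)) ≤
      ∫⁻ p in Icc (1 / 4 : ℝ) (3 / 4) ×ˢ Ioc ε (ε + k),
        ENNReal.ofReal (k * ε / (p.2 - ε + k * ε)) := by
  have hkε : 0 < k * ε := mul_pos hk hε
  have hint : ∫ b in ε..(ε + k), k * ε / (b - ε + k * ε) =
      k * ε * Real.log ((k + k * ε) / (k * ε)) := by
    simp only [div_eq_mul_inv (k * ε)]
    rw [intervalIntegral.integral_const_mul]
    have h := intervalIntegral.integral_comp_add_right (a := ε) (b := ε + k)
      (fun y : ℝ => y⁻¹) (-ε + k * ε)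
    have e : ∀ b : ℝ, b - ε + k * ε = b + (-ε + k * ε) := fun b => by ring
    simp only [e]
    rw [h, integral_inv_of_pos (by linarith) (by linarith)]
    congr 3 <;> ring
  have hcont : ContinuousOn (fun b : ℝ => k * ε / (b - ε + k * ε)) (Icc ε (ε + k)) :=
    ContinuousOn.div (by fun_prop) (by fun_prop) fun b hb => by linarith [hb.1]
  have hlin : ∫⁻ b in Ioc ε (ε + k), ENNReal.ofReal (k * ε / (b - ε + k * ε)) =
      ENNReal.ofReal (k * ε * Real.log ((k + k * ε) / (k * ε))) := by
    rw [← hint, intervalIntegral.integral_of_le (by linarith),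
      ofReal_integral_eq_lintegral_ofReal (hcont.integrableOn_Icc.mono_set Ioc_subset_Icc_self)]
    filter_upwards [ae_restrict_mem measurableSet_Ioc] with b hb
    exact div_nonneg hkε.le (by linarith [hb.1])
  have hprod := lintegral_prod_mul (μ := volume.restrict (Icc (1 / 4 : ℝ) (3 / 4)))
    (ν := volume.restrict (Ioc ε (ε + k))) (f := fun _ => 1)
    (g := fun b => ENNReal.ofReal (k * ε / (b - ε + k * ε))) aemeasurable_const
    (by fun_prop)
  simp only [one_mul, Measure.prod_restrict, hlin, lintegral_const, Measure.restrict_apply_univ,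
    Real.volume_Icc] at hprod
  rw [Measure.volume_eq_prod, hprod, ← ENNReal.ofReal_mul (by norm_num)]
  refine ENNReal.ofReal_le_ofReal ?_
  have hlog : Real.log (1 / ε) ≤ Real.log ((k + k * ε) / (k * ε)) := by
    refine Real.log_le_log (by positivity) ?_
    rw [div_le_div_iff₀ hε hkε]
    nlinarith [mul_pos hkε hε]
  nlinarith [mul_le_mul_of_nonneg_left hlog hkε.le]

theorem exists_SPV_rectSet_log_le_lintegral {c u : V2} (hu : dot2 u u = 1) {ε k p1 p2 q : ℝ}
    (hε : 0 < ε) (hε1 : ε < 1 / 2) (hk : 0 < k) (hk1 : k ≤ 1) (hp1 : 8 * k * |p1| ≤ q)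
    (hp2 : 8 * k * |p2| ≤ q) (hq : 0 < q) :
    ∃ g : V2 → ℝ,
      (∀ᵐ x : V2, SPV (p1 • u + q • perp u) (p2 • u + q • perp u)
        ((rectSet c u 1 ε).indicator fun _ => (1 : ℝ))
        ((rectSet c u 1 ε).indicator fun _ => (1 : ℝ)) x (g x)) ∧
      ENNReal.ofReal (k / 2 * ε * Real.log (1 / ε)) ≤ ∫⁻ x : V2, ENNReal.ofReal |g x| := by
  obtain ⟨g, hg⟩ := (ae_exists_SPV_rectSet (c := c) hu 1 ε p1 p2 hq).choice
  refine ⟨g, hg, (ofReal_log_le_lintegral hε hk).trans ?_⟩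
  have hms : MeasurableSet (Icc (1 / 4 : ℝ) (3 / 4) ×ˢ Ioc ε (ε + k)) :=
    measurableSet_Icc.prod measurableSet_Ioc
  rw [← lintegral_indicator hms, ← (measurePreserving_rectCoord c hu).lintegral_comp
    (Measurable.indicator (by fun_prop) hms)]
  refine lintegral_mono_ae ?_
  filter_upwards [hg] with x hx
  by_cases hp : rectCoord c u x ∈ Icc (1 / 4 : ℝ) (3 / 4) ×ˢ Ioc ε (ε + k)
  · rw [indicator_of_mem hp]
    have hs : (rectCoord c u x).2 - ε ∈ Ioc 0 k :=
      ⟨sub_pos.2 hp.2.1, by linarith [hp.2.2]⟩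
    exact ENNReal.ofReal_le_ofReal ((le_of_SPV_rectSet hu hε hε1 hk hk1 hp1 hp2 hq hp.1
      (by ring) hs hx).trans (le_abs_self _))
  · rw [indicator_of_notMem hp]
    exact zero_le

theorem exists_frame_coefficients (w1 w2 : V2) (hli : LinearIndependent ℝ ![w1, w2]) :
    ∃ k : ℝ, 0 < k ∧ k ≤ 1 ∧ ∀ u : V2, dot2 u u = 1 → (∃ lam : ℝ, w1 - w2 = lam • u) →
      ∃ p1 p2 q : ℝ, w1 = p1 • u + q • perp u ∧ w2 = p2 • u + q • perp u ∧
        8 * k * |p1| ≤ |q| ∧ 8 * k * |p2| ≤ |q| ∧ 0 < |q| := by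
  set D := |w1.1 * w2.2 - w1.2 * w2.1| with hD
  have hD0 : 0 < D := by
    rw [hD, abs_pos]
    intro h
    rw [LinearIndependent.pair_iff] at hli
    have h1 := hli w2.2 (-w1.2) (by ext <;> simp <;> linarith)
    have h2 := hli w2.1 (-w1.1) (by ext <;> simp <;> linarith)
    have h3 := hli 1 0 (by ext <;> simp <;> linarith)
    exact one_ne_zero h3.1
  have hw1 : 0 ≤ dot2 w1 w1 := add_nonneg (mul_self_nonneg _) (mul_self_nonneg _)
  have hw2 : 0 ≤ dot2 w2 w2 := add_nonneg (mul_self_nonneg _) (mul_self_nonneg _)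
  have hw12 : 0 ≤ dot2 (w1 - w2) (w1 - w2) :=
    add_nonneg (mul_self_nonneg _) (mul_self_nonneg _)
  set P := 1 + dot2 w1 w1 + dot2 w2 w2 with hP
  set N := 1 + dot2 (w1 - w2) (w1 - w2) with hN
  have hP0 : 0 < P := by positivity
  have hN0 : 0 < N := by positivity
  refine ⟨min 1 (D / (8 * N * P)), by positivity, min_le_left _ _, fun u hu ⟨lam, hlam⟩ => ?_⟩
  have hu' : u.1 * u.1 + u.2 * u.2 = 1 := hu
  have hl1 : w1.1 - w2.1 = lam * u.1 := by simpa using congrArg Prod.fst hlam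
  have hl2 : w1.2 - w2.2 = lam * u.2 := by simpa using congrArg Prod.snd hlam
  obtain ⟨p1, hp1⟩ : ∃ p, p = dot2 w1 u := ⟨_, rfl⟩
  obtain ⟨p2, hp2⟩ : ∃ p, p = dot2 w2 u := ⟨_, rfl⟩
  obtain ⟨q, hq⟩ : ∃ q, q = dot2 w1 (perp u) := ⟨_, rfl⟩
  simp only [dot2, perp] at hp1 hp2 hq
  have hdet : w1.1 * w2.2 - w1.2 * w2.1 = lam * q := by
    rw [hq]; linear_combination w1.2 * hl1 - w1.1 * hl2
  have hlamN : |lam| ≤ N := by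
    have : N = 1 + lam ^ 2 := by
      simp only [hN, dot2, Prod.fst_sub, Prod.snd_sub, hl1, hl2]
      linear_combination lam ^ 2 * hu'
    rw [this]
    nlinarith [sq_nonneg (|lam| - 1), sq_abs lam, abs_nonneg lam]
  have hDq : D ≤ N * |q| := by
    rw [hD, hdet, abs_mul]
    exact mul_le_mul_of_nonneg_right hlamN (abs_nonneg q)
  have hq0 : 0 < |q| := pos_of_mul_pos_right (hD0.trans_le hDq) hN0.le
  have hbound : ∀ p : ℝ, |p| ≤ P → 8 * min 1 (D / (8 * N * P)) * |p| ≤ |q| := by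
    intro p hp
    calc 8 * min 1 (D / (8 * N * P)) * |p| ≤ 8 * (D / (8 * N * P)) * P := by
          gcongr
          exact min_le_right _ _
      _ = D / N := by field_simp
      _ ≤ |q| := by rwa [div_le_iff₀' hN0]
  have hcs : ∀ w : V2, |w.1 * u.1 + w.2 * u.2| ≤ 1 + dot2 w w := fun w => by
    rw [dot2, abs_le]
    constructor <;> nlinarith [sq_nonneg (w.1 - u.1), sq_nonneg (w.2 - u.2),
      sq_nonneg (w.1 + u.1), sq_nonneg (w.2 + u.2), sq_nonneg w.1, sq_nonneg w.2]
  refine ⟨p1, p2, q, ?_, ?_, hbound p1 ?_, hbound p2 ?_, hq0⟩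
  · ext <;> simp [perp, hp1, hq]
    · linear_combination (-w1.1) * hu'
    · linear_combination (-w1.2) * hu'
  · ext <;> simp [perp, hp2, hq]
    · linear_combination (-w2.1) * hu' - u.2 * u.2 * hl1 + u.1 * u.2 * hl2
    · linear_combination (-w2.2) * hu' + u.1 * u.2 * hl1 - u.1 * u.1 * hl2
  · rw [hp1]; linarith [hcs w1]
  · rw [hp2]; linarith [hcs w2]

/-- **Logarithmic lower bound.**  For linearly independent `w₁,w₂` there is
`c > 0` such that for every `ε ∈ (0,1/2)` and every `1 × ε` rectangle `R` with long
side parallel to `w₁ − w₂`, the principal value `S_{(w₁,w₂)}(χ_R,χ_R)(x)` exists for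
a.e. `x` and `∫ |S_{(w₁,w₂)}(χ_R,χ_R)| ≥ c ε log(1/ε)`. -/
theorem log_lower_bound (w1 w2 : V2) (hli : LinearIndependent ℝ ![w1, w2]) :
    ∃ c : ℝ, 0 < c ∧
      ∀ ε : ℝ, 0 < ε → ε < 1 / 2 →
        ∀ cc uu : V2, dot2 uu uu = 1 → (∃ lam : ℝ, w1 - w2 = lam • uu) →
          ∃ g : V2 → ℝ,
            (∀ᵐ x : V2,
              SPV w1 w2 (Set.indicator (rectSet cc uu 1 ε) fun _ => (1 : ℝ))
                (Set.indicator (rectSet cc uu 1 ε) fun _ => (1 : ℝ)) x (g x)) ∧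
            ENNReal.ofReal (c * ε * Real.log (1 / ε)) ≤
              ∫⁻ x : V2, ENNReal.ofReal (|g x|) := by
  obtain ⟨k, hk, hk1, hframe⟩ := exists_frame_coefficients w1 w2 hli
  refine ⟨k / 2, half_pos hk, fun ε hε hε1 c u hu hlam => ?_⟩
  obtain ⟨p1, p2, q, rfl, rfl, hp1, hp2, hq⟩ := hframe u hu hlam
  rcases lt_or_gt_of_ne (abs_pos.1 hq) with hneg | hpos
  · rw [abs_of_neg hneg] at hp1 hp2
    have hrefl (p : ℝ) : p • u + q • perp u = (-p) • (-u) + (-q) • perp (-u) := by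
      ext <;> simp [perp]
    rw [hrefl p1, hrefl p2, ← rectSet_neg c u 1 ε]
    exact exists_SPV_rectSet_log_le_lintegral (by simpa [dot2] using hu) hε hε1 hk hk1
      (by rwa [abs_neg]) (by rwa [abs_neg]) (neg_pos.2 hneg)
  · rw [abs_of_pos hpos] at hp1 hp2
    exact exists_SPV_rectSet_log_le_lintegral hu hε hε1 hk hk1 hp1 hp2 hpos
end
end
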